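/- For the family C_m of lifted extended quadratic residue codes of length 24 modulo 3^m, let A_{2,2} := 3^{−24}·swe_{C_4}(x_0, x_1, z−y_1, z+2y_1−3y_0, z+2y_1+6y_0) ∈ ℚ[x_0,x_1,y_0,y_1,z]. Then the sum of those monomials of A_{2,2} that are divisible by x_0·y_0 equals D_{2,2} = −473616·x_0^9·x_1^3·y_0^9·y_1^3. -/

import Mathlib

/-!
The lifted code `C₄` is, up to a permutation of the coordinates and unit scalings, one fixed
self-dual code over `ℤ/81`. Indeed `x^23 - 1` is separable modulo 3, so by uniqueness of Hensel
lifts `g₄` is one of the two explicit polynomials `L1`, `L2`; reversing the cyclic coordinates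
exchanges the two, and multiplying the parity coordinate by 13 turns the extended code into the
code `InC` with generator matrix `[I | P]`. Neither operation changes valuations (`swe_eq`).

The linear forms substituted for `x_2, x_3, z` are Fourier transforms on `9ℤ/81 ≃ ℤ/9`: the
value at `9t` is the sum over `s : ℤ/9` of `χ(s t)` times `y_0`, `y_1` or `z`
according to the valuation of `s`. Poisson summation over the code (`poisson`) therefore writes
`A_{2,2}` as a sum over pairs `(a, b)` of codewords modulo 9 with disjoint supports, in which
`a` is recorded by the `x_i`, `b` by the `y_i`, and the coefficient is `χ(phi c b)` for a codeword
`c` modulo 81 lifting `a`. Averaging over the unit multiples of `b` replaces this root of unity by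
the rational number `ww (phi c b) / 2`. The monomials divisible by `x_0 y_0` come from the pairs in
which both words have a unit entry (`divPart_eval`).

So one has to sum `E c b` over the pairs of codewords that are nonzero modulo 3 (`core`). Their
ternary weights are 9 or at least 12 (`weights`). Two words of ternary weight at least 12 with
disjoint supports have complementary ternary supports; their sum and difference are then full weight
words, and a check over all pairs of full weight words of the ternary code excludes this
(`not_dis`).
Exchanging the two words only negates `phi` (`E_swap`), so it remains to treat words `a` of ternary
weight 9. There are 2024 possible supports, forming eight free orbits under the affine group
`w ↦ 2^k w + s` of order 253, which acts on the code. For each of the eight representatives the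
sum over all pairs, up to unit multiples of `a` and `b`, is evaluated in the kernel (`reps_total`):
it is `-13` times the monomial `(9, 3, 9, 3)`. This gives `-13 · 36 · 2024 = -947232` (`core_nine`),
half of which is the asserted coefficient.

The computations run on words packed into single natural numbers, so that the kernel can use its
built-in arithmetic.
-/

open MvPolynomial
open scoped Classical

noncomputable section

/-- The symmetrized weight enumerator of a code `C ⊆ (ℤ/Nℤ)^n` (for `N = p^m`):
the variable `X i` for `i < m` records the number of coordinates of `p`-adic valuation `i`,
and the last variable `X m` (the variable `z`) records the number of zero coordinates. -/
def swe (p m : ℕ) {N n : ℕ} [NeZero N]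
    (C : Submodule (ZMod N) (Fin n → ZMod N)) : MvPolynomial (Fin (m + 1)) ℚ :=
  ∑ c : Fin n → ZMod N, if c ∈ C then
      (∏ i : Fin m, (X (Fin.castSucc i) : MvPolynomial (Fin (m + 1)) ℚ) ^
          (Finset.univ.filter fun j => c j ≠ 0 ∧ padicValNat p (c j).val = (i : ℕ)).card)
        * (X (Fin.last m) : MvPolynomial (Fin (m + 1)) ℚ) ^
            (Finset.univ.filter fun j => c j = 0).card
    else 0

/-- `g` is a monic irreducible degree-11 factor of `x^23 - 1` over `ℤ/pℤ`. -/
def IsQRFactor (p : ℕ) (g : Polynomial (ZMod p)) : Prop :=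
  g.Monic ∧ g.natDegree = 11 ∧ Irreducible g ∧ g ∣ (Polynomial.X ^ 23 - 1)

/-- `gm` is the (Hensel) lift of `g` to `ℤ/Nℤ` and `C` is the associated lifted extended
cyclic quadratic residue code of length 24: the extension by an overall parity check of the
cyclic code of length 23 generated by `gm`. -/
def IsLiftedQR {p N : ℕ} (hpN : p ∣ N) (g : Polynomial (ZMod p)) (gm : Polynomial (ZMod N))
    (C : Submodule (ZMod N) (Fin 24 → ZMod N)) : Prop :=
  gm.Monic ∧ gm.natDegree = 11 ∧ gm ∣ (Polynomial.X ^ 23 - 1) ∧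
    gm.map (ZMod.castHom hpN (ZMod p)) = g ∧
    ∀ c : Fin 24 → ZMod N, c ∈ C ↔
      ((∃ f : Polynomial (ZMod N), ∀ j : Fin 23,
          c (Fin.castSucc j) = ((f * gm) %ₘ (Polynomial.X ^ 23 - 1)).coeff (j : ℕ)) ∧
        c (Fin.last 23) = - ∑ j : Fin 23, c (Fin.castSucc j))

/-- The sum of those monomials of `A` that are divisible by `X i * X j`. -/
def divPart {σ : Type*} (A : MvPolynomial σ ℚ) (i j : σ) : MvPolynomial σ ℚ :=
  ∑ d ∈ A.support.filter (fun d => d i ≠ 0 ∧ d j ≠ 0), monomial d (A.coeff d)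

namespace QR24

/-! ### The self-dual code over `ℤ/81` -/

/-- The systematic generator matrix `[I | P]` of the self-dual code, with entries modulo 81. -/
def genRows : List (List ℕ) :=
  [[1, 0, 0, 0, 0, 0, 0, 0, 0, 0, 0, 0, 80, 12, 15, 4, 72, 58, 54, 65, 77, 10, 13, 1],
   [0, 1, 0, 0, 0, 0, 0, 0, 0, 0, 0, 0, 13, 5, 60, 44, 40, 47, 4, 19, 36, 28, 3, 69],
   [0, 0, 1, 0, 0, 0, 0, 0, 0, 0, 0, 0, 3, 58, 41, 48, 71, 28, 47, 52, 31, 6, 70, 66],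
   [0, 0, 0, 1, 0, 0, 0, 0, 0, 0, 0, 0, 70, 54, 61, 4, 30, 61, 55, 33, 8, 60, 68, 77],
   [0, 0, 0, 0, 1, 0, 0, 0, 0, 0, 0, 0, 68, 64, 6, 32, 49, 55, 34, 9, 62, 57, 67, 9],
   [0, 0, 0, 0, 0, 1, 0, 0, 0, 0, 0, 0, 67, 74, 31, 62, 68, 51, 1, 53, 34, 40, 77, 23],
   [0, 0, 0, 0, 0, 0, 1, 0, 0, 0, 0, 0, 77, 34, 53, 47, 26, 57, 24, 18, 37, 74, 11, 27],
   [0, 0, 0, 0, 0, 0, 0, 1, 0, 0, 0, 0, 11, 26, 31, 9, 65, 36, 30, 38, 62, 8, 12, 16],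
   [0, 0, 0, 0, 0, 0, 0, 0, 1, 0, 0, 0, 12, 29, 8, 64, 36, 17, 36, 60, 5, 23, 14, 4],
   [0, 0, 0, 0, 0, 0, 0, 0, 0, 1, 0, 0, 14, 6, 62, 33, 28, 34, 71, 17, 35, 27, 3, 71],
   [0, 0, 0, 0, 0, 0, 0, 0, 0, 0, 1, 0, 3, 59, 42, 50, 60, 16, 34, 38, 29, 5, 69, 68],
   [0, 0, 0, 0, 0, 0, 0, 0, 0, 0, 0, 1, 69, 66, 77, 9, 23, 27, 16, 4, 71, 68, 80, 80]]

/-- Entry `(i, j)` of a matrix given by its list of rows. -/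
def entry (rows : List (List ℕ)) (i j : ℕ) : ℕ := (rows.getD i []).getD j 0

/-- The generator matrix as a function. -/
def mat (i : Fin 12) (j : Fin 24) : ℕ := entry genRows i j

/-- The `i`-th of the first twelve coordinates. -/
def fst12 (i : Fin 12) : Fin 24 := Fin.castLE (by norm_num) i

/-- Membership in the self-dual code over `R` (used for `R = ℤ/81` and `R = ℤ/9`), phrased as
orthogonality to the rows of the generator matrix. -/
def InC {R : Type} [CommRing R] (b : Fin 24 → R) : Prop :=
  ∀ i, ∑ j, (mat i j : R) * b j = 0

/-- The codeword with information symbols `x`. -/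
def comb {R : Type} [CommRing R] (x : Fin 12 → R) (k : Fin 24) : R := ∑ i, x i * (mat i k : R)

lemma cast_congr {R : Type} [CommRing R] {n : ℕ} (h : (n : R) = 0) {a b : ℕ}
    (hab : a % n = b % n) : (a : R) = b := by
  rw [← Nat.div_add_mod a n, ← Nat.div_add_mod b n, hab]
  push_cast
  rw [h]; ring

lemma mat_orth : ∀ i i' : Fin 12, (∑ j, mat i j * mat i' j) % 81 = 0 % 81 := by decide +kernel

lemma mat_fst : ∀ i k : Fin 12, mat i (fst12 k) = if i = k then 1 else 0 := by decide +kernel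

/-- The columns of the generator matrix satisfy `Σ_i M_ik M_ij = M_jk` for `j < 12 ≤ k` and
`-δ_jk` for `j, k ≥ 12`; together with the identity block this is self-duality. -/
lemma mat_col : ∀ k j : Fin 24, (∑ i, mat i k * mat i j +
      (if 12 ≤ k.val ∧ j = k then 1 else 0)) % 81 =
    (if h : j.val < 12 then mat ⟨j.val, h⟩ k else
      if h : k.val < 12 then mat ⟨k.val, h⟩ j else 0) % 81 := by decide +kernel

section ring
variable {R : Type} [CommRing R]

lemma inC_add {a b : Fin 24 → R} (ha : InC a) (hb : InC b) : InC (fun j => a j + b j) := by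
  intro i; simp only [mul_add, Finset.sum_add_distrib, ha i, hb i, add_zero]

lemma inC_smul {a : Fin 24 → R} (r : R) (ha : InC a) : InC (fun j => r * a j) := by
  intro i
  have : ∀ j, (mat i j : R) * (r * a j) = r * ((mat i j : R) * a j) := fun j => by ring
  simp only [this, ← Finset.mul_sum, ha i, mul_zero]

lemma inC_sum {ι : Type} (s : Finset ι) {a : ι → Fin 24 → R} (ha : ∀ i ∈ s, InC (a i)) :
    InC (fun j => ∑ i ∈ s, a i j) := by
  intro i
  simp only [Finset.mul_sum]
  rw [Finset.sum_comm]
  exact Finset.sum_eq_zero fun k hk => ha k hk i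

lemma inC_mat (h : (81 : R) = 0) (t : Fin 12) : InC (fun j => (mat t j : R)) := by
  intro i
  have := cast_congr (R := R) (n := 81) (by exact_mod_cast h) (mat_orth i t)
  push_cast at this
  exact this

lemma inC_comb (h : (81 : R) = 0) (x : Fin 12 → R) : InC (comb x) :=
  inC_sum _ fun i _ => inC_smul (x i) (inC_mat h i)

lemma comb_fst (x : Fin 12 → R) (k : Fin 12) : comb x (fst12 k) = x k := by
  simp [comb, mat_fst]

lemma eq_comb (h : (81 : R) = 0) {b : Fin 24 → R} (hb : InC b) :
    b = comb (fun i => b (fst12 i)) := by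
  funext k
  by_cases hk : k.val < 12
  · have : k = fst12 ⟨k.val, hk⟩ := rfl
    rw [this, comb_fst]
  · have h0 : ∑ j, (∑ i, (mat i k : R) * mat i j) * b j = 0 := by
      simp only [Finset.sum_mul]
      rw [Finset.sum_comm]
      refine Finset.sum_eq_zero fun i _ => ?_
      have := hb i
      calc _ = (mat i k : R) * ∑ j, (mat i j : R) * b j := by
            rw [Finset.mul_sum]; exact Finset.sum_congr rfl fun j _ => by ring
        _ = 0 := by rw [this, mul_zero]
    have h1 : ∀ j, (∑ i, (mat i k : R) * mat i j) =
        (if h : j.val < 12 then (mat ⟨j.val, h⟩ k : R) else 0) - (if j = k then 1 else 0) := by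
      intro j
      have := cast_congr (R := R) (n := 81) (by exact_mod_cast h) (mat_col k j)
      rw [dif_neg hk] at this
      simp only [not_lt] at hk
      simp only [hk, true_and] at this
      rw [eq_sub_iff_add_eq]
      push_cast at this
      rw [this]
      split_ifs <;> simp
    simp only [h1, sub_mul, Finset.sum_sub_distrib] at h0
    have h2 : ∑ j : Fin 24, (if j = k then (1 : R) else 0) * b j = b k := by simp
    rw [h2, sub_eq_zero] at h0
    rw [← h0, comb]
    have : (24 : ℕ) = 12 + 12 := rfl
    rw [show (∑ x : Fin 24, (if h : x.val < 12 then (mat ⟨x.val, h⟩ k : R) else 0) * b x) =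
      ∑ x : Fin (12 + 12), (if h : x.val < 12 then (mat ⟨x.val, h⟩ k : R) else 0) * b x from rfl,
      Fin.sum_univ_add]
    simp only [Fin.val_castAdd, Fin.is_lt, Fin.val_natAdd]
    simp
    exact Finset.sum_congr rfl fun i _ => by rw [mul_comm]; rfl

lemma dot_zero (h : (81 : R) = 0) {a b : Fin 24 → R} (ha : InC a) (hb : InC b) :
    ∑ j, a j * b j = 0 := by
  rw [eq_comb h ha]
  simp only [comb, Finset.sum_mul]
  rw [Finset.sum_comm]
  refine Finset.sum_eq_zero fun i _ => ?_
  have := hb i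
  simp only [mul_assoc, ← Finset.mul_sum, this, mul_zero]

end ring

/-! ### The contribution of a pair of words -/

/-- Reduction modulo 9. -/
def red : ZMod 81 →+* ZMod 9 := ZMod.castHom (by norm_num) _

/-- The upper digit of an element of `ℤ/81` to base 9. -/
def qd (x : ZMod 81) : ZMod 9 := ((x.val / 9 : ℕ) : ZMod 9)

/-- Being a unit of `ℤ/9`. -/
def isU (x : ZMod 9) : Bool := x.val % 3 != 0

/-- Number of coordinates of valuation 0. -/
def n0 (b : Fin 24 → ZMod 9) : ℕ := (Finset.univ.filter fun j => isU (b j)).card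

/-- Number of coordinates of valuation 1. -/
def n1 (b : Fin 24 → ZMod 9) : ℕ := (Finset.univ.filter fun j => b j ≠ 0 ∧ ¬ isU (b j)).card

/-- Disjointness of supports. -/
def dis (a b : Fin 24 → ZMod 9) : Prop := ∀ j, a j = 0 ∨ b j = 0

/-- The exponent of the character attached to a word `c` modulo 81 and a word `b` modulo 9. -/
def phi (c : Fin 24 → ZMod 81) (b : Fin 24 → ZMod 9) : ZMod 9 := ∑ j, b j * qd (c j)

/-- The sum of `ζ^t` over the primitive 9th roots of unity `ζ`, divided by 3. -/
def ww (t : ZMod 9) : ℤ := if t = 0 then 2 else if isU t then 0 else -1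

/-- Reduction modulo 9 of a word. -/
def redV (c : Fin 24 → ZMod 81) : Fin 24 → ZMod 9 := fun j => red (c j)

section E
variable {N : Type} [AddCommGroup N] (m : ℕ → ℕ → ℕ → ℕ → N)

/-- The contribution of the pair `(c, b)`: the weight `ww (phi c b)` times the term `m` recording
the numbers of coordinates of valuation 0 and 1, provided that `c mod 9` and `b` have disjoint
supports. -/
def E (c : Fin 24 → ZMod 81) (b : Fin 24 → ZMod 9) : N :=
  if dis (redV c) b then
    ww (phi c b) • m (n0 (redV c)) (n1 (redV c)) (n0 b) (n1 b) else 0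

end E

/-- The injection `ℤ/9 → ℤ/81` given by multiplication by 9. -/
def n9 : ZMod 9 →+ ZMod 81 where
  toFun t := 9 * (t.val : ZMod 81)
  map_zero' := by decide +kernel
  map_add' := by decide +kernel

lemma n9_inj : ∀ t : ZMod 9, n9 t = 0 → t = 0 := by decide +kernel

lemma n9_natMul (a : ℕ) (t : ZMod 9) : n9 (a * t) = a * n9 t := by
  rw [← nsmul_eq_mul, ← nsmul_eq_mul, map_nsmul]

lemma mul_eq_n9 : ∀ x y : ZMod 81, red x = 0 ∨ red y = 0 →
    x * y = n9 (red y * qd x + red x * qd y) := by decide +kernel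

lemma sub_eq_n9 : ∀ x : ZMod 81, red x = 0 → x = n9 (qd x) := by decide +kernel

lemma qd_add_n9 : ∀ (x : ZMod 81) (t : ZMod 9), qd (x + n9 t) = qd x + t := by decide +kernel

lemma qd_mul : ∀ l x : ZMod 81, red x = 0 → qd (l * x) = red l * qd x := by decide +kernel

lemma red_n9 : ∀ t : ZMod 9, red (n9 t) = 0 := by decide +kernel

lemma isU_mul : ∀ l x : ZMod 9, isU l → isU (l * x) = isU x := by decide +kernel

lemma U_mul_eq_zero : ∀ l x : ZMod 9, isU l → (l * x = 0 ↔ x = 0) := by decide +kernel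

lemma ww_mul : ∀ l x : ZMod 9, isU l → ww (l * x) = ww x := by decide +kernel

lemma ww_neg : ∀ x : ZMod 9, ww (-x) = ww x := by decide +kernel

lemma h81_81 : (81 : ZMod 81) = 0 := by decide +kernel
lemma h81_9 : (81 : ZMod 9) = 0 := by decide +kernel

lemma inC_redV {c : Fin 24 → ZMod 81} (h : InC c) : InC (redV c) := by
  intro i
  have := congrArg red (h i)
  simpa [redV] using this

lemma n0_smul (l : ZMod 9) (hl : isU l) (b : Fin 24 → ZMod 9) : n0 (fun j => l * b j) = n0 b := by
  simp only [n0, isU_mul l _ hl]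

lemma n1_smul (l : ZMod 9) (hl : isU l) (b : Fin 24 → ZMod 9) : n1 (fun j => l * b j) = n1 b := by
  simp only [n1, isU_mul l _ hl, ne_eq, U_mul_eq_zero l _ hl]

lemma n0_perm (σ : Equiv.Perm (Fin 24)) (b : Fin 24 → ZMod 9) : n0 (fun j => b (σ j)) = n0 b := by
  unfold n0
  exact Finset.card_bij (fun j _ => σ j) (by simp) (by simp)
    (fun j hj => ⟨σ.symm j, by simpa using hj, by simp⟩)

lemma n1_perm (σ : Equiv.Perm (Fin 24)) (b : Fin 24 → ZMod 9) : n1 (fun j => b (σ j)) = n1 b := by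
  unfold n1
  exact Finset.card_bij (fun j _ => σ j) (by simp) (by simp)
    (fun j hj => ⟨σ.symm j, by simpa using hj, by simp⟩)

section E
variable {N : Type} [AddCommGroup N] (m : ℕ → ℕ → ℕ → ℕ → N)

/-- `E` depends on `c` only through its residue modulo 9. -/
lemma E_congr {c c' : Fin 24 → ZMod 81} {b : Fin 24 → ZMod 9} (hc : InC c) (hc' : InC c')
    (hb : InC b) (h : redV c = redV c') : E m c b = E m c' b := by
  have hd : ∀ j, c' j - c j = n9 (qd (c' j - c j)) := by
    intro j
    apply sub_eq_n9
    have := congrFun h j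
    simp only [redV] at this
    rw [map_sub, this, sub_self]
  have hD : InC (fun j => qd (c' j - c j)) := by
    intro i
    apply n9_inj
    rw [map_sum]
    simp only [n9_natMul]
    simp only [← hd, mul_sub, Finset.sum_sub_distrib]
    rw [hc i, hc' i, sub_zero]
  have hphi : phi c' b = phi c b := by
    have h0 := dot_zero h81_9 hb hD
    have : ∀ j, qd (c' j) = qd (c j) + qd (c' j - c j) := by
      intro j
      rw [← qd_add_n9, ← hd]
      congr 1; ring
    unfold phi
    simp only [this, mul_add, Finset.sum_add_distrib]
    rw [h0, add_zero]
  unfold E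
  rw [hphi, h]

lemma E_smul_left (l : ZMod 81) (hl : isU (red l)) (c : Fin 24 → ZMod 81) (b : Fin 24 → ZMod 9) :
    E m (fun j => l * c j) b = E m c b := by
  have hr : redV (fun j => l * c j) = fun j => red l * redV c j := by
    funext j; simp [redV]
  have hdis : dis (redV (fun j => l * c j)) b ↔ dis (redV c) b := by
    rw [hr]; unfold dis; simp only [U_mul_eq_zero _ _ hl]
  unfold E
  by_cases hd : dis (redV c) b
  · rw [if_pos (hdis.2 hd), if_pos hd, hr, n0_smul _ hl, n1_smul _ hl]
    have : phi (fun j => l * c j) b = red l * phi c b := by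
      unfold phi
      rw [Finset.mul_sum]
      refine Finset.sum_congr rfl fun j _ => ?_
      rcases hd j with h | h
      · rw [qd_mul _ _ h]; ring
      · rw [h]; ring
    rw [this, ww_mul _ _ hl]
  · rw [if_neg (mt hdis.1 hd), if_neg hd]

lemma E_smul_right (l : ZMod 9) (hl : isU l) (c : Fin 24 → ZMod 81) (b : Fin 24 → ZMod 9) :
    E m c (fun j => l * b j) = E m c b := by
  have hdis : dis (redV c) (fun j => l * b j) ↔ dis (redV c) b := by
    unfold dis; simp only [U_mul_eq_zero _ _ hl]
  have : phi c (fun j => l * b j) = l * phi c b := by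
    unfold phi
    rw [Finset.mul_sum]
    exact Finset.sum_congr rfl fun j _ => by ring
  unfold E
  simp only [hdis, n0_smul _ hl, n1_smul _ hl, this, ww_mul _ _ hl]

lemma E_perm (σ : Equiv.Perm (Fin 24)) (c : Fin 24 → ZMod 81) (b : Fin 24 → ZMod 9) :
    E m (fun j => c (σ j)) (fun j => b (σ j)) = E m c b := by
  have hr : redV (fun j => c (σ j)) = fun j => redV c (σ j) := rfl
  have hdis : dis (redV (fun j => c (σ j))) (fun j => b (σ j)) ↔ dis (redV c) b := by
    unfold dis
    exact ⟨fun h j => by simpa [redV] using h (σ.symm j), fun h j => h (σ j)⟩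
  have : phi (fun j => c (σ j)) (fun j => b (σ j)) = phi c b :=
    Equiv.sum_comp σ (fun j => b j * qd (c j))
  unfold E
  rw [this, hr, n0_perm, n1_perm, n0_perm, n1_perm]
  exact if_congr hdis rfl rfl

/-- Exchanging the roles of the two words only changes the sign of the exponent `phi`, because
the integer lifts of the two words are orthogonal modulo 81. -/
lemma E_swap {c d : Fin 24 → ZMod 81} (hc : InC c) (hd : InC d) :
    E m c (redV d) = E (fun p q r s => m r s p q) d (redV c) := by
  unfold E
  by_cases h : dis (redV c) (redV d)
  · have h' : dis (redV d) (redV c) := fun j => (h j).symm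
    rw [if_pos h, if_pos h']
    have h0 : phi c (redV d) + phi d (redV c) = 0 := by
      apply n9_inj
      have := dot_zero h81_81 hc hd
      unfold phi
      rw [← Finset.sum_add_distrib, map_sum, ← this]
      exact Finset.sum_congr rfl fun j _ => (mul_eq_n9 _ _ (h j)).symm
    rw [eq_neg_of_add_eq_zero_left h0, ww_neg]
  · have h' : ¬ dis (redV d) (redV c) := fun h' => h fun j => (h' j).symm
    rw [if_neg h, if_neg h']

end E

/-! ### Packed words and enumeration -/

/-- Words with entries below `2^16` are packed into one natural number, 16 bits per coordinate. -/
def pk {n : ℕ} (f : Fin n → ℕ) : ℕ := ∑ j, f j * 65536 ^ (j : ℕ)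

/-- Packing of a list. -/
def packL : List ℕ → ℕ
  | [] => 0
  | x :: xs => Nat.add x (Nat.mul 65536 (packL xs))

/-- The `j`-th coordinate of a packed word. -/
def ent (c j : ℕ) : ℕ := Nat.mod (Nat.shiftRight c (Nat.mul 16 j)) 65536

lemma pk_succ {n : ℕ} (f : Fin (n + 1) → ℕ) :
    pk f = f 0 + 65536 * pk (fun i => f i.succ) := by
  unfold pk
  rw [Fin.sum_univ_succ, Finset.mul_sum]
  simp only [Fin.val_zero, pow_zero, mul_one, Fin.val_succ]
  congr 1
  exact Finset.sum_congr rfl fun i _ => by ring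

lemma packL_eq : ∀ (n : ℕ) (l : List ℕ), l.length = n → packL l = pk (fun j : Fin n => l.getD j 0)
  | 0, [], _ => by simp [packL, pk]
  | n + 1, x :: xs, h => by
    rw [pk_succ]
    have := packL_eq n xs (by simpa using h)
    show x + 65536 * packL xs = _
    rw [this]; simp

lemma ent_eq (c j : ℕ) : ent c j = c / 65536 ^ j % 65536 := by
  show (c >>> (16 * j)) % 65536 = _
  rw [Nat.shiftRight_eq_div_pow, pow_mul]
  norm_num

lemma ent_pk : ∀ {n : ℕ} (f : Fin n → ℕ), (∀ j, f j < 65536) → ∀ j : Fin n, ent (pk f) j = f j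
  | 0, _, _, j => j.elim0
  | n + 1, f, h, j => by
    have h0 := h 0
    rw [ent_eq, pk_succ]
    refine Fin.cases ?_ (fun j => ?_) j
    · simp only [Fin.val_zero, pow_zero, Nat.div_one]; omega
    · have := ent_pk (fun i => f i.succ) (fun i => h i.succ) j
      rw [ent_eq] at this
      rw [Fin.val_succ, pow_succ', ← Nat.div_div_eq_div_mul,
        show (f 0 + 65536 * pk fun i => f i.succ) / 65536 = pk fun i => f i.succ by omega, this]

lemma pk_add {n : ℕ} (f g : Fin n → ℕ) : pk (fun j => f j + g j) = pk f + pk g := by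
  simp only [pk, add_mul, Finset.sum_add_distrib]

lemma pk_mul {n : ℕ} (a : ℕ) (f : Fin n → ℕ) : pk (fun j => a * f j) = a * pk f := by
  simp only [pk, mul_assoc, Finset.mul_sum]

lemma pk_sum {n : ℕ} {ι : Type} (s : Finset ι) (f : ι → Fin n → ℕ) :
    pk (fun j => ∑ i ∈ s, f i j) = ∑ i ∈ s, pk (f i) := by
  simp only [pk, Finset.sum_mul]
  rw [Finset.sum_comm]

/-- Disjointness modulo 9 of two packed words on a list of coordinates. -/
def ok (c b : ℕ) : List ℕ → Bool
  | [] => true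
  | j :: js => bif Nat.beq (Nat.mod (ent c j) 9) 0 then ok c b js else
      bif Nat.beq (Nat.mod (ent b j) 9) 0 then ok c b js else false

/-- The exponent `phi` of two packed words, over the first coordinates. -/
def dotq (c b : ℕ) : ℕ → ℕ
  | 0 => 0
  | j + 1 => Nat.add (Nat.mul (ent b j) (Nat.div (ent c j) 9)) (dotq c b j)

/-- Number of entries not divisible by `n` among the first coordinates. -/
def cnt (n c : ℕ) : ℕ → ℕ
  | 0 => 0
  | j + 1 => Nat.add (bif Nat.beq (Nat.mod (ent c j) n) 0 then 0 else 1) (cnt n c j)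

/-- `ww` on natural numbers. -/
def wwN (t : ℕ) : ℤ :=
  bif Nat.beq (Nat.mod t 9) 0 then 2 else bif Nat.beq (Nat.mod t 3) 0 then -1 else 0

/-- The contribution of a pair of packed words. The first component collects the pairs of type
`(9, 2, 9, 2)`, the second those of type `(9, 3, 9, 3)`, and the third counts the other pairs
which have a nonzero weight. -/
def leafA (c b : ℕ) : ℤ × ℤ × ℕ := bif ok c b (List.range 24) then
    (bif Nat.beq (cnt 9 c 24) 11 && Nat.beq (cnt 9 b 24) 11 && Nat.beq (cnt 3 b 24) 9
      then (wwN (dotq c b 24), 0, 0) else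
    bif Nat.beq (cnt 9 c 24) 12 && Nat.beq (cnt 9 b 24) 12 && Nat.beq (cnt 3 b 24) 9
      then (0, wwN (dotq c b 24), 0) else
    bif Nat.beq (Nat.mod (dotq c b 24) 3) 0 then (0, 0, 1) else 0)
  else 0

/-- Sum of `leafA` over the words `c + 3 Σ d_i r_i` with `d_i ∈ {0, 1, 2}`; the digit `d_i` is
forced to be `0` when `b` is nonzero at the `i`-th information position. -/
def sumA (syn : List ℕ) (b : ℕ) : List (ℕ × ℕ) → ℕ → (ℤ × ℤ × ℕ) → ℤ × ℤ × ℕ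
  | [], c, s => bif ok c b syn then leafA c b + s else s
  | (j, r) :: t, c, s => bif Nat.beq (Nat.mod (ent b j) 9) 0 then
     sumA syn b t c (sumA syn b t (Nat.add c (Nat.mul 3 r))
       (sumA syn b t (Nat.add c (Nat.mul 6 r)) s))
     else sumA syn b t c s

/-- The sum over `c` for a given `b`, provided that `b` vanishes at the coordinate `w`. -/
def leafB (w : ℕ) (syn : List ℕ) (r0 : ℕ) (rA : List (ℕ × ℕ)) (b : ℕ) (s : ℤ × ℤ × ℕ) :
    ℤ × ℤ × ℕ :=
  bif Nat.beq (Nat.mod (ent b w) 9) 0 then sumA syn b rA r0 s else s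

/-- Accumulates `f` over all combinations of the given rows with coefficients `0, …, 8`. -/
def sumB (f : ℕ → ℤ × ℤ × ℕ → ℤ × ℤ × ℕ) : List ℕ → ℕ → ℤ × ℤ × ℕ → ℤ × ℤ × ℕ
  | [], b, s => f b s
  | r :: t, b, s => sumB f t b <| sumB f t (Nat.add b r) <| sumB f t (Nat.add b (Nat.mul 2 r)) <|
     sumB f t (Nat.add b (Nat.mul 3 r)) <| sumB f t (Nat.add b (Nat.mul 4 r)) <|
     sumB f t (Nat.add b (Nat.mul 5 r)) <| sumB f t (Nat.add b (Nat.mul 6 r)) <|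
     sumB f t (Nat.add b (Nat.mul 7 r)) <| sumB f t (Nat.add b (Nat.mul 8 r)) s

/-- As `sumB`, restricted to coefficient vectors whose first unit entry is `1`. -/
def sumN (f : ℕ → ℤ × ℤ × ℕ → ℤ × ℤ × ℕ) : List ℕ → ℕ → ℤ × ℤ × ℕ → ℤ × ℤ × ℕ
  | [], _, s => s
  | r :: t, b, s => sumN f t b <| sumN f t (Nat.add b (Nat.mul 3 r)) <|
      sumN f t (Nat.add b (Nat.mul 6 r)) <| sumB f t (Nat.add b r) s

lemma beq_mod (x n : ℕ) : Nat.beq (Nat.mod x n) 0 = decide (x % n = 0) := by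
  rw [Bool.eq_iff_iff, Nat.beq_eq, decide_eq_true_iff]; rfl

lemma sum_zmod9 {N : Type} [AddCommMonoid N] (g : ZMod 9 → N) : ∑ a, g a =
    g 0 + g 1 + g 2 + g 3 + g 4 + g 5 + g 6 + g 7 + g 8 :=
  (Fin.sum_univ_castSucc (n := 8) g).trans (by rw [Fin.sum_univ_eight]; rfl)

lemma sum_cons {α N : Type} [Fintype α] [AddCommMonoid N] {n : ℕ} (f : (Fin (n + 1) → α) → N) :
    ∑ x, f x = ∑ a, ∑ x : Fin n → α, f (Fin.cons a x) := by
  rw [← (Fin.consEquiv (fun _ => α)).sum_comp, Fintype.sum_prod_type]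
  rfl

/-- The first unit entry of `v` exists and equals `1`. -/
def lead : ∀ {n : ℕ}, (Fin n → ZMod 9) → Bool
  | 0, _ => false
  | _ + 1, v => if isU (v 0) then v 0 = 1 else lead (fun i => v i.succ)

lemma sumA_eq (syn : List ℕ) (b : ℕ) : ∀ (n : ℕ) (J r : Fin n → ℕ) (c : ℕ) (s : ℤ × ℤ × ℕ),
    sumA syn b (List.ofFn fun i => (J i, r i)) c s =
      (∑ d : Fin n → Fin 3, if (∀ i, d i ≠ 0 → ent b (J i) % 9 = 0) ∧
        ok (c + 3 * ∑ i, (d i : ℕ) * r i) b syn = true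
        then leafA (c + 3 * ∑ i, (d i : ℕ) * r i) b else 0) + s
  | 0, J, r, c, s => by
    simp only [List.ofFn_zero, sumA, Finset.univ_unique, Finset.sum_singleton, Finset.univ_eq_empty,
      Finset.sum_empty, mul_zero, add_zero, IsEmpty.forall_iff, true_and]
    cases ok c b syn <;> simp
  | n + 1, J, r, c, s => by
    have ih := sumA_eq syn b n (fun i => J i.succ) (fun i => r i.succ)
    rw [List.ofFn_succ, sumA, sum_cons, Fin.sum_univ_three]
    simp only [Fin.forall_fin_succ, Fin.cons_zero, Fin.cons_succ, Fin.sum_univ_succ, ih]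
    simp only [Nat.add_eq, Nat.mul_eq, beq_mod]
    by_cases h : ent b (J 0) % 9 = 0
    · have e1 : ∀ x : ℕ, c + 3 * r 0 + 3 * x = c + 3 * (1 * r 0 + x) := fun x => by ring
      have e2 : ∀ x : ℕ, c + 6 * r 0 + 3 * x = c + 3 * (2 * r 0 + x) := fun x => by ring
      simp [h, e1, e2, add_assoc]
    · simp [h]

lemma sumB_eq (f : ℕ → ℤ × ℤ × ℕ → ℤ × ℤ × ℕ) (F : ℕ → ℤ × ℤ × ℕ)
    (hf : ∀ b s, f b s = F b + s) : ∀ (n : ℕ) (r : Fin n → ℕ) (b : ℕ) (s : ℤ × ℤ × ℕ),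
    sumB f (List.ofFn r) b s = (∑ v : Fin n → ZMod 9, F (b + ∑ i, (v i).val * r i)) + s
  | 0, r, b, s => by simp [sumB, hf]
  | n + 1, r, b, s => by
    have ih := sumB_eq f F hf n (fun i => r i.succ)
    rw [List.ofFn_succ, sumB, sum_cons, sum_zmod9]
    simp only [Fin.cons_zero, Fin.cons_succ, Fin.sum_univ_succ, ih]
    simp only [Nat.add_eq, Nat.mul_eq]
    have v : (0 : ZMod 9).val = 0 ∧ (1 : ZMod 9).val = 1 ∧ (2 : ZMod 9).val = 2 ∧
      (3 : ZMod 9).val = 3 ∧ (4 : ZMod 9).val = 4 ∧ (5 : ZMod 9).val = 5 ∧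
      (6 : ZMod 9).val = 6 ∧ (7 : ZMod 9).val = 7 ∧ (8 : ZMod 9).val = 8 := by decide
    obtain ⟨v0, v1, v2, v3, v4, v5, v6, v7, v8⟩ := v
    simp only [v0, v1, v2, v3, v4, v5, v6, v7, v8, zero_mul, zero_add, one_mul, add_assoc]

lemma sumN_eq (f : ℕ → ℤ × ℤ × ℕ → ℤ × ℤ × ℕ) (F : ℕ → ℤ × ℤ × ℕ)
    (hf : ∀ b s, f b s = F b + s) : ∀ (n : ℕ) (r : Fin n → ℕ) (b : ℕ) (s : ℤ × ℤ × ℕ),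
    sumN f (List.ofFn r) b s =
      (∑ v : Fin n → ZMod 9, if lead v then F (b + ∑ i, (v i).val * r i) else 0) + s
  | 0, r, b, s => by simp [sumN, lead]
  | n + 1, r, b, s => by
    have ih := sumN_eq f F hf n (fun i => r i.succ)
    rw [List.ofFn_succ, sumN, sum_cons, sum_zmod9]
    simp only [Fin.cons_zero, Fin.cons_succ, Fin.sum_univ_succ, ih, sumB_eq f F hf, lead]
    simp only [Nat.add_eq, Nat.mul_eq]
    have v : (0 : ZMod 9).val = 0 ∧ (1 : ZMod 9).val = 1 ∧ 
      (3 : ZMod 9).val = 3 ∧ (6 : ZMod 9).val = 6 := by decide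
    have u : isU 0 = false ∧ isU 1 = true ∧ isU 2 = true ∧ isU 3 = false ∧ isU 4 = true ∧
      isU 5 = true ∧ isU 6 = false ∧ isU 7 = true ∧ isU 8 = true := by decide +kernel
    have w : (2 : ZMod 9) ≠ 1 ∧ (4 : ZMod 9) ≠ 1 ∧ (5 : ZMod 9) ≠ 1 ∧ (7 : ZMod 9) ≠ 1 ∧
      (8 : ZMod 9) ≠ 1 := by decide +kernel
    obtain ⟨v0, v1, v3, v6⟩ := v
    obtain ⟨u0, u1, u2, u3, u4, u5, u6, u7, u8⟩ := u
    obtain ⟨w2, w4, w5, w7, w8⟩ := w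
    simp only [u0, u1, u2, u3, u4, u5, u6, u7, u8, w2, w4, w5, w7, w8, v0, v1, v3, v6,
      Bool.false_eq_true, if_true, if_false, decide_true, decide_false, Finset.sum_const_zero,
      zero_mul, zero_add, one_mul, add_zero]
    abel_nf

/-! ### Soundness of the enumeration -/

lemma cast9_eq_zero (k : ℕ) : ((k : ZMod 9) = 0) ↔ k % 9 = 0 := by
  rw [ZMod.natCast_eq_zero_iff, Nat.dvd_iff_mod_eq_zero]

lemma isU_cast (k : ℕ) : isU (k : ZMod 9) = decide (k % 3 ≠ 0) := by
  unfold isU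
  rw [ZMod.val_natCast, Nat.mod_mod_of_dvd _ (by norm_num)]
  rw [Bool.eq_iff_iff]; simp

lemma ww_cast (t : ℕ) : ww (t : ZMod 9) = wwN t := by
  unfold ww wwN
  rw [beq_mod, beq_mod]
  simp only [cast9_eq_zero, isU_cast]
  by_cases h : t % 9 = 0 <;> by_cases h' : t % 3 = 0 <;> simp [h, h']

lemma qd_cast (k : ℕ) : qd (k : ZMod 81) = ((k / 9 : ℕ) : ZMod 9) := by
  unfold qd
  rw [ZMod.val_natCast, show (81 : ℕ) = 9 * 9 from rfl, Nat.mod_mul_right_div_self]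
  exact ZMod.natCast_mod _ 9

/-- A natural word modulo 81. -/
def c81 (f : Fin 24 → ℕ) : Fin 24 → ZMod 81 := fun j => (f j : ZMod 81)
/-- A natural word modulo 9. -/
def c9 (f : Fin 24 → ℕ) : Fin 24 → ZMod 9 := fun j => (f j : ZMod 9)

lemma redV_c81 (f : Fin 24 → ℕ) : redV (c81 f) = c9 f := by
  funext j; simp [redV, c81, c9]

lemma ok_iff (c b : ℕ) : ∀ js : List ℕ,
    ok c b js = true ↔ ∀ j ∈ js, ent c j % 9 = 0 ∨ ent b j % 9 = 0
  | [] => by simp [ok]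
  | j :: js => by
    rw [ok, beq_mod, beq_mod]
    have := ok_iff c b js
    by_cases h : ent c j % 9 = 0 <;> by_cases h' : ent b j % 9 = 0 <;> simp [h, h', this]

lemma dotq_eq (c b : ℕ) : ∀ n, dotq c b n = ∑ j ∈ Finset.range n, ent b j * (ent c j / 9)
  | 0 => rfl
  | n + 1 => by
    rw [Finset.sum_range_succ, ← dotq_eq c b n]; exact Nat.add_comm _ _

lemma cnt_eq (n c : ℕ) : ∀ k, cnt n c k =
    ∑ j ∈ Finset.range k, if ent c j % n = 0 then 0 else 1
  | 0 => rfl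
  | k + 1 => by
    rw [Finset.sum_range_succ, ← cnt_eq n c k, cnt, beq_mod, Nat.add_eq, Nat.add_comm]
    by_cases h : ent c k % n = 0 <;> simp [h]


lemma cnt3_pk {f : Fin 24 → ℕ} (hf : ∀ j, f j < 65536) :
    cnt 3 (pk f) 24 = n0 (c9 f) := by
  rw [cnt_eq, Finset.sum_range, n0, Finset.card_filter]
  refine Finset.sum_congr rfl fun j _ => ?_
  rw [ent_pk f hf, c9, isU_cast]
  by_cases h : f j % 3 = 0 <;> simp [h]

lemma cnt9_pk {f : Fin 24 → ℕ} (hf : ∀ j, f j < 65536) :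
    cnt 9 (pk f) 24 = n0 (c9 f) + n1 (c9 f) := by
  rw [cnt_eq, Finset.sum_range, n0, n1, Finset.card_filter, Finset.card_filter,
    ← Finset.sum_add_distrib]
  refine Finset.sum_congr rfl fun j _ => ?_
  rw [ent_pk f hf]
  simp only [c9, isU_cast, ne_eq, cast9_eq_zero]
  by_cases h : f j % 9 = 0
  · have : f j % 3 = 0 := by omega
    simp [h, this]
  · by_cases h3 : f j % 3 = 0 <;> simp [h, h3]

lemma ok_pk {f g : Fin 24 → ℕ} (hf : ∀ j, f j < 65536) (hg : ∀ j, g j < 65536) :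
    ok (pk f) (pk g) (List.range 24) = true ↔ dis (c9 f) (c9 g) := by
  rw [ok_iff]
  unfold dis c9
  simp only [List.mem_range, cast9_eq_zero]
  constructor
  · intro h j
    have := h j j.2
    rwa [ent_pk f hf, ent_pk g hg] at this
  · intro h j hj
    have h1 := ent_pk f hf ⟨j, hj⟩
    have h2 := ent_pk g hg ⟨j, hj⟩
    simp only at h1 h2
    rw [h1, h2]
    exact h ⟨j, hj⟩

lemma dotq_pk {f g : Fin 24 → ℕ} (hf : ∀ j, f j < 65536) (hg : ∀ j, g j < 65536) :
    ((dotq (pk f) (pk g) 24 : ℕ) : ZMod 9) = phi (c81 f) (c9 g) := by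
  rw [dotq_eq, Finset.sum_range, phi]
  push_cast
  refine Finset.sum_congr rfl fun j _ => ?_
  rw [ent_pk f hf, ent_pk g hg, c81, c9, qd_cast]

/-- The value in `N` of an accumulated triple. -/
def Phi {N : Type} [AddCommGroup N] (m : ℕ → ℕ → ℕ → ℕ → N) : ℤ × ℤ × ℕ →+ N where
  toFun s := s.1 • m 9 2 9 2 + s.2.1 • m 9 3 9 3
  map_zero' := by simp
  map_add' s t := by simp only [Prod.fst_add, Prod.snd_add, add_smul]; abel

lemma E_leaf {N : Type} [AddCommGroup N] (m : ℕ → ℕ → ℕ → ℕ → N) {f g : Fin 24 → ℕ}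
    (hf : ∀ j, f j < 65536) (hg : ∀ j, g j < 65536) (h9 : n0 (c9 f) = 9)
    (hbad : (leafA (pk f) (pk g)).2.2 = 0) :
    E m (c81 f) (c9 g) = Phi m (leafA (pk f) (pk g)) := by
  unfold E
  rw [redV_c81]
  by_cases hd : dis (c9 f) (c9 g)
  · rw [if_pos hd, ← dotq_pk hf hg, ww_cast, h9]
    unfold leafA at hbad ⊢
    rw [(ok_pk hf hg).2 hd, cnt9_pk hf, cnt9_pk hg, cnt3_pk hg, h9, cond_true] at hbad ⊢
    by_cases h1 : (Nat.beq (9 + n1 (c9 f)) 11 && Nat.beq (n0 (c9 g) + n1 (c9 g)) 11 &&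
      Nat.beq (n0 (c9 g)) 9) = true
    · rw [h1] at hbad ⊢
      simp only [Bool.and_eq_true, Nat.beq_eq] at h1
      obtain ⟨⟨h1, h2⟩, h3⟩ := h1
      have e1 : n1 (c9 f) = 2 := by omega
      have e2 : n1 (c9 g) = 2 := by omega
      rw [e1, e2, h3]
      simp [Phi]
    · rw [Bool.not_eq_true] at h1
      rw [h1, cond_false] at hbad ⊢
      by_cases h1 : (Nat.beq (9 + n1 (c9 f)) 12 && Nat.beq (n0 (c9 g) + n1 (c9 g)) 12 &&
        Nat.beq (n0 (c9 g)) 9) = true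
      · rw [h1] at hbad ⊢
        simp only [Bool.and_eq_true, Nat.beq_eq] at h1
        obtain ⟨⟨h1, h2⟩, h3⟩ := h1
        have e1 : n1 (c9 f) = 3 := by omega
        have e2 : n1 (c9 g) = 3 := by omega
        rw [e1, e2, h3]
        simp [Phi]
      · rw [Bool.not_eq_true] at h1
        rw [h1, cond_false, beq_mod] at hbad ⊢
        by_cases h3 : dotq (pk f) (pk g) 24 % 3 = 0
        · simp [h3] at hbad
        · have : dotq (pk f) (pk g) 24 % 9 ≠ 0 := by omega
          unfold wwN
          rw [beq_mod, beq_mod]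
          simp [h3, this]
  · rw [if_neg hd]
    have : ok (pk f) (pk g) (List.range 24) = false := by
      rw [← Bool.not_eq_true, ok_pk hf hg]; exact hd
    unfold leafA
    rw [this]
    simp

/-- Multiplication of vectors over `ℤ/9` by a unit, as a permutation. -/
def mulE (n : ℕ) (l : ZMod 9) (hl : isU l) : (Fin n → ZMod 9) ≃ (Fin n → ZMod 9) where
  toFun v i := l * v i
  invFun v i := l ^ 5 * v i
  left_inv v := by
    have : ∀ l : ZMod 9, isU l → l ^ 5 * l = 1 := by decide +kernel
    funext i; dsimp only; rw [← mul_assoc, this l hl, one_mul]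
  right_inv v := by
    have : ∀ l : ZMod 9, isU l → l * l ^ 5 = 1 := by decide +kernel
    funext i; dsimp only; rw [← mul_assoc, this l hl, one_mul]

lemma lead_count : ∀ (n : ℕ) (v : Fin n → ZMod 9),
    (∑ l : ZMod 9, if isU l ∧ lead (fun i => l * v i) = true then 1 else 0 : ℕ) =
      if ∃ i, isU (v i) then 1 else 0
  | 0, v => by simp [lead]
  | n + 1, v => by
    have ih := lead_count n (fun i => v i.succ)
    have e : ∀ l : ZMod 9, (isU l ∧ lead (fun i => l * v i) = true) ↔
        (isU l ∧ (if isU (v 0) then (decide (l * v 0 = 1)) else lead (fun i => l * v i.succ)) = true)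
        := by
      intro l
      refine and_congr_right fun hl => ?_
      rw [lead, isU_mul l _ hl]
    simp only [e, Fin.exists_fin_succ]
    by_cases h : isU (v 0)
    · have : ∀ x : ZMod 9, isU x →
        (∑ l : ZMod 9, if isU l ∧ l * x = 1 then 1 else 0 : ℕ) = 1 := by decide +kernel
      simpa [h] using this _ h
    · simpa [h] using ih

/-- A scaling invariant function may be summed over normalised vectors only. -/
lemma sum_lead {N : Type} [AddCommGroup N] {n : ℕ} (f : (Fin n → ZMod 9) → N)
    (hf : ∀ l, isU l → ∀ v, f (fun i => l * v i) = f v) :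
    ∑ v, (if ∃ i, isU (v i) then f v else 0) = 6 • ∑ v, if lead v then f v else 0 := by
  have h1 : ∀ v : Fin n → ZMod 9, (if ∃ i, isU (v i) then f v else 0) =
      ∑ l : ZMod 9, if isU l ∧ lead (fun i => l * v i) = true then f v else 0 := by
    intro v
    have := congrArg (fun k : ℕ => k • f v) (lead_count n v)
    simp only [Finset.sum_smul, ite_smul, one_smul, zero_smul] at this
    exact this.symm
  simp only [h1]
  rw [Finset.sum_comm]
  have h2 : ∀ l : ZMod 9, (∑ v : Fin n → ZMod 9,
      if isU l ∧ lead (fun i => l * v i) = true then f v else 0) =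
      (if isU l then 1 else 0 : ℕ) • ∑ v, if lead v then f v else 0 := by
    intro l
    by_cases hl : isU l
    · simp only [hl, true_and, if_true, one_smul]
      rw [← (mulE n l hl).sum_comp (fun v => if lead v = true then f v else 0)]
      refine Finset.sum_congr rfl fun v _ => ?_
      show _ = if lead (fun i => l * v i) = true then f (fun i => l * v i) else 0
      rw [hf l hl]
    · simp [hl]
  simp only [h2, ← Finset.sum_smul]
  congr 1

/-- Vectors of non-units are the vectors `3 d` with digits `d`. -/
lemma sum_nonunit {N : Type} [AddCommGroup N] : ∀ (n : ℕ) (f : (Fin n → ZMod 9) → N),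
    ∑ v, (if ∀ i, isU (v i) = false then f v else 0) =
      ∑ d : Fin n → Fin 3, f (fun i => 3 * ((d i : ℕ) : ZMod 9))
  | 0, f => by
    simp only [IsEmpty.forall_iff, if_true, Finset.univ_unique, Finset.sum_singleton]
    congr 1; funext i; exact i.elim0
  | n + 1, f => by
    rw [sum_cons, sum_cons]
    have u : isU 0 = false ∧ isU 1 = true ∧ isU 2 = true ∧ isU 3 = false ∧ isU 4 = true ∧
      isU 5 = true ∧ isU 6 = false ∧ isU 7 = true ∧ isU 8 = true := by decide +kernel
    obtain ⟨u0, u1, u2, u3, u4, u5, u6, u7, u8⟩ := u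
    rw [sum_zmod9, Fin.sum_univ_three]
    simp only [Fin.forall_fin_succ, Fin.cons_zero, Fin.cons_succ, u0, u1, u2, u3, u4, u5, u6, u7,
      u8, true_and, Bool.true_eq_false, false_and, if_false, Finset.sum_const_zero, add_zero]
    rw [sum_nonunit n, sum_nonunit n, sum_nonunit n]
    refine congrArg₂ _ (congrArg₂ _ ?_ ?_) ?_ <;>
    · refine Finset.sum_congr rfl fun d _ => congrArg f ?_
      funext i
      refine Fin.cases ?_ (fun i => ?_) i
      · simp only [Fin.cons_zero]; decide +kernel
      · simp only [Fin.cons_succ]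

/-- The word with coordinates `x` in the basis `A`. -/
def lin {n : ℕ} (A : Fin n → Fin 24 → ℕ) (x : Fin n → ZMod 9) (k : Fin 24) : ZMod 9 :=
  ∑ i, x i * (A i k : ZMod 9)

/-- `A` is the basis of the code modulo 9 that is systematic at the information set `J`. -/
def Sys (J : Fin 12 → Fin 24) (A : Fin 12 → Fin 24 → ℕ) : Prop :=
  (∀ i t, (∑ j, mat t j * A i j) % 9 = 0 % 9) ∧
  (∀ i k, A i (J k) % 9 = (if i = k then 1 else 0) % 9) ∧
  (∀ t k, (∑ i, mat t (J i) * A i k) % 9 = mat t k % 9)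

instance (J A) : Decidable (Sys J A) := by unfold Sys; infer_instance

lemma h9_9 : ((9 : ℕ) : ZMod 9) = 0 := by decide

lemma lin_sys {J A} (h : Sys J A) (x : Fin 12 → ZMod 9) (k : Fin 12) : lin A x (J k) = x k := by
  unfold lin
  have : ∀ i, (A i (J k) : ZMod 9) = if i = k then 1 else 0 := by
    intro i
    rw [cast_congr h9_9 (h.2.1 i k)]; push_cast; rfl
  simp [this]

lemma inC_lin {J A} (h : Sys J A) (x : Fin 12 → ZMod 9) : InC (lin A x) := by
  refine inC_sum _ fun i _ => inC_smul (x i) ?_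
  intro t
  have := cast_congr (R := ZMod 9) h9_9 (h.1 i t)
  push_cast at this; exact this

lemma eq_lin {J A} (h : Sys J A) {a : Fin 24 → ZMod 9} (ha : InC a) :
    a = lin A (fun i => a (J i)) := by
  funext k
  have hc := eq_comb h81_9 ha
  have h3 : ∀ t, (mat t k : ZMod 9) = ∑ i, (mat t (J i) : ZMod 9) * A i k := by
    intro t
    rw [← cast_congr h9_9 (h.2.2 t k)]; push_cast; rfl
  unfold lin
  rw [congrFun hc k]
  have e : ∀ i, a (J i) = ∑ t, a (fst12 t) * (mat t (J i) : ZMod 9) := fun i => congrFun hc (J i)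
  simp only [e, comb, h3, Finset.mul_sum, Finset.sum_mul]
  rw [Finset.sum_comm]
  exact Finset.sum_congr rfl fun i _ => Finset.sum_congr rfl fun j _ => by ring

lemma sum_sys {N : Type} [AddCommGroup N] {J A} (h : Sys J A) (f : (Fin 24 → ZMod 9) → N) :
    ∑ a, (if InC a then f a else 0) = ∑ x, f (lin A x) := by
  rw [← Finset.sum_filter]
  refine Finset.sum_nbij' (fun a k => a (J k)) (fun x => lin A x) (by simp)
    (fun x _ => by simpa using inC_lin h x) (fun a ha => ?_) (fun x _ => ?_) (fun a ha => ?_)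
  · exact (eq_lin h (by simpa using ha)).symm
  · funext k; exact lin_sys h x k
  · rw [← eq_lin h (by simpa using ha)]

/-! ### Representatives of the supports of weight 9 -/

/-- Data attached to a weight 9 support `supp` of the ternary code: a basis `rowsA` (modulo 81)
systematic at `posA`, where only the first information position lies in `supp`, and a basis `rowsB`
(modulo 9) systematic at `posB`, where all but the first four information positions lie in `supp`.
The list `syn` holds the positions outside both `supp` and `posA`, and `last` is the position of
`supp` not in `posB`. -/
structure Rep where
  supp : List ℕ
  posA : List ℕ
  rowsA : List (List ℕ)
  posB : List ℕ
  rowsB : List (List ℕ)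
  syn : List ℕ
  last : ℕ

/-- Representatives of the eight orbits of weight 9 supports under the affine group of order 253. -/
def reps : List Rep := [
  { supp := [0, 1, 2, 3, 4, 6, 9, 20, 21]
    posA := [0, 5, 7, 8, 10, 11, 12, 13, 14, 15, 16, 17]
    rowsA := [[1, 5, 58, 47, 53, 0, 32, 0, 0, 32, 0, 0, 0, 0, 0, 0, 0, 0, 21, 6, 2, 13, 24, 66],
      [0, 13, 64, 33, 26, 1, 38, 0, 0, 13, 0, 0, 0, 0, 0, 0, 0, 0, 62, 24, 67, 42, 48, 67],
      [0, 54, 17, 77, 51, 0, 2, 1, 0, 77, 0, 0, 0, 0, 0, 0, 0, 0, 55, 56, 8, 36, 64, 6],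
      [0, 50, 23, 50, 23, 0, 8, 0, 1, 57, 0, 0, 0, 0, 0, 0, 0, 0, 16, 73, 74, 65, 8, 8],
      [0, 22, 64, 45, 17, 0, 68, 0, 0, 42, 1, 0, 0, 0, 0, 0, 0, 0, 24, 70, 24, 67, 49, 71],
      [0, 41, 24, 37, 33, 0, 59, 0, 0, 40, 0, 1, 0, 0, 0, 0, 0, 0, 54, 26, 35, 53, 8, 3],
      [0, 1, 58, 73, 7, 0, 26, 0, 0, 58, 0, 0, 1, 0, 0, 0, 0, 0, 61, 76, 12, 59, 74, 64],
      [0, 18, 17, 80, 56, 0, 12, 0, 0, 69, 0, 0, 0, 1, 0, 0, 0, 0, 50, 8, 46, 9, 2, 76],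
      [0, 12, 41, 40, 54, 0, 58, 0, 0, 3, 0, 0, 0, 0, 1, 0, 0, 0, 2, 77, 8, 65, 9, 50],
      [0, 24, 40, 39, 10, 0, 13, 0, 0, 7, 0, 0, 0, 0, 0, 1, 0, 0, 5, 54, 36, 32, 40, 56],
      [0, 29, 40, 78, 36, 0, 25, 0, 0, 49, 0, 0, 0, 0, 0, 0, 1, 0, 6, 8, 4, 22, 9, 59],
      [0, 56, 41, 50, 40, 0, 65, 0, 0, 40, 0, 0, 0, 0, 0, 0, 0, 1, 50, 9, 9, 24, 71, 66]]
    posB := [5, 7, 8, 10, 0, 1, 2, 3, 4, 6, 9, 20]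
    rowsB := [[0, 0, 0, 0, 0, 1, 0, 0, 0, 0, 0, 7, 1, 5, 3, 8, 4, 6, 5, 0, 0, 3, 7, 7],
      [0, 0, 0, 0, 0, 0, 0, 1, 0, 0, 0, 8, 5, 5, 8, 0, 6, 0, 5, 7, 0, 3, 4, 8],
      [0, 0, 0, 0, 0, 0, 0, 0, 1, 0, 0, 5, 6, 8, 6, 1, 7, 8, 8, 8, 0, 3, 0, 8],
      [0, 0, 0, 0, 0, 0, 0, 0, 0, 0, 1, 2, 6, 2, 7, 5, 7, 7, 3, 1, 0, 6, 4, 3],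
      [1, 0, 0, 0, 0, 0, 0, 0, 0, 0, 0, 5, 2, 0, 4, 4, 7, 4, 8, 4, 0, 8, 8, 5],
      [0, 1, 0, 0, 0, 0, 0, 0, 0, 0, 0, 0, 4, 5, 6, 8, 4, 2, 4, 1, 0, 1, 3, 6],
      [0, 0, 1, 0, 0, 0, 0, 0, 0, 0, 0, 4, 0, 7, 7, 3, 1, 1, 3, 5, 0, 8, 3, 8],
      [0, 0, 0, 1, 0, 0, 0, 0, 0, 0, 0, 8, 1, 6, 2, 4, 7, 7, 3, 2, 0, 1, 6, 6],
      [0, 0, 0, 0, 1, 0, 0, 0, 0, 0, 0, 8, 8, 7, 1, 5, 8, 1, 0, 5, 0, 7, 5, 1],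
      [0, 0, 0, 0, 0, 0, 1, 0, 0, 0, 0, 1, 2, 1, 4, 2, 4, 3, 4, 4, 0, 7, 1, 8],
      [0, 0, 0, 0, 0, 0, 0, 0, 0, 1, 0, 8, 8, 3, 3, 6, 5, 7, 1, 4, 0, 4, 4, 0],
      [0, 0, 0, 0, 0, 0, 0, 0, 0, 0, 0, 8, 3, 6, 4, 0, 4, 0, 2, 5, 1, 4, 1, 1]]
    syn := [18, 19, 22, 23]
    last := 21 },
  { supp := [0, 1, 2, 3, 4, 10, 14, 15, 23]
    posA := [0, 5, 6, 7, 8, 9, 11, 12, 13, 16, 17, 18]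
    rowsA := [[1, 58, 32, 58, 70, 0, 0, 0, 0, 0, 17, 0, 0, 0, 2, 43, 0, 0, 0, 27, 30, 66, 3, 55],
      [0, 23, 40, 24, 45, 1, 0, 0, 0, 0, 13, 0, 0, 0, 66, 77, 0, 0, 0, 49, 34, 53, 66, 16],
      [0, 11, 5, 24, 1, 0, 1, 0, 0, 0, 68, 0, 0, 0, 60, 6, 0, 0, 0, 65, 60, 62, 62, 64],
      [0, 45, 39, 35, 1, 0, 0, 1, 0, 0, 30, 0, 0, 0, 36, 25, 0, 0, 0, 41, 53, 2, 23, 71],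
      [0, 47, 19, 33, 23, 0, 0, 0, 1, 0, 48, 0, 0, 0, 79, 75, 0, 0, 0, 39, 22, 43, 77, 64],
      [0, 24, 20, 23, 67, 0, 0, 0, 0, 1, 30, 0, 0, 0, 41, 34, 0, 0, 0, 46, 4, 12, 40, 9],
      [0, 25, 63, 23, 75, 0, 0, 0, 0, 0, 26, 1, 0, 0, 58, 68, 0, 0, 0, 21, 7, 46, 69, 52],
      [0, 10, 52, 24, 39, 0, 0, 0, 0, 0, 54, 0, 1, 0, 56, 14, 0, 0, 0, 14, 73, 70, 58, 30],
      [0, 47, 65, 34, 60, 0, 0, 0, 0, 0, 35, 0, 0, 1, 74, 3, 0, 0, 0, 56, 47, 51, 73, 30],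
      [0, 24, 24, 22, 16, 0, 0, 0, 0, 0, 22, 0, 0, 0, 7, 20, 1, 0, 0, 8, 12, 80, 6, 13],
      [0, 36, 80, 47, 71, 0, 0, 0, 0, 0, 55, 0, 0, 0, 27, 23, 0, 1, 0, 52, 24, 44, 41, 48],
      [0, 56, 48, 59, 19, 0, 0, 0, 0, 0, 8, 0, 0, 0, 62, 18, 0, 0, 1, 69, 40, 39, 50, 59]]
    posB := [5, 6, 7, 9, 0, 1, 2, 3, 4, 10, 14, 15]
    rowsB := [[0, 0, 0, 0, 0, 1, 0, 0, 1, 0, 0, 3, 7, 4, 0, 0, 2, 5, 4, 8, 0, 6, 7, 6],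
      [0, 0, 0, 0, 0, 0, 1, 0, 7, 0, 0, 7, 5, 6, 0, 0, 7, 5, 1, 7, 2, 0, 3, 3],
      [0, 0, 0, 0, 0, 0, 0, 1, 0, 0, 0, 1, 8, 2, 0, 0, 7, 0, 1, 6, 7, 4, 2, 6],
      [0, 0, 0, 0, 0, 0, 0, 0, 3, 1, 0, 8, 8, 0, 0, 0, 5, 4, 1, 4, 6, 1, 1, 3],
      [1, 0, 0, 0, 0, 0, 0, 0, 5, 0, 0, 7, 2, 7, 0, 0, 8, 8, 4, 6, 5, 7, 4, 5],
      [0, 1, 0, 0, 0, 0, 0, 0, 1, 0, 0, 8, 1, 4, 0, 0, 8, 1, 6, 3, 6, 1, 0, 2],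
      [0, 0, 1, 0, 0, 0, 0, 0, 6, 0, 0, 2, 6, 4, 0, 0, 0, 4, 7, 6, 5, 1, 8, 7],
      [0, 0, 0, 1, 0, 0, 0, 0, 5, 0, 0, 5, 7, 7, 0, 0, 1, 2, 0, 2, 1, 2, 7, 2],
      [0, 0, 0, 0, 1, 0, 0, 0, 4, 0, 0, 5, 2, 6, 0, 0, 2, 6, 6, 8, 5, 3, 1, 2],
      [0, 0, 0, 0, 0, 0, 0, 0, 4, 0, 1, 5, 0, 1, 0, 0, 4, 3, 6, 1, 8, 5, 3, 7],
      [0, 0, 0, 0, 0, 0, 0, 0, 0, 0, 0, 2, 3, 6, 1, 0, 1, 0, 5, 8, 7, 1, 7, 7],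
      [0, 0, 0, 0, 0, 0, 0, 0, 1, 0, 0, 2, 6, 8, 0, 1, 1, 8, 5, 5, 3, 6, 3, 2]]
    syn := [19, 20, 21, 22]
    last := 23 },
  { supp := [0, 1, 2, 3, 4, 13, 15, 18, 19]
    posA := [0, 5, 6, 7, 8, 9, 10, 11, 12, 14, 16, 20]
    rowsA := [[1, 14, 34, 37, 59, 0, 0, 0, 0, 0, 0, 0, 0, 52, 0, 76, 0, 42, 79, 44, 0, 33, 75, 30],
      [0, 5, 3, 53, 47, 1, 0, 0, 0, 0, 0, 0, 0, 68, 0, 36, 0, 32, 58, 46, 0, 63, 8, 48],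
      [0, 5, 4, 56, 33, 0, 1, 0, 0, 0, 0, 0, 0, 0, 0, 38, 0, 46, 60, 36, 0, 52, 7, 61],
      [0, 51, 56, 79, 54, 0, 0, 1, 0, 0, 0, 0, 0, 73, 0, 19, 0, 45, 56, 46, 0, 32, 34, 30],
      [0, 40, 62, 66, 43, 0, 0, 0, 1, 0, 0, 0, 0, 16, 0, 41, 0, 61, 21, 48, 0, 69, 17, 13],
      [0, 79, 42, 61, 7, 0, 0, 0, 0, 1, 0, 0, 0, 18, 0, 80, 0, 38, 41, 27, 0, 70, 21, 13],
      [0, 54, 14, 8, 32, 0, 0, 0, 0, 0, 1, 0, 0, 57, 0, 23, 0, 10, 6, 76, 0, 17, 11, 33],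
      [0, 3, 39, 22, 61, 0, 0, 0, 0, 0, 0, 1, 0, 64, 0, 3, 0, 44, 42, 43, 0, 80, 59, 1],
      [0, 50, 50, 68, 60, 0, 0, 0, 0, 0, 0, 0, 1, 51, 0, 69, 0, 20, 68, 16, 0, 47, 63, 52],
      [0, 67, 48, 43, 23, 0, 0, 0, 0, 0, 0, 0, 0, 28, 1, 4, 0, 38, 1, 49, 0, 61, 7, 50],
      [0, 50, 49, 79, 63, 0, 0, 0, 0, 0, 0, 0, 0, 50, 0, 80, 1, 18, 80, 30, 0, 62, 51, 50],
      [0, 69, 5, 77, 5, 0, 0, 0, 0, 0, 0, 0, 0, 10, 0, 18, 0, 12, 56, 26, 1, 63, 53, 49]]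
    posB := [5, 6, 7, 9, 0, 1, 2, 3, 4, 13, 15, 18]
    rowsB := [[0, 0, 0, 0, 0, 1, 0, 0, 6, 0, 8, 6, 1, 0, 4, 0, 2, 2, 0, 3, 2, 5, 5, 0],
      [0, 0, 0, 0, 0, 0, 1, 0, 4, 0, 6, 6, 8, 0, 7, 0, 2, 5, 0, 6, 0, 1, 7, 4],
      [0, 0, 0, 0, 0, 0, 0, 1, 4, 0, 1, 5, 2, 0, 4, 0, 6, 3, 0, 3, 7, 4, 6, 5],
      [0, 0, 0, 0, 0, 0, 0, 0, 6, 1, 3, 1, 2, 0, 7, 0, 6, 4, 0, 0, 7, 5, 5, 1],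
      [1, 0, 0, 0, 0, 0, 0, 0, 7, 0, 5, 4, 5, 0, 4, 0, 5, 5, 0, 7, 1, 0, 2, 5],
      [0, 1, 0, 0, 0, 0, 0, 0, 3, 0, 5, 6, 1, 0, 0, 0, 1, 7, 0, 8, 1, 8, 6, 1],
      [0, 0, 1, 0, 0, 0, 0, 0, 2, 0, 8, 2, 0, 0, 7, 0, 3, 1, 0, 7, 1, 3, 0, 4],
      [0, 0, 0, 1, 0, 0, 0, 0, 4, 0, 2, 3, 7, 0, 3, 0, 3, 8, 0, 1, 2, 6, 7, 1],
      [0, 0, 0, 0, 1, 0, 0, 0, 7, 0, 3, 5, 2, 0, 6, 0, 2, 6, 0, 5, 8, 6, 7, 2],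
      [0, 0, 0, 0, 0, 0, 0, 0, 4, 0, 1, 8, 0, 1, 6, 0, 1, 3, 0, 4, 5, 2, 0, 4],
      [0, 0, 0, 0, 0, 0, 0, 0, 2, 0, 7, 2, 3, 0, 5, 1, 7, 2, 0, 7, 4, 1, 5, 5],
      [0, 0, 0, 0, 0, 0, 0, 0, 6, 0, 6, 7, 6, 0, 2, 0, 8, 0, 1, 4, 8, 5, 5, 2]]
    syn := [17, 21, 22, 23]
    last := 19 },
  { supp := [0, 1, 2, 3, 5, 6, 9, 15, 17]
    posA := [0, 4, 7, 8, 10, 11, 12, 13, 14, 16, 18, 21]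
    rowsA := [[1, 41, 32, 1, 0, 49, 61, 0, 0, 5, 0, 0, 0, 0, 0, 22, 0, 16, 0, 3, 9, 0, 18, 48],
      [0, 41, 53, 64, 1, 40, 69, 0, 0, 21, 0, 0, 0, 0, 0, 36, 0, 44, 0, 60, 79, 0, 4, 67],
      [0, 66, 35, 75, 0, 8, 58, 1, 0, 66, 0, 0, 0, 0, 0, 6, 0, 71, 0, 77, 22, 0, 59, 56],
      [0, 15, 5, 57, 0, 48, 59, 0, 1, 7, 0, 0, 0, 0, 0, 44, 0, 20, 0, 55, 32, 0, 65, 42],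
      [0, 13, 38, 47, 0, 19, 76, 0, 0, 63, 1, 0, 0, 0, 0, 67, 0, 13, 0, 49, 19, 0, 28, 41],
      [0, 73, 43, 21, 0, 54, 21, 0, 0, 64, 0, 1, 0, 0, 0, 71, 0, 1, 0, 62, 62, 0, 3, 49],
      [0, 49, 48, 9, 0, 4, 44, 0, 0, 20, 0, 0, 1, 0, 0, 20, 0, 55, 0, 46, 37, 0, 30, 60],
      [0, 74, 52, 71, 0, 44, 28, 0, 0, 80, 0, 0, 0, 1, 0, 3, 0, 30, 0, 38, 51, 0, 71, 69],
      [0, 62, 66, 68, 0, 52, 12, 0, 0, 14, 0, 0, 0, 0, 1, 50, 0, 5, 0, 20, 72, 0, 0, 22],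
      [0, 60, 24, 43, 0, 6, 54, 0, 0, 58, 0, 0, 0, 0, 0, 40, 1, 50, 0, 8, 28, 0, 20, 7],
      [0, 39, 51, 68, 0, 31, 7, 0, 0, 74, 0, 0, 0, 0, 0, 57, 0, 79, 1, 78, 61, 0, 62, 34],
      [0, 35, 40, 44, 0, 51, 79, 0, 0, 15, 0, 0, 0, 0, 0, 71, 0, 22, 0, 72, 15, 1, 46, 16]]
    posB := [4, 7, 8, 11, 0, 1, 2, 3, 5, 6, 9, 15]
    rowsB := [[0, 0, 0, 0, 1, 0, 0, 0, 0, 0, 8, 0, 2, 5, 0, 0, 7, 3, 0, 7, 6, 7, 7, 4],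
      [0, 0, 0, 0, 0, 0, 0, 1, 0, 0, 0, 0, 2, 8, 4, 0, 2, 0, 3, 2, 8, 8, 3, 7],
      [0, 0, 0, 0, 0, 0, 0, 0, 1, 0, 7, 0, 6, 1, 5, 0, 6, 3, 4, 2, 1, 4, 2, 3],
      [0, 0, 0, 0, 0, 0, 0, 0, 0, 0, 0, 1, 6, 3, 5, 0, 5, 0, 7, 4, 8, 5, 8, 8],
      [1, 0, 0, 0, 0, 0, 0, 0, 0, 0, 1, 0, 2, 8, 3, 0, 6, 2, 7, 4, 7, 6, 1, 6],
      [0, 1, 0, 0, 0, 0, 0, 0, 0, 0, 2, 0, 1, 6, 0, 0, 7, 7, 0, 5, 4, 2, 6, 7],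
      [0, 0, 1, 0, 0, 0, 0, 0, 0, 0, 3, 0, 3, 1, 5, 0, 8, 4, 5, 4, 1, 3, 7, 0],
      [0, 0, 0, 1, 0, 0, 0, 0, 0, 0, 1, 0, 1, 5, 4, 0, 0, 5, 8, 8, 1, 2, 2, 1],
      [0, 0, 0, 0, 0, 1, 0, 0, 0, 0, 2, 0, 1, 3, 7, 0, 8, 2, 6, 3, 2, 5, 8, 6],
      [0, 0, 0, 0, 0, 0, 1, 0, 0, 0, 5, 0, 2, 5, 2, 0, 2, 2, 5, 1, 2, 0, 5, 7],
      [0, 0, 0, 0, 0, 0, 0, 0, 0, 1, 6, 0, 5, 0, 8, 0, 1, 4, 5, 2, 2, 3, 3, 2],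
      [0, 0, 0, 0, 0, 0, 0, 0, 0, 0, 2, 0, 6, 1, 3, 1, 3, 5, 5, 4, 4, 1, 3, 1]]
    syn := [19, 20, 22, 23]
    last := 17 },
  { supp := [0, 1, 2, 3, 5, 6, 16, 18, 19]
    posA := [0, 4, 7, 8, 9, 10, 11, 12, 13, 14, 15, 17]
    rowsA := [[1, 68, 65, 35, 0, 17, 53, 0, 0, 0, 0, 0, 0, 0, 0, 0, 56, 0, 34, 52, 69, 15, 48, 54],
      [0, 16, 75, 72, 1, 8, 41, 0, 0, 0, 0, 0, 0, 0, 0, 0, 64, 0, 70, 56, 63, 43, 69, 19],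
      [0, 5, 48, 20, 0, 33, 6, 1, 0, 0, 0, 0, 0, 0, 0, 0, 31, 0, 19, 43, 75, 79, 64, 77],
      [0, 72, 50, 77, 0, 32, 52, 0, 1, 0, 0, 0, 0, 0, 0, 0, 73, 0, 8, 48, 80, 18, 14, 60],
      [0, 50, 73, 33, 0, 9, 58, 0, 0, 1, 0, 0, 0, 0, 0, 0, 34, 0, 33, 2, 10, 73, 9, 17],
      [0, 80, 16, 27, 0, 53, 13, 0, 0, 0, 1, 0, 0, 0, 0, 0, 76, 0, 40, 6, 72, 77, 37, 6],
      [0, 24, 56, 67, 0, 24, 31, 0, 0, 0, 0, 1, 0, 0, 0, 0, 11, 0, 69, 42, 67, 7, 44, 73],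
      [0, 67, 78, 4, 0, 70, 20, 0, 0, 0, 0, 0, 1, 0, 0, 0, 10, 0, 6, 54, 44, 60, 41, 79],
      [0, 46, 14, 8, 0, 65, 32, 0, 0, 0, 0, 0, 0, 1, 0, 0, 64, 0, 9, 55, 40, 16, 53, 26],
      [0, 51, 65, 22, 0, 27, 19, 0, 0, 0, 0, 0, 0, 0, 1, 0, 6, 0, 11, 44, 59, 35, 63, 26],
      [0, 0, 75, 60, 0, 19, 7, 0, 0, 0, 0, 0, 0, 0, 0, 1, 13, 0, 46, 47, 65, 63, 16, 71],
      [0, 8, 34, 62, 0, 49, 74, 0, 0, 0, 0, 0, 0, 0, 0, 0, 49, 1, 61, 38, 5, 1, 29, 3]]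
    posB := [4, 7, 8, 9, 0, 1, 2, 3, 5, 6, 16, 18]
    rowsB := [[0, 0, 0, 0, 1, 0, 0, 0, 0, 0, 1, 7, 5, 0, 2, 1, 0, 8, 0, 3, 3, 7, 3, 7],
      [0, 0, 0, 0, 0, 0, 0, 1, 0, 0, 4, 2, 8, 7, 2, 2, 0, 1, 0, 0, 5, 2, 7, 7],
      [0, 0, 0, 0, 0, 0, 0, 0, 1, 0, 0, 0, 3, 2, 8, 1, 0, 8, 0, 6, 5, 5, 5, 4],
      [0, 0, 0, 0, 0, 0, 0, 0, 0, 1, 6, 7, 2, 3, 7, 0, 0, 4, 0, 3, 4, 2, 5, 4],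
      [1, 0, 0, 0, 0, 0, 0, 0, 0, 0, 0, 0, 8, 3, 6, 4, 0, 4, 0, 2, 5, 1, 4, 1],
      [0, 1, 0, 0, 0, 0, 0, 0, 0, 0, 4, 7, 4, 1, 2, 1, 0, 3, 0, 1, 1, 2, 2, 1],
      [0, 0, 1, 0, 0, 0, 0, 0, 0, 0, 5, 5, 3, 8, 6, 1, 0, 0, 0, 1, 0, 2, 5, 5],
      [0, 0, 0, 1, 0, 0, 0, 0, 0, 0, 8, 6, 4, 4, 4, 8, 0, 0, 0, 1, 0, 4, 2, 3],
      [0, 0, 0, 0, 0, 1, 0, 0, 0, 0, 6, 8, 7, 2, 8, 2, 0, 3, 0, 7, 2, 2, 6, 0],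
      [0, 0, 0, 0, 0, 0, 1, 0, 0, 0, 4, 8, 2, 6, 0, 4, 0, 4, 0, 4, 1, 8, 0, 3],
      [0, 0, 0, 0, 0, 0, 0, 0, 0, 0, 1, 8, 6, 2, 1, 5, 1, 7, 0, 7, 3, 0, 7, 6],
      [0, 0, 0, 0, 0, 0, 0, 0, 0, 0, 7, 6, 3, 8, 0, 8, 0, 4, 1, 2, 8, 2, 0, 2]]
    syn := [20, 21, 22, 23]
    last := 19 },
  { supp := [0, 1, 2, 3, 5, 7, 10, 13, 15]
    posA := [0, 4, 6, 8, 9, 11, 12, 14, 16, 17, 18, 19]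
    rowsA := [[1, 34, 25, 16, 0, 16, 0, 8, 0, 0, 67, 0, 0, 65, 0, 50, 0, 0, 0, 0, 3, 33, 75, 75],
      [0, 80, 7, 35, 1, 4, 0, 73, 0, 0, 16, 0, 0, 66, 0, 63, 0, 0, 0, 0, 60, 79, 38, 18],
      [0, 5, 14, 22, 0, 72, 1, 71, 0, 0, 41, 0, 0, 69, 0, 80, 0, 0, 0, 0, 37, 6, 63, 65],
      [0, 32, 11, 6, 0, 5, 0, 34, 1, 0, 64, 0, 0, 25, 0, 8, 0, 0, 0, 0, 10, 31, 17, 68],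
      [0, 43, 42, 44, 0, 75, 0, 2, 0, 1, 55, 0, 0, 29, 0, 33, 0, 0, 0, 0, 54, 43, 25, 34],
      [0, 32, 24, 27, 0, 28, 0, 9, 0, 0, 65, 1, 0, 64, 0, 49, 0, 0, 0, 0, 70, 33, 73, 62],
      [0, 62, 14, 59, 0, 27, 0, 48, 0, 0, 73, 0, 1, 35, 0, 77, 0, 0, 0, 0, 77, 61, 72, 60],
      [0, 20, 69, 11, 0, 41, 0, 33, 0, 0, 9, 0, 0, 47, 1, 73, 0, 0, 0, 0, 6, 19, 11, 35],
      [0, 73, 24, 51, 0, 1, 0, 50, 0, 0, 46, 0, 0, 13, 0, 9, 1, 0, 0, 0, 67, 5, 65, 0],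
      [0, 3, 8, 55, 0, 6, 0, 64, 0, 0, 55, 0, 0, 54, 0, 60, 0, 1, 0, 0, 2, 4, 19, 71],
      [0, 74, 50, 62, 0, 13, 0, 23, 0, 0, 49, 0, 0, 53, 0, 52, 0, 0, 1, 0, 61, 75, 41, 7],
      [0, 29, 37, 18, 0, 37, 0, 72, 0, 0, 28, 0, 0, 48, 0, 14, 0, 0, 0, 1, 40, 17, 69, 16]]
    posB := [4, 6, 9, 11, 0, 1, 2, 3, 5, 7, 10, 13]
    rowsB := [[0, 0, 0, 0, 1, 0, 0, 0, 4, 0, 0, 0, 8, 0, 2, 0, 4, 6, 7, 6, 1, 5, 6, 7],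
      [0, 0, 0, 0, 0, 0, 1, 0, 1, 0, 0, 0, 8, 0, 7, 3, 8, 2, 6, 6, 6, 7, 7, 4],
      [0, 0, 0, 0, 0, 0, 0, 0, 6, 1, 0, 0, 5, 0, 2, 3, 1, 1, 8, 8, 2, 3, 6, 5],
      [0, 0, 0, 0, 0, 0, 0, 0, 3, 0, 0, 1, 6, 0, 2, 3, 5, 6, 7, 4, 5, 2, 5, 2],
      [1, 0, 0, 0, 0, 0, 0, 0, 3, 0, 0, 0, 8, 0, 3, 7, 0, 1, 0, 2, 2, 7, 1, 4],
      [0, 1, 0, 0, 0, 0, 0, 0, 2, 0, 0, 0, 1, 0, 4, 1, 4, 0, 4, 4, 1, 2, 4, 5],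
      [0, 0, 1, 0, 0, 0, 0, 0, 7, 0, 0, 0, 6, 0, 7, 1, 8, 3, 2, 4, 3, 5, 6, 4],
      [0, 0, 0, 1, 0, 0, 0, 0, 0, 0, 0, 0, 7, 0, 7, 4, 3, 7, 1, 6, 8, 6, 5, 5],
      [0, 0, 0, 0, 0, 1, 0, 0, 8, 0, 0, 0, 1, 0, 5, 7, 5, 7, 1, 2, 2, 8, 0, 1],
      [0, 0, 0, 0, 0, 0, 0, 1, 5, 0, 0, 0, 8, 0, 8, 5, 2, 4, 3, 5, 6, 6, 1, 0],
      [0, 0, 0, 0, 0, 0, 0, 0, 2, 0, 1, 0, 0, 0, 4, 7, 6, 5, 7, 5, 3, 6, 7, 4],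
      [0, 0, 0, 0, 0, 0, 0, 0, 5, 0, 0, 0, 6, 1, 4, 5, 0, 4, 0, 3, 7, 7, 7, 2]]
    syn := [20, 21, 22, 23]
    last := 15 },
  { supp := [0, 1, 2, 3, 6, 11, 13, 18, 23]
    posA := [0, 4, 5, 7, 8, 9, 10, 12, 14, 15, 16, 17]
    rowsA := [[1, 76, 53, 25, 0, 0, 28, 0, 0, 0, 0, 70, 0, 20, 0, 0, 0, 0, 22, 42, 51, 15, 57, 14],
      [0, 57, 22, 46, 1, 0, 27, 0, 0, 0, 0, 15, 0, 23, 0, 0, 0, 0, 16, 7, 44, 30, 4, 11],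
      [0, 20, 32, 21, 0, 1, 60, 0, 0, 0, 0, 50, 0, 80, 0, 0, 0, 0, 39, 20, 70, 10, 41, 60],
      [0, 41, 56, 21, 0, 0, 16, 1, 0, 0, 0, 28, 0, 39, 0, 0, 0, 0, 34, 43, 28, 8, 42, 57],
      [0, 65, 3, 15, 0, 0, 38, 0, 1, 0, 0, 39, 0, 20, 0, 0, 0, 0, 44, 32, 10, 44, 36, 25],
      [0, 35, 27, 46, 0, 0, 44, 0, 0, 1, 0, 16, 0, 60, 0, 0, 0, 0, 57, 5, 80, 11, 5, 72],
      [0, 13, 14, 4, 0, 0, 29, 0, 0, 0, 1, 45, 0, 5, 0, 0, 0, 0, 31, 65, 47, 67, 14, 19],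
      [0, 2, 39, 80, 0, 0, 39, 0, 0, 0, 0, 20, 1, 4, 0, 0, 0, 0, 45, 61, 5, 21, 80, 23],
      [0, 69, 68, 10, 0, 0, 7, 0, 0, 0, 0, 33, 0, 36, 1, 0, 0, 0, 20, 8, 65, 32, 21, 50],
      [0, 19, 36, 67, 0, 0, 2, 0, 0, 0, 0, 62, 0, 79, 0, 1, 0, 0, 13, 30, 8, 60, 46, 9],
      [0, 69, 31, 56, 0, 0, 56, 0, 0, 0, 0, 53, 0, 39, 0, 0, 1, 0, 39, 78, 8, 23, 25, 23],
      [0, 21, 25, 15, 0, 0, 60, 0, 0, 0, 0, 56, 0, 1, 0, 0, 0, 1, 46, 15, 71, 4, 35, 67]]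
    posB := [4, 5, 7, 8, 0, 1, 2, 3, 6, 11, 13, 18]
    rowsB := [[0, 0, 0, 0, 1, 0, 0, 0, 0, 5, 1, 0, 6, 0, 7, 4, 6, 7, 0, 6, 5, 8, 7, 0],
      [0, 0, 0, 0, 0, 1, 0, 0, 0, 0, 5, 0, 1, 0, 7, 6, 8, 5, 0, 0, 8, 2, 8, 3],
      [0, 0, 0, 0, 0, 0, 0, 1, 0, 2, 5, 0, 0, 0, 5, 1, 7, 4, 0, 1, 7, 6, 3, 3],
      [0, 0, 0, 0, 0, 0, 0, 0, 1, 2, 8, 0, 1, 0, 0, 8, 5, 6, 0, 2, 1, 0, 5, 6],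
      [1, 0, 0, 0, 0, 0, 0, 0, 0, 3, 3, 0, 5, 0, 3, 1, 3, 1, 0, 5, 8, 7, 4, 4],
      [0, 1, 0, 0, 0, 0, 0, 0, 0, 6, 8, 0, 4, 0, 3, 3, 4, 1, 0, 2, 1, 5, 6, 4],
      [0, 0, 1, 0, 0, 0, 0, 0, 0, 0, 1, 0, 6, 0, 2, 8, 5, 8, 0, 0, 6, 2, 4, 8],
      [0, 0, 0, 1, 0, 0, 0, 0, 0, 7, 6, 0, 6, 0, 0, 4, 1, 8, 0, 2, 4, 0, 8, 1],
      [0, 0, 0, 0, 0, 0, 1, 0, 0, 4, 1, 0, 1, 0, 1, 4, 0, 2, 0, 7, 8, 7, 2, 1],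
      [0, 0, 0, 0, 0, 0, 0, 0, 0, 7, 0, 1, 5, 0, 7, 6, 3, 4, 0, 6, 1, 5, 2, 1],
      [0, 0, 0, 0, 0, 0, 0, 0, 0, 8, 5, 0, 1, 1, 4, 1, 2, 1, 0, 2, 2, 7, 0, 8],
      [0, 0, 0, 0, 0, 0, 0, 0, 0, 2, 3, 0, 1, 0, 7, 0, 2, 8, 1, 4, 4, 6, 6, 4]]
    syn := [19, 20, 21, 22]
    last := 23 },
  { supp := [0, 1, 2, 3, 7, 8, 11, 19, 23]
    posA := [0, 4, 5, 6, 9, 10, 12, 13, 14, 15, 16, 17]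
    rowsA := [[1, 16, 10, 40, 0, 0, 0, 16, 65, 0, 0, 56, 0, 0, 0, 0, 0, 0, 24, 56, 15, 6, 72, 40],
      [0, 23, 53, 10, 1, 0, 0, 17, 71, 0, 0, 20, 0, 0, 0, 0, 0, 0, 73, 13, 15, 50, 34, 1],
      [0, 49, 57, 75, 0, 1, 0, 50, 20, 0, 0, 43, 0, 0, 0, 0, 0, 0, 27, 56, 50, 75, 26, 8],
      [0, 41, 77, 3, 0, 0, 1, 34, 39, 0, 0, 43, 0, 0, 0, 0, 0, 0, 37, 37, 46, 44, 78, 78],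
      [0, 37, 62, 49, 0, 0, 0, 31, 54, 1, 0, 74, 0, 0, 0, 0, 0, 0, 4, 69, 30, 43, 11, 30],
      [0, 68, 71, 43, 0, 0, 0, 66, 29, 0, 1, 27, 0, 0, 0, 0, 0, 0, 68, 24, 79, 8, 23, 51],
      [0, 30, 2, 80, 0, 0, 0, 34, 55, 0, 0, 39, 1, 0, 0, 0, 0, 0, 57, 43, 49, 40, 5, 15],
      [0, 59, 28, 72, 0, 0, 0, 65, 11, 0, 0, 62, 0, 1, 0, 0, 0, 0, 21, 69, 67, 32, 48, 11],
      [0, 7, 60, 70, 0, 0, 0, 14, 60, 0, 0, 11, 0, 0, 1, 0, 0, 0, 58, 19, 4, 30, 15, 80],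
      [0, 55, 19, 43, 0, 0, 0, 62, 25, 0, 0, 19, 0, 0, 0, 1, 0, 0, 62, 13, 50, 36, 67, 37],
      [0, 8, 54, 77, 0, 0, 0, 16, 60, 0, 0, 6, 0, 0, 0, 0, 1, 0, 64, 13, 3, 37, 22, 5],
      [0, 13, 75, 6, 0, 0, 0, 1, 79, 0, 0, 6, 0, 0, 0, 0, 0, 1, 73, 75, 79, 5, 5, 74]]
    posB := [4, 5, 6, 9, 0, 1, 2, 3, 7, 8, 11, 19]
    rowsB := [[0, 0, 0, 0, 1, 0, 0, 0, 0, 0, 0, 0, 5, 1, 6, 5, 4, 1, 7, 0, 8, 3, 4, 0],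
      [0, 0, 0, 0, 0, 1, 0, 0, 0, 0, 5, 0, 1, 0, 7, 6, 8, 5, 0, 0, 8, 2, 8, 3],
      [0, 0, 0, 0, 0, 0, 1, 0, 0, 0, 0, 0, 5, 7, 8, 2, 8, 3, 6, 0, 1, 2, 2, 0],
      [0, 0, 0, 0, 0, 0, 0, 0, 0, 1, 5, 0, 2, 4, 2, 4, 4, 6, 7, 0, 0, 7, 6, 6],
      [1, 0, 0, 0, 0, 0, 0, 0, 0, 0, 8, 0, 5, 7, 0, 8, 3, 6, 2, 0, 3, 5, 7, 5],
      [0, 1, 0, 0, 0, 0, 0, 0, 0, 0, 4, 0, 7, 7, 3, 1, 1, 3, 5, 0, 8, 3, 0, 8],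
      [0, 0, 1, 0, 0, 0, 0, 0, 0, 0, 1, 0, 6, 0, 2, 8, 5, 8, 0, 0, 6, 2, 4, 8],
      [0, 0, 0, 1, 0, 0, 0, 0, 0, 0, 6, 0, 7, 3, 7, 7, 3, 4, 7, 0, 2, 0, 5, 8],
      [0, 0, 0, 0, 0, 0, 0, 1, 0, 0, 8, 0, 8, 3, 7, 4, 5, 2, 5, 0, 6, 3, 6, 2],
      [0, 0, 0, 0, 0, 0, 0, 0, 1, 0, 6, 0, 3, 5, 8, 4, 0, 5, 6, 0, 8, 8, 5, 7],
      [0, 0, 0, 0, 0, 0, 0, 0, 0, 0, 7, 1, 0, 2, 2, 8, 2, 4, 2, 0, 4, 4, 5, 7],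
      [0, 0, 0, 0, 0, 0, 0, 0, 0, 0, 5, 0, 6, 7, 3, 7, 3, 8, 8, 1, 1, 7, 3, 7]]
    syn := [18, 20, 21, 22]
    last := 23 }]

/-- The indicator function of the support. -/
def Rep.W (R : Rep) (j : Fin 24) : Bool := R.supp.contains j.val
/-- The information positions of `rowsA`. -/
def Rep.jA (R : Rep) (i : Fin 12) : Fin 24 := ⟨R.posA.getD i 0 % 24, Nat.mod_lt _ (by norm_num)⟩
/-- The information positions of `rowsB`. -/
def Rep.jB (R : Rep) (i : Fin 12) : Fin 24 := ⟨R.posB.getD i 0 % 24, Nat.mod_lt _ (by norm_num)⟩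
/-- The entries of `rowsA`. -/
def Rep.A (R : Rep) (i : Fin 12) (j : Fin 24) : ℕ := entry R.rowsA i j
/-- The entries of `rowsB`. -/
def Rep.B (R : Rep) (i : Fin 12) (j : Fin 24) : ℕ := entry R.rowsB i j
/-- The first four rows of `rowsB`. -/
def Rep.B4 (R : Rep) (i : Fin 4) (j : Fin 24) : ℕ := R.B (Fin.castLE (by norm_num) i) j

/-- The accumulated sum over all pairs with first support `R.supp`, up to scaling. -/
def Rep.total (R : Rep) : ℤ × ℤ × ℕ :=
  sumN (leafB R.last R.syn (packL (R.rowsA.headD []))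
    (R.posA.tail.zip (R.rowsA.tail.map packL))) ((R.rowsB.take 4).map packL) 0 (0, 0, 0)

set_option maxRecDepth 100000 in
lemma reps_total : ∀ R ∈ reps, R.total = (0, -13, 0) := by decide +kernel

lemma reps_sysA : ∀ R ∈ reps, Sys R.jA R.A := by decide +kernel
lemma reps_sysB : ∀ R ∈ reps, Sys R.jB R.B := by decide +kernel
lemma reps_A81 : ∀ R ∈ reps, ∀ i t, (∑ j, mat t j * R.A i j) % 81 = 0 % 81 := by decide +kernel
lemma reps_A0 : ∀ R ∈ reps, ∀ j, decide (R.A 0 j % 3 ≠ 0) = R.W j := by decide +kernel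
lemma reps_WA0 : ∀ R ∈ reps, R.W (R.jA 0) = true := by decide +kernel
lemma reps_WA : ∀ R ∈ reps, ∀ i : Fin 11, R.W (R.jA i.succ) = false := by decide +kernel
lemma reps_WB : ∀ R ∈ reps, ∀ i : Fin 12, 4 ≤ i.val → R.W (R.jB i) = true := by decide +kernel
lemma reps_last : ∀ R ∈ reps, ∃ h : R.last < 24, R.W ⟨R.last, h⟩ = true := by decide +kernel
lemma reps_A_lt : ∀ R ∈ reps, ∀ i j, R.A i j < 81 := by decide +kernel
lemma reps_B_lt : ∀ R ∈ reps, ∀ i j, R.B i j < 9 := by decide +kernel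
lemma reps_syn : ∀ R ∈ reps, ∀ j ∈ R.syn, j < 24 := by decide +kernel
lemma reps_card : ∀ R ∈ reps, (Finset.univ.filter fun j => R.W j = true).card = 9 := by
  decide +kernel
lemma reps_rA : ∀ R ∈ reps, R.posA.tail.zip (R.rowsA.tail.map packL) =
    List.ofFn fun i : Fin 11 => ((R.jA i.succ : ℕ), pk (R.A i.succ)) := by decide +kernel
lemma reps_r0 : ∀ R ∈ reps, packL (R.rowsA.headD []) = pk (R.A 0) := by decide +kernel
lemma reps_rB : ∀ R ∈ reps, (R.rowsB.take 4).map packL =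
    List.ofFn fun i : Fin 4 => pk (R.B4 i) := by decide +kernel

/-! ### The sum over the pairs with a given support of weight 9 -/

/-- The lift to `ℤ/81` of a codeword modulo 9. -/
def lift81 (a : Fin 24 → ZMod 9) : Fin 24 → ZMod 81 :=
  comb fun i => ((a (fst12 i)).val : ZMod 81)

lemma inC_lift81 (a : Fin 24 → ZMod 9) : InC (lift81 a) := inC_comb h81_81 _

lemma redV_lift81 {a : Fin 24 → ZMod 9} (ha : InC a) : redV (lift81 a) = a := by
  rw [eq_comb h81_9 ha]
  funext k
  simp [redV, lift81, comb]
  refine Finset.sum_congr rfl fun i _ => ?_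
  have := congrFun (eq_comb h81_9 ha) (fst12 i)
  simp only [comb] at this
  rw [← this]

/-- `b` has a coordinate of valuation 0. -/
def unitV (b : Fin 24 → ZMod 9) : Prop := ∃ j, isU (b j) = true

section
variable {N : Type} [AddCommGroup N] (m : ℕ → ℕ → ℕ → ℕ → N)

/-- The sum of the contributions of the pairs `(a, b)`, over all codewords `b` having a unit
entry. -/
def F (a : Fin 24 → ZMod 9) : N :=
  ∑ b, if InC b then (if unitV b then E m (lift81 a) b else 0) else 0

lemma F_eq {a : Fin 24 → ZMod 9} (ha : InC a) {c : Fin 24 → ZMod 81} (hc : InC c)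
    (h : redV c = a) :
    F m a = ∑ b, if InC b then (if unitV b then E m c b else 0) else 0 := by
  refine Finset.sum_congr rfl fun b _ => ?_
  by_cases hb : InC b
  · rw [E_congr m (inC_lift81 a) hc hb (by rw [redV_lift81 ha, h])]
  · rw [if_neg hb, if_neg hb]

lemma F_smul {a : Fin 24 → ZMod 9} (ha : InC a) (l : ZMod 9) (hl : isU l = true) :
    F m (fun j => l * a j) = F m a := by
  have hl' : red (l.val : ZMod 81) = l := by simp
  rw [F_eq m (inC_smul l ha) (c := fun j => (l.val : ZMod 81) * lift81 a j)
    (inC_smul _ (inC_lift81 a))]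
  · unfold F
    refine Finset.sum_congr rfl fun b _ => ?_
    rw [E_smul_left m _ (by rw [hl']; exact hl)]
  · funext j
    have := congrFun (redV_lift81 ha) j
    simp only [redV] at this ⊢
    rw [map_mul, hl', this]


lemma isU_nonunit_add : ∀ x y : ZMod 9, isU y = false → isU (x + y) = isU x := by decide +kernel
lemma nonunit_add : ∀ x y : ZMod 9, isU x = false → isU y = false → isU (x + y) = false := by
  decide +kernel
lemma nonunit_mul : ∀ x y : ZMod 9, isU x = false → isU (x * y) = false := by decide +kernel

lemma nonunit_sum {ι : Type} (s : Finset ι) (f : ι → ZMod 9) (h : ∀ i ∈ s, isU (f i) = false) :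
    isU (∑ i ∈ s, f i) = false := by
  induction s using Finset.induction_on with
  | empty => simp; decide +kernel
  | insert a s ha ih =>
    rw [Finset.sum_insert ha]
    exact nonunit_add _ _ (h _ (by simp)) (ih fun i hi => h i (by simp [hi]))

/-- The word `A_0 + 3 Σ d_i A_i` on natural numbers. -/
def wordA (R : Rep) (d : Fin 11 → Fin 3) (j : Fin 24) : ℕ :=
  R.A 0 j + 3 * ∑ i, (d i : ℕ) * R.A i.succ j

/-- The word `Σ v_i B_i` on natural numbers. -/
def wordB (R : Rep) (v : Fin 4 → ZMod 9) (j : Fin 24) : ℕ := ∑ i, (v i).val * R.B4 i j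

lemma supp_lin {R : Rep} (hR : R ∈ reps) (x0 : ZMod 9) (x : Fin 11 → ZMod 9) :
    (∀ j, isU (lin R.A (Fin.cons x0 x) j) = R.W j) ↔ isU x0 = true ∧ ∀ i, isU (x i) = false := by
  constructor
  · intro h
    refine ⟨?_, fun i => ?_⟩
    · have := h (R.jA 0)
      rwa [lin_sys (reps_sysA R hR), reps_WA0 R hR, Fin.cons_zero] at this
    · have := h (R.jA i.succ)
      rwa [lin_sys (reps_sysA R hR), reps_WA R hR, Fin.cons_succ] at this
  · rintro ⟨h0, h⟩ j
    unfold lin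
    rw [Fin.sum_univ_succ]
    simp only [Fin.cons_zero, Fin.cons_succ]
    rw [isU_nonunit_add _ _ (nonunit_sum _ _ fun i _ => nonunit_mul _ _ (h i)), isU_mul _ _ h0,
      isU_cast, reps_A0 R hR]

lemma sum_supp {R : Rep} (hR : R ∈ reps) :
    ∑ a, (if InC a then (if ∀ j, isU (a j) = R.W j then F m a else 0) else 0) =
      6 • ∑ d, F m (c9 (wordA R d)) := by
  rw [sum_sys (reps_sysA R hR), sum_cons]
  simp only [supp_lin hR]
  have h1 : ∀ x0 : ZMod 9, (∑ x : Fin 11 → ZMod 9,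
      if isU x0 = true ∧ ∀ i, isU (x i) = false then F m (lin R.A (Fin.cons x0 x)) else 0) =
      (if isU x0 then 1 else 0 : ℕ) • ∑ x : Fin 11 → ZMod 9,
        if ∀ i, isU (x i) = false then F m (lin R.A (Fin.cons 1 x)) else 0 := by
    intro x0
    by_cases h0 : isU x0 = true
    · simp only [h0, true_and, if_true, one_smul]
      rw [← (mulE 11 x0 h0).sum_comp]
      refine Finset.sum_congr rfl fun x _ => ?_
      have e1 : (∀ i, isU (mulE 11 x0 h0 x i) = false) ↔ ∀ i, isU (x i) = false := by
        show (∀ i, isU (x0 * x i) = false) ↔ _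
        simp only [isU_mul _ _ h0]
      have e2 : lin R.A (Fin.cons x0 (mulE 11 x0 h0 x)) =
          fun j => x0 * lin R.A (Fin.cons 1 x) j := by
        funext j
        unfold lin
        rw [Finset.mul_sum]
        refine Finset.sum_congr rfl fun i _ => ?_
        refine Fin.cases ?_ (fun i => ?_) i
        · simp
        · simp only [Fin.cons_succ]
          show x0 * x i * _ = _
          ring
      rw [e2, F_smul m (inC_lin (reps_sysA R hR) _) _ h0]
      exact if_congr e1 rfl rfl
    · simp [h0]
  have h6 : (∑ x0 : ZMod 9, if isU x0 then 1 else 0 : ℕ) = 6 := by decide +kernel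
  simp only [h1]
  rw [← Finset.sum_smul, sum_nonunit, h6]
  refine congrArg (6 • ·) ?_
  refine Finset.sum_congr rfl fun d _ => congrArg _ ?_
  funext j
  unfold lin c9 wordA
  rw [Fin.sum_univ_succ]
  simp only [Fin.cons_zero, Fin.cons_succ]
  push_cast
  rw [one_mul, Finset.mul_sum]
  congr 1
  exact Finset.sum_congr rfl fun i _ => by ring

lemma inC_wordA {R : Rep} (hR : R ∈ reps) (d : Fin 11 → Fin 3) : InC (c81 (wordA R d)) := by
  have h : ∀ i, InC (fun j => (R.A i j : ZMod 81)) := by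
    intro i t
    have := cast_congr (R := ZMod 81) (n := 81) h81_81 (reps_A81 R hR i t)
    push_cast at this; exact this
  have e : c81 (wordA R d) = fun j => (R.A 0 j : ZMod 81) +
      3 * ∑ i, ((d i : ℕ) : ZMod 81) * (R.A i.succ j : ZMod 81) := by
    funext j; simp [c81, wordA]
  rw [e]
  exact inC_add (h 0) (inC_smul _ (inC_sum _ fun i _ => inC_smul _ (h _)))

lemma isU_wordA {R : Rep} (hR : R ∈ reps) (d : Fin 11 → Fin 3) (j : Fin 24) :
    isU (c9 (wordA R d) j) = R.W j := by
  rw [c9, isU_cast, ← reps_A0 R hR j, wordA, Nat.add_mul_mod_self_left]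

lemma n0_wordA {R : Rep} (hR : R ∈ reps) (d : Fin 11 → Fin 3) : n0 (c9 (wordA R d)) = 9 := by
  unfold n0
  simp only [isU_wordA hR]
  exact reps_card R hR

lemma E_eq_zero {c : Fin 24 → ZMod 81} {b : Fin 24 → ZMod 9} {j : Fin 24} (h : redV c j ≠ 0)
    (h' : b j ≠ 0) : E m c b = 0 := by
  unfold E
  rw [if_neg]
  intro hd
  rcases hd j with h1 | h1
  · exact h h1
  · exact h' h1

lemma isU_ne_zero : ∀ x : ZMod 9, isU x = true → x ≠ 0 := by decide +kernel

lemma lin_B4 (R : Rep) (v : Fin 4 → ZMod 9) (x : Fin 12 → ZMod 9)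
    (hx : ∀ i : Fin 12, x i = if h : i.val < 4 then v ⟨i, h⟩ else 0) :
    lin R.B x = lin R.B4 v := by
  funext j
  unfold lin
  rw [show (∑ i : Fin 12, x i * (R.B i j : ZMod 9)) =
    ∑ i : Fin (4 + 8), x i * (R.B i j : ZMod 9) from rfl, Fin.sum_univ_add]
  simp only [hx]
  simp
  rfl

lemma sum_b {R : Rep} (hR : R ∈ reps) (d : Fin 11 → Fin 3) :
    F m (c9 (wordA R d)) =
      6 • ∑ v, if lead v then E m (c81 (wordA R d)) (c9 (wordB R v)) else 0 := by
  have hw : redV (c81 (wordA R d)) = c9 (wordA R d) := redV_c81 _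
  rw [F_eq m (by rw [← hw]; exact inC_redV (inC_wordA hR d)) (inC_wordA hR d) hw,
    sum_sys (reps_sysB R hR)]
  have hB4 : ∀ v, lin R.B4 v = c9 (wordB R v) := by
    intro v; funext j; simp [lin, c9, wordB]
  set c := c81 (wordA R d) with hc
  have hz : ∀ x : Fin 12 → ZMod 9, (¬ ∀ i : Fin 12, 4 ≤ i.val → x i = 0) →
      (if unitV (lin R.B x) then E m c (lin R.B x) else 0) = 0 := by
    intro x hx
    push Not at hx
    obtain ⟨i, hi, hxi⟩ := hx
    rw [E_eq_zero m (j := R.jB i), ite_self]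
    · rw [hw]
      apply isU_ne_zero
      rw [isU_wordA hR, reps_WB R hR i hi]
    · rw [lin_sys (reps_sysB R hR)]; exact hxi
  have hsum : ∑ x : Fin 12 → ZMod 9, (if unitV (lin R.B x) then E m c (lin R.B x) else 0) =
      ∑ v : Fin 4 → ZMod 9, if unitV (lin R.B4 v) then E m c (lin R.B4 v) else 0 := by
    rw [← Finset.sum_filter_add_sum_filter_not Finset.univ
      (fun x : Fin 12 → ZMod 9 => ∀ i : Fin 12, 4 ≤ i.val → x i = 0)]
    have h0 : ∑ x : Fin 12 → ZMod 9 with ¬ ∀ i : Fin 12, 4 ≤ i.val → x i = 0,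
        (if unitV (lin R.B x) then E m c (lin R.B x) else 0) = 0 :=
      Finset.sum_eq_zero fun x hx => hz x (Finset.mem_filter.1 hx).2
    rw [h0, add_zero]
    refine Finset.sum_nbij' (fun x k => x (Fin.castLE (by norm_num) k))
      (fun v k => if h : k.val < 4 then v ⟨k, h⟩ else 0) (by simp) ?_ ?_ ?_ ?_
    · intro v _
      simp only [Finset.mem_filter, Finset.mem_univ, true_and]
      intro i hi
      rw [dif_neg (by omega)]
    · intro x hx
      simp only [Finset.mem_filter, Finset.mem_univ, true_and] at hx
      funext k
      by_cases hk : k.val < 4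
      · rw [dif_pos hk]; rfl
      · rw [dif_neg hk, hx k (by omega)]
    · intro v _
      funext k
      simp
    · intro x hx
      simp only [Finset.mem_filter, Finset.mem_univ, true_and] at hx
      rw [lin_B4 R (fun k => x (Fin.castLE (by norm_num) k)) x]
      intro k
      by_cases hk : k.val < 4
      · rw [dif_pos hk]; rfl
      · rw [dif_neg hk, hx k (by omega)]
  rw [hsum]
  have hunit : ∀ v, unitV (lin R.B4 v) ↔ ∃ i, isU (v i) = true := by
    intro v
    constructor
    · rintro ⟨j, hj⟩
      by_contra hv
      push Not at hv
      rw [lin, nonunit_sum _ _ fun i _ => nonunit_mul _ _ (by simpa using hv i)] at hj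
      exact absurd hj (by simp)
    · rintro ⟨i, hi⟩
      refine ⟨R.jB (Fin.castLE (by norm_num) i), ?_⟩
      rw [← lin_B4 R v (fun i => if h : i.val < 4 then v ⟨i, h⟩ else 0) (fun _ => rfl),
        lin_sys (reps_sysB R hR)]
      simpa using hi
  simp only [hunit]
  rw [sum_lead (fun v => E m c (lin R.B4 v))]
  · simp only [hB4]
  · intro l hl v
    have : lin R.B4 (fun i => l * v i) = fun j => l * lin R.B4 v j := by
      funext j
      simp only [lin, Finset.mul_sum]
      exact Finset.sum_congr rfl fun i _ => by ring
    rw [this, E_smul_right m l hl]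

lemma wordA_lt {R : Rep} (hR : R ∈ reps) (d : Fin 11 → Fin 3) (j : Fin 24) :
    wordA R d j < 65536 := by
  unfold wordA
  have h0 := reps_A_lt R hR 0 j
  have : ∑ i : Fin 11, (d i : ℕ) * R.A i.succ j ≤ ∑ i : Fin 11, 2 * 81 :=
    Finset.sum_le_sum fun i _ => Nat.mul_le_mul (by omega) (reps_A_lt R hR _ j).le
  simp at this
  omega

lemma wordB_lt {R : Rep} (hR : R ∈ reps) (v : Fin 4 → ZMod 9) (j : Fin 24) :
    wordB R v j < 65536 := by
  unfold wordB
  have : ∑ i : Fin 4, (v i).val * R.B4 i j ≤ ∑ i : Fin 4, 9 * 9 :=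
    Finset.sum_le_sum fun i _ => Nat.mul_le_mul (ZMod.val_lt (v i)).le (reps_B_lt R hR _ j).le
  simp at this
  omega

lemma pk_wordA (R : Rep) (d : Fin 11 → Fin 3) :
    pk (wordA R d) = pk (R.A 0) + 3 * ∑ i, (d i : ℕ) * pk (R.A i.succ) := by
  unfold wordA
  rw [pk_add (R.A 0), pk_mul 3, pk_sum]
  simp only [pk_mul]

lemma pk_wordB (R : Rep) (v : Fin 4 → ZMod 9) :
    pk (wordB R v) = 0 + ∑ i, (v i).val * pk (R.B4 i) := by
  unfold wordB
  rw [pk_sum, zero_add]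
  simp only [pk_mul]

/-- The condition under which the enumeration looks at the pair `(v, d)`. -/
def seen (R : Rep) (v : Fin 4 → ZMod 9) (d : Fin 11 → Fin 3) : Prop :=
  ent (pk (wordB R v)) R.last % 9 = 0 ∧
    (∀ i, d i ≠ 0 → ent (pk (wordB R v)) (R.jA i.succ) % 9 = 0) ∧
      ok (pk (wordA R d)) (pk (wordB R v)) R.syn = true

lemma total_eq {R : Rep} (hR : R ∈ reps) : R.total =
    ∑ v, ∑ d, if lead v ∧ seen R v d then leafA (pk (wordA R d)) (pk (wordB R v)) else 0 := by
  unfold Rep.total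
  rw [reps_rA R hR, reps_r0 R hR, reps_rB R hR]
  rw [sumN_eq _ (fun b => if ent b R.last % 9 = 0 then ∑ d : Fin 11 → Fin 3,
    if (∀ i, d i ≠ 0 → ent b (R.jA i.succ) % 9 = 0) ∧ ok (pk (wordA R d)) b R.syn = true
    then leafA (pk (wordA R d)) b else 0 else 0)]
  · rw [show ((0, 0, 0) : ℤ × ℤ × ℕ) = 0 from rfl, add_zero]
    simp only [← pk_wordB]
    refine Finset.sum_congr rfl fun v _ => ?_
    by_cases h1 : lead v = true <;>
      by_cases h2 : ent (pk (wordB R v)) R.last % 9 = 0 <;> simp [h1, h2, seen]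
  · intro b s
    unfold leafB
    rw [beq_mod, sumA_eq]
    simp only [← pk_wordA]
    by_cases h2 : ent b R.last % 9 = 0 <;> simp [h2]

lemma cast9_ne {f : Fin 24 → ℕ} (hf : ∀ j, f j < 65536) (j : Fin 24) (h : ent (pk f) j % 9 ≠ 0) :
    c9 f j ≠ 0 := by
  rw [ent_pk f hf] at h
  rw [c9, ne_eq, cast9_eq_zero]; exact h

lemma E_unseen {R : Rep} (hR : R ∈ reps) {v : Fin 4 → ZMod 9} {d : Fin 11 → Fin 3}
    (h : ¬ seen R v d) : E m (c81 (wordA R d)) (c9 (wordB R v)) = 0 := by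
  unfold seen at h
  by_cases h1 : ent (pk (wordB R v)) R.last % 9 = 0
  · by_cases h2 : ∀ i, d i ≠ 0 → ent (pk (wordB R v)) (R.jA i.succ) % 9 = 0
    · have h3 : ¬ ok (pk (wordA R d)) (pk (wordB R v)) R.syn = true := fun h3 => h ⟨h1, h2, h3⟩
      rw [ok_iff] at h3
      push Not at h3
      obtain ⟨j, hj, ha, hb⟩ := h3
      have hj' := reps_syn R hR j hj
      refine E_eq_zero m (j := ⟨j, hj'⟩) ?_ ?_
      · rw [redV_c81]; exact cast9_ne (wordA_lt hR d) ⟨j, hj'⟩ ha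
      · exact cast9_ne (wordB_lt hR v) ⟨j, hj'⟩ hb
    · push Not at h2
      obtain ⟨i, hi, hb⟩ := h2
      refine E_eq_zero m (j := R.jA i.succ) ?_ (cast9_ne (wordB_lt hR v) _ hb)
      rw [redV_c81]
      have hs := fun k => cast_congr (R := ZMod 9) h9_9 ((reps_sysA R hR).2.1 k i.succ)
      simp only [c9, wordA]
      push_cast
      simp only [hs]
      simp
      have : ∀ e : Fin 3, e ≠ 0 → (3 * ((e : ℕ) : ZMod 9)) ≠ 0 := by decide +kernel
      rw [if_neg (Fin.succ_ne_zero i).symm, zero_add]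
      exact this _ hi
  · obtain ⟨hl, hW⟩ := reps_last R hR
    refine E_eq_zero m (j := ⟨R.last, hl⟩) ?_ (cast9_ne (wordB_lt hR v) ⟨R.last, hl⟩ h1)
    rw [redV_c81]
    exact isU_ne_zero _ (by rw [isU_wordA hR, hW])

/-- The total contribution of the words with a given representative support. -/
theorem rep_sum {R : Rep} (hR : R ∈ reps) :
    ∑ a, (if InC a then (if ∀ j, isU (a j) = R.W j then F m a else 0) else 0) =
      (-468 : ℤ) • m 9 3 9 3 := by
  have ht := total_eq hR
  rw [reps_total R hR] at ht
  have hbad : ∀ v d, (if lead v ∧ seen R v d then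
      leafA (pk (wordA R d)) (pk (wordB R v)) else 0).2.2 = 0 := by
    have h := congrArg (fun s : ℤ × ℤ × ℕ => s.2.2) ht
    simp only [Prod.snd_sum] at h
    have h1 := (Finset.sum_eq_zero_iff.1 h.symm)
    intro v d
    exact Finset.sum_eq_zero_iff.1 (h1 v (Finset.mem_univ _)) d (Finset.mem_univ _)
  rw [sum_supp m hR]
  simp only [sum_b m hR]
  rw [← Finset.smul_sum, Finset.sum_comm]
  have hE : ∀ v d, (if lead v = true then E m (c81 (wordA R d)) (c9 (wordB R v)) else 0) =
      Phi m (if lead v ∧ seen R v d then leafA (pk (wordA R d)) (pk (wordB R v)) else 0) := by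
    intro v d
    have hb := hbad v d
    by_cases h1 : lead v = true
    · by_cases h2 : seen R v d
      · simp only [h1, h2, and_self, if_true] at hb ⊢
        exact E_leaf m (wordA_lt hR d) (wordB_lt hR v) (n0_wordA hR d) hb
      · simp only [h1, h2, and_false, if_true, if_false, map_zero]
        exact E_unseen m hR h2
    · simp [h1]
  simp only [hE, ← map_sum]
  rw [← ht]
  simp only [Phi, AddMonoidHom.coe_mk, ZeroHom.coe_mk]
  rw [zero_smul, zero_add, smul_smul, ← natCast_zsmul, smul_smul]
  norm_num
end

/-! ### Low weight words of the ternary code: computations -/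

/-- Reduction modulo 3. -/
def red3 : ZMod 9 →+* ZMod 3 := ZMod.castHom (by norm_num) _

lemma isU_red3 : ∀ x : ZMod 9, isU x = decide (red3 x ≠ 0) := by decide +kernel

/-- By self-orthogonality the ternary weights are divisible by 3. -/
lemma three_dvd_n0 {a : Fin 24 → ZMod 9} (ha : InC a) : 3 ∣ n0 a := by
  rw [← ZMod.natCast_eq_zero_iff, n0, Finset.card_filter]
  have h := congrArg red3 (dot_zero h81_9 ha ha)
  have e : ∀ x : ZMod 9, red3 (x * x) = ((if isU x = true then 1 else 0 : ℕ) : ZMod 3) := by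
    decide +kernel
  rw [map_sum, map_zero] at h
  simp only [e] at h
  push_cast at h ⊢
  exact h

/-- The generator matrix which is systematic at the last twelve coordinates. -/
def genRows' : List (List ℕ) :=
  [[1, 68, 78, 11, 13, 14, 4, 70, 69, 67, 78, 12, 1, 0, 0, 0, 0, 0, 0, 0, 0, 0, 0, 0],
   [69, 76, 23, 27, 17, 7, 47, 55, 52, 75, 22, 15, 0, 1, 0, 0, 0, 0, 0, 0, 0, 0, 0, 0],
   [66, 21, 40, 20, 75, 50, 28, 50, 73, 19, 39, 4, 0, 0, 1, 0, 0, 0, 0, 0, 0, 0, 0, 0],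
   [77, 37, 33, 77, 49, 19, 34, 72, 17, 48, 31, 72, 0, 0, 0, 1, 0, 0, 0, 0, 0, 0, 0, 0],
   [9, 41, 10, 51, 32, 13, 55, 16, 45, 53, 21, 58, 0, 0, 0, 0, 1, 0, 0, 0, 0, 0, 0, 0],
   [23, 34, 53, 20, 26, 30, 24, 45, 64, 47, 65, 54, 0, 0, 0, 0, 0, 1, 0, 0, 0, 0, 0, 0],
   [27, 77, 34, 26, 47, 80, 57, 51, 45, 10, 47, 65, 0, 0, 0, 0, 0, 0, 1, 0, 0, 0, 0, 0],
   [16, 62, 29, 48, 72, 28, 63, 43, 21, 64, 43, 77, 0, 0, 0, 0, 0, 0, 0, 1, 0, 0, 0, 0],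
   [4, 45, 50, 73, 19, 47, 44, 19, 76, 46, 52, 10, 0, 0, 0, 0, 0, 0, 0, 0, 1, 0, 0, 0],
   [71, 53, 75, 21, 24, 41, 7, 73, 58, 54, 76, 13, 0, 0, 0, 0, 0, 0, 0, 0, 0, 1, 0, 0],
   [68, 78, 11, 13, 14, 4, 70, 69, 67, 78, 12, 1, 0, 0, 0, 0, 0, 0, 0, 0, 0, 0, 1, 0],
   [80, 12, 15, 4, 72, 58, 54, 65, 77, 10, 13, 1, 0, 0, 0, 0, 0, 0, 0, 0, 0, 0, 0, 1]]

/-- The generator matrix `genRows'` as a function. -/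
def mat2 (i : Fin 12) (j : Fin 24) : ℕ := entry genRows' i j

/-- The `i`-th of the last twelve coordinates. -/
def snd12 (i : Fin 12) : Fin 24 := ⟨i.val + 12, by omega⟩

lemma sys1 : Sys fst12 mat := by unfold Sys; decide +kernel
lemma sys2 : Sys snd12 mat2 := by unfold Sys; decide +kernel

/-- Binary search trees with natural number keys and values. -/
inductive Tree
  | leaf : Tree
  | node : ℕ → ℕ → Tree → Tree → Tree

/-- Insertion of the value `i` at the key `x`. -/
def Tree.insert (x i : ℕ) (t : Tree) : Tree :=
  Tree.rec (Tree.node x i .leaf .leaf)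
    (fun y j l r hl hr => bif Nat.ble x y then .node y j hl r else .node y j l hr) t

/-- The value at the key `x`, and `0` if there is none. -/
def Tree.find (x : ℕ) (t : Tree) : ℕ :=
  Tree.rec 0 (fun y j _ _ hl hr => bif Nat.beq x y then j else bif Nat.ble x y then hl else hr) t

/-- The map `w ↦ 2^k w + s` modulo 23, fixing the point 23 at infinity. -/
def rho (k s w : ℕ) : ℕ :=
  bif Nat.beq w 23 then 23 else Nat.mod (Nat.add (Nat.mul (Nat.pow 2 k) w) s) 23

/-- The packed indicator word of the image of a list under `rho k s`. -/
def keyL (k s : ℕ) : List ℕ → ℕ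
  | [] => 0
  | w :: ws => Nat.add (Nat.pow 65536 (rho k s w)) (keyL k s ws)

/-- The `i`-th weight 9 support, packed; here `i = 253 r + 23 k + s` stands for the image of the
`r`-th representative under `w ↦ 2^k w + s`. -/
def keyI (i : ℕ) : ℕ :=
  keyL (Nat.div (Nat.mod i 253) 23) (Nat.mod i 23) ((reps.map Rep.supp).getD (Nat.div i 253) [])

/-- Insertion of the supports with index below `n`. -/
def Tree.build : ℕ → Tree → Tree
  | 0, t => t
  | n + 1, t => Tree.build n (t.insert (keyI n) n)

/-- The tree of all weight 9 supports. -/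
def theTree : Tree := Tree.build 2024 .leaf

/-- The supports with index below `n` are found in the tree. -/
def chkInj (t : Tree) : ℕ → Bool
  | 0 => true
  | n + 1 => bif Nat.beq (t.find (keyI n)) n then chkInj t n else false

/-- The packed indicator word of the entries not divisible by 3 of a packed word. -/
def keyC (c : ℕ) : ℕ → ℕ
  | 0 => 0
  | j + 1 => Nat.add (bif Nat.beq (Nat.mod (ent c j) 3) 0 then 0 else Nat.pow 65536 j) (keyC c j)

/-- The packed key `x` is that of one of the 2024 supports. -/
def isKey (t : Tree) (x : ℕ) : Bool :=
  Nat.blt (t.find x) 2024 && Nat.beq (keyI (t.find x)) x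

/-- The ternary weight of `c` is 0, at least 10, or 9 with support in the list. -/
def leafC (t : Tree) (c : ℕ) : Bool :=
  bif Nat.beq (cnt 3 c 24) 0 then true else
  bif Nat.ble 10 (cnt 3 c 24) then true else
  bif Nat.beq (cnt 3 c 24) 9 then isKey t (keyC c 24) else false

/-- Checks `f` on all combinations of the given rows with coefficients `0, 1, 2`, at most `k` of
which are nonzero. -/
def enumT (f : ℕ → Bool) : List ℕ → ℕ → ℕ → Bool
  | [], _, c => f c
  | _ :: _, 0, c => f c
  | r :: t, k + 1, c => enumT f t (k + 1) c && (enumT f t k (Nat.add c r) &&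
      enumT f t k (Nat.add c (Nat.mul 2 r)))

set_option maxRecDepth 1000000 in
lemma tree_inj : chkInj theTree 2024 = true := by decide +kernel

set_option maxRecDepth 1000000 in
lemma enum1 : enumT (leafC theTree) (genRows.map packL) 4 0 = true := by decide +kernel

set_option maxRecDepth 1000000 in
lemma enum2 : enumT (leafC theTree) (genRows'.map packL) 4 0 = true := by decide +kernel
lemma rows1 : genRows.map packL = List.ofFn fun i => pk (mat i) := by decide +kernel
lemma rows2 : genRows'.map packL = List.ofFn fun i => pk (mat2 i) := by decide +kernel

/-! ### Low weight words of the ternary code -/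

lemma enumT_sound (f : ℕ → Bool) : ∀ (n : ℕ) (r : Fin n → ℕ) (k c : ℕ),
    enumT f (List.ofFn r) k c = true → ∀ d : Fin n → ℕ, (∀ i, d i ≤ 2) →
    (Finset.univ.filter fun i => d i ≠ 0).card ≤ k → f (c + ∑ i, d i * r i) = true
  | 0, r, k, c, h, d, _, _ => by simpa [enumT] using h
  | n + 1, r, 0, c, h, d, hd, hk => by
    rw [List.ofFn_succ, enumT] at h
    have : ∀ i, d i = 0 := by simpa [Finset.card_eq_zero, Finset.filter_eq_empty_iff] using hk
    simpa [this] using h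
  | n + 1, r, k + 1, c, h, d, hd, hk => by
    rw [List.ofFn_succ, enumT, Bool.and_eq_true, Bool.and_eq_true] at h
    have ih := fun k' c' h' => enumT_sound f n (fun i => r i.succ) k' c' h' (fun i => d i.succ)
      (fun i => hd i.succ)
    rw [Finset.card_filter, Fin.sum_univ_succ, ← Finset.card_filter] at hk
    rw [Fin.sum_univ_succ, ← add_assoc]
    have h0 := hd 0
    interval_cases hd0 : d 0
    · simpa using ih _ _ h.1 (by simpa using hk)
    · simpa using ih _ _ h.2.1 (by simp at hk; simpa using (by omega))
    · simpa using ih _ _ h.2.2 (by simp at hk; simpa using (by omega))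

/-- The packed indicator word of a subset of the coordinates. -/
def key (p : Fin 24 → Bool) : ℕ := pk fun j => if p j then 1 else 0

lemma key_inj {p q : Fin 24 → Bool} (h : key p = key q) : p = q := by
  funext j
  have hp := ent_pk (fun j => if p j then 1 else 0) (fun j => by split_ifs <;> norm_num) j
  have hq := ent_pk (fun j => if q j then 1 else 0) (fun j => by split_ifs <;> norm_num) j
  unfold key at h
  rw [h, hq] at hp
  cases hh' : p j <;> cases hh : q j <;> simp [hh, hh'] at hp ⊢

lemma keyC_eq (c : ℕ) : ∀ k, keyC c k =
    ∑ j ∈ Finset.range k, (if ent c j % 3 = 0 then 0 else 1) * 65536 ^ j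
  | 0 => rfl
  | k + 1 => by
    rw [Finset.sum_range_succ, ← keyC_eq c k, keyC, beq_mod, Nat.add_eq, Nat.add_comm]
    congr 1
    by_cases h : ent c k % 3 = 0 <;> simp [h]

lemma keyC_pk {f : Fin 24 → ℕ} (hf : ∀ j, f j < 65536) :
    keyC (pk f) 24 = key (fun j => isU (c9 f j)) := by
  rw [keyC_eq, Finset.sum_range, key, pk.eq_1 (fun j => if isU (c9 f j) = true then 1 else 0)]
  refine Finset.sum_congr rfl fun j _ => ?_
  rw [ent_pk f hf, c9, isU_cast]
  by_cases h : f j % 3 = 0 <;> simp [h]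

/-- A codeword with at most four units among the information symbols at `J`. -/
lemma half {t : Tree} {J : Fin 12 → Fin 24} {A : Fin 12 → Fin 24 → ℕ} (hS : Sys J A)
    (hA : ∀ i j, A i j < 81)
    (he : enumT (leafC t) (List.ofFn fun i => pk (A i)) 4 0 = true)
    {a : Fin 24 → ZMod 9} (ha : InC a)
    (h4 : (Finset.univ.filter fun i => isU (a (J i)) = true).card ≤ 4) :
    n0 a = 0 ∨ 10 ≤ n0 a ∨ (n0 a = 9 ∧ isKey t (key fun j => isU (a j)) = true) := by
  set d : Fin 12 → ℕ := fun i => (a (J i)).val % 3 with hd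
  have hd2 : ∀ i, d i ≤ 2 := fun i => by
    have := Nat.mod_lt (a (J i)).val (show 3 > 0 by norm_num)
    simp only [hd]; omega
  have hdU : ∀ i, d i ≠ 0 ↔ isU (a (J i)) = true := fun i => by simp [hd, isU]
  have := enumT_sound _ 12 _ 4 0 he d hd2 (by simpa only [hdU] using h4)
  set f : Fin 24 → ℕ := fun j => ∑ i, d i * A i j with hf
  have hflt : ∀ j, f j < 65536 := by
    intro j
    have : f j ≤ ∑ _i : Fin 12, 2 * 80 := Finset.sum_le_sum fun i _ =>
      Nat.mul_le_mul (hd2 i) (Nat.le_of_lt_succ (hA i j))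
    simp at this
    omega
  have hpk : 0 + ∑ i, d i * pk (A i) = pk f := by
    rw [zero_add, hf, pk_sum]
    simp only [pk_mul]
  rw [hpk] at this
  have hU : ∀ j, isU (a j) = isU (c9 f j) := by
    intro j
    have e : ∀ x : ZMod 9, red3 x = red3 ((x.val % 3 : ℕ) : ZMod 9) := by decide +kernel
    have : red3 (a j) = red3 (c9 f j) := by
      rw [congrFun (eq_lin hS ha) j]
      simp only [lin, c9, hf, Nat.cast_sum, Nat.cast_mul, map_sum, map_mul, hd]
      exact Finset.sum_congr rfl fun i _ => by rw [e (a (J i))]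
    rw [isU_red3, isU_red3, this]
  have hn : n0 a = n0 (c9 f) := by unfold n0; simp only [hU]
  have hk : (fun j => isU (a j)) = fun j => isU (c9 f j) := funext hU
  rw [leafC, cnt3_pk hflt, keyC_pk hflt, ← hn, ← hk] at this
  by_cases h1 : n0 a = 0
  · exact Or.inl h1
  by_cases h2 : 10 ≤ n0 a
  · exact Or.inr (Or.inl h2)
  by_cases h3 : n0 a = 9
  · have e1 : Nat.beq 9 0 = false := rfl
    have e2 : Nat.ble 10 9 = false := rfl
    have e3 : Nat.beq 9 9 = true := rfl
    rw [h3, e1, e2, e3] at this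
    exact Or.inr (Or.inr ⟨h3, this⟩)
  · have e1 : Nat.beq (n0 a) 0 = false := by
      rw [← Bool.not_eq_true, Nat.beq_eq]; exact h1
    have e2 : Nat.ble 10 (n0 a) = false := by
      rw [← Bool.not_eq_true, Nat.ble_eq]; exact h2
    have e3 : Nat.beq (n0 a) 9 = false := by
      rw [← Bool.not_eq_true, Nat.beq_eq]; exact h3
    rw [e1, e2, e3] at this
    simp at this

lemma mat_lt : ∀ i j, mat i j < 81 := by decide +kernel
lemma mat2_lt : ∀ i j, mat2 i j < 81 := by decide +kernel

/-- The ternary weights of codewords are 0, 9 or at least 12, and the supports of weight 9 are the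
2024 listed ones: one half of the coordinates carries at most four units if the weight is below
10. -/
lemma weights {a : Fin 24 → ZMod 9} (ha : InC a) :
    n0 a = 0 ∨ 12 ≤ n0 a ∨ (n0 a = 9 ∧ isKey theTree (key fun j => isU (a j)) = true) := by
  by_cases h10 : 10 ≤ n0 a
  · have := three_dvd_n0 ha
    exact Or.inr (Or.inl (by omega))
  have hs : n0 a = (Finset.univ.filter fun i => isU (a (fst12 i)) = true).card +
      (Finset.univ.filter fun i => isU (a (snd12 i)) = true).card := by
    unfold n0
    rw [Finset.card_filter, Finset.card_filter, Finset.card_filter]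
    refine (Fin.sum_univ_add (a := 12) (b := 12) _).trans ?_
    congr 1
  have h1 := enum1
  have h2 := enum2
  rw [rows1] at h1
  rw [rows2] at h2
  by_cases h : (Finset.univ.filter fun i => isU (a (fst12 i)) = true).card ≤ 4
  · rcases half sys1 mat_lt h1 ha h with h | h | h
    · exact Or.inl h
    · exact absurd h h10
    · exact Or.inr (Or.inr h)
  · rcases half sys2 mat2_lt h2 ha (by omega) with h | h | h
    · exact Or.inl h
    · exact absurd h h10
    · exact Or.inr (Or.inr h)

/-! ### Automorphisms and the pairs with a word of weight 9 -/

/-- The cyclic shift of the 23 finite coordinates. -/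
def tau : Equiv.Perm (Fin 24) where
  toFun j := ⟨if j.val = 23 then 23 else (j.val + 1) % 23, by split_ifs <;> omega⟩
  invFun j := ⟨if j.val = 23 then 23 else (j.val + 22) % 23, by split_ifs <;> omega⟩
  left_inv := by decide +kernel
  right_inv := by decide +kernel

/-- Multiplication by 2 of the 23 finite coordinates. -/
def mu : Equiv.Perm (Fin 24) where
  toFun j := ⟨if j.val = 23 then 23 else (2 * j.val) % 23, by split_ifs <;> omega⟩
  invFun j := ⟨if j.val = 23 then 23 else (12 * j.val) % 23, by split_ifs <;> omega⟩
  left_inv := by decide +kernel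
  right_inv := by decide +kernel

/-- Automorphisms of the code (modulo 81 and modulo 9). -/
def Pres (σ : Equiv.Perm (Fin 24)) : Prop :=
  (∀ a : Fin 24 → ZMod 9, InC (fun j => a (σ j)) ↔ InC a) ∧
    ∀ a : Fin 24 → ZMod 81, InC (fun j => a (σ j)) ↔ InC a

lemma inC_perm {R : Type} [CommRing R] (h : (81 : R) = 0) {σ : Equiv.Perm (Fin 24)}
    (hσ : ∀ i t, (∑ j, mat i j * mat t (σ j)) % 81 = 0 % 81) {a : Fin 24 → R} (ha : InC a) :
    InC (fun j => a (σ j)) := by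
  rw [eq_comb h ha]
  refine inC_sum _ fun i _ => inC_smul _ ?_
  intro t
  have := cast_congr (R := R) (n := 81) (by exact_mod_cast h) (hσ t i)
  push_cast at this
  exact this

lemma pres_of {σ : Equiv.Perm (Fin 24)}
    (h1 : ∀ i t, (∑ j, mat i j * mat t (σ j)) % 81 = 0 % 81)
    (h2 : ∀ i t, (∑ j, mat i j * mat t (σ.symm j)) % 81 = 0 % 81) : Pres σ :=
  ⟨fun a => ⟨fun h => by simpa using inC_perm h81_9 h2 h, inC_perm h81_9 h1⟩,
    fun a => ⟨fun h => by simpa using inC_perm h81_81 h2 h, inC_perm h81_81 h1⟩⟩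

lemma pres_tau : Pres tau := pres_of (by decide +kernel) (by decide +kernel)
lemma pres_mu : Pres mu := pres_of (by decide +kernel) (by decide +kernel)

lemma pres_mul {σ ρ : Equiv.Perm (Fin 24)} (hσ : Pres σ) (hρ : Pres ρ) : Pres (σ * ρ) :=
  ⟨fun a => (hρ.1 (fun j => a (σ j))).trans (hσ.1 a),
    fun a => (hρ.2 (fun j => a (σ j))).trans (hσ.2 a)⟩

lemma pres_pow {σ : Equiv.Perm (Fin 24)} (hσ : Pres σ) : ∀ n, Pres (σ ^ n)
  | 0 => ⟨fun _ => Iff.rfl, fun _ => Iff.rfl⟩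
  | n + 1 => by rw [pow_succ]; exact pres_mul (pres_pow hσ n) hσ

lemma pres_inv {σ : Equiv.Perm (Fin 24)} (hσ : Pres σ) : Pres σ⁻¹ :=
  ⟨fun a => by simpa using (hσ.1 (fun j => a (σ⁻¹ j))).symm,
    fun a => by simpa using (hσ.2 (fun j => a (σ⁻¹ j))).symm⟩

/-- The automorphism `w ↦ 2^k w + s`. -/
def rhoP (k s : ℕ) : Equiv.Perm (Fin 24) := tau ^ s * mu ^ k

lemma pres_rho (k s : ℕ) : Pres (rhoP k s) := pres_mul (pres_pow pres_tau s) (pres_pow pres_mu k)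

lemma tau_pow (j : Fin 24) : ∀ s, ((tau ^ s) j).val = if j.val = 23 then 23 else (j.val + s) % 23
  | 0 => by simp; split_ifs <;> omega
  | s + 1 => by
    rw [pow_succ', Equiv.Perm.mul_apply]
    show (if ((tau ^ s) j).val = 23 then 23 else _) = _
    have ih := tau_pow j s
    rw [ih]
    split_ifs <;> omega

lemma mu_pow (j : Fin 24) : ∀ k, ((mu ^ k) j).val = if j.val = 23 then 23 else (2 ^ k * j.val) % 23
  | 0 => by simp; split_ifs <;> omega
  | k + 1 => by
    rw [pow_succ', Equiv.Perm.mul_apply]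
    show (if ((mu ^ k) j).val = 23 then 23 else _) = _
    have ih := mu_pow j k
    rw [ih, pow_succ', mul_assoc]
    split_ifs <;> omega

lemma rhoP_val (k s : ℕ) (j : Fin 24) : (rhoP k s j).val = rho k s j.val := by
  rw [rhoP, Equiv.Perm.mul_apply, tau_pow, mu_pow, rho]
  by_cases h : j.val = 23
  · simp [h]
  · have : Nat.beq j.val 23 = false := by rw [← Bool.not_eq_true, Nat.beq_eq]; exact h
    rw [this, if_neg h]
    simp only [cond_false]
    show _ = (2 ^ k * j.val + s) % 23
    split_ifs <;> omega

/-- The `r`-th representative support. -/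
def WR (r : Fin 8) (j : Fin 24) : Bool := ((reps.map Rep.supp).getD r []).contains j.val

lemma WR_eq : ∀ r, ∃ R ∈ reps, ∀ j, R.W j = WR r j := by decide +kernel

lemma supp_eq : ∀ r : Fin 8, (reps.map Rep.supp).getD r [] =
    ((List.finRange 24).filter (WR r)).map Fin.val := by decide +kernel

/-- The support with index `i`. -/
def pat (i : Fin 2024) (j : Fin 24) : Bool :=
  WR ⟨i.val / 253, by omega⟩ ((rhoP (i.val % 253 / 23) (i.val % 23))⁻¹ j)

lemma keyL_filter (k s : ℕ) (W : Fin 24 → Bool) : ∀ l : List (Fin 24),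
    keyL k s ((l.filter W).map Fin.val) =
      (l.map fun j => (if W j then 1 else 0) * 65536 ^ (rhoP k s j).val).sum
  | [] => rfl
  | j :: l => by
    have ih := keyL_filter k s W l
    by_cases h : W j
    · rw [List.filter_cons_of_pos h, List.map_cons, keyL, ih, List.map_cons, List.sum_cons,
        rhoP_val, if_pos h, one_mul]
      rfl
    · rw [List.filter_cons_of_neg h, ih, List.map_cons, List.sum_cons, if_neg h, zero_mul, zero_add]

lemma key_pat (i : Fin 2024) : keyI i = key (pat i) := by
  have h := supp_eq ⟨i.val / 253, by omega⟩
  rw [keyI]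
  show keyL (i.val % 253 / 23) (i.val % 23) ((reps.map Rep.supp).getD (i.val / 253) []) = _
  rw [h, keyL_filter, ← Fin.sum_univ_def, key, pk]
  refine Eq.trans ?_ (Equiv.sum_comp (rhoP (i.val % 253 / 23) (i.val % 23)) _)
  simp [pat]

lemma chkInj_sound (t : Tree) : ∀ n, chkInj t n = true → ∀ i < n, t.find (keyI i) = i
  | 0, _, i, h => absurd h (by omega)
  | n + 1, hc, i, h => by
    rw [chkInj] at hc
    cases hb : Nat.beq (t.find (keyI n)) n
    · rw [hb] at hc; simp at hc
    · rw [hb] at hc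
      rcases Nat.lt_succ_iff_lt_or_eq.1 h with h' | h'
      · exact chkInj_sound t n hc i h'
      · rw [h']; exact Nat.eq_of_beq_eq_true hb

lemma pat_inj {i i' : Fin 2024} (h : pat i = pat i') : i = i' := by
  have h1 := chkInj_sound _ _ tree_inj i i.2
  have h2 := chkInj_sound _ _ tree_inj i' i'.2
  rw [key_pat, h, ← key_pat, h2] at h1
  exact Fin.ext h1.symm

lemma card_perm (σ : Equiv.Perm (Fin 24)) (W : Fin 24 → Bool) :
    (Finset.univ.filter fun j => W (σ j) = true).card =
      (Finset.univ.filter fun j => W j = true).card := by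
  rw [Finset.card_filter, Finset.card_filter]
  exact Equiv.sum_comp σ (fun j => if W j = true then 1 else 0)

lemma pat_card (i : Fin 2024) : (Finset.univ.filter fun j => pat i j = true).card = 9 := by
  unfold pat
  rw [card_perm]
  obtain ⟨R, hR, hW⟩ := WR_eq ⟨i.val / 253, by omega⟩
  rw [← reps_card R hR]
  simp only [hW]

/-- Weight 9 words have exactly one of the listed supports. -/
lemma pat_count {a : Fin 24 → ZMod 9} (ha : InC a) {N : Type} [AddCommMonoid N] (x : N) :
    (∑ i, if ∀ j, isU (a j) = pat i j then x else 0) = if n0 a = 9 then x else 0 := by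
  have hn : ∀ i, (∀ j, isU (a j) = pat i j) → n0 a = 9 := by
    intro i hi
    rw [← pat_card i, n0]; simp only [hi]
  by_cases h9 : n0 a = 9
  · rw [if_pos h9]
    obtain h | h | ⟨_, h⟩ := weights ha
    · omega
    · omega
    rw [isKey, Bool.and_eq_true] at h
    obtain ⟨hlt, hk⟩ := h
    generalize theTree.find _ = i at hlt hk
    have hi : i < 2024 := by
      unfold Nat.blt at hlt
      exact Nat.le_of_ble_eq_true hlt
    have hk' := Nat.eq_of_beq_eq_true hk
    have hp : (fun j => isU (a j)) = pat ⟨i, hi⟩ := by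
      apply key_inj
      rw [← hk']; exact key_pat ⟨i, hi⟩
    rw [Finset.sum_eq_single (⟨i, hi⟩ : Fin 2024)]
    · rw [if_pos (congrFun hp)]
    · intro i' _ hne
      rw [if_neg]
      intro h'
      exact hne (pat_inj ((funext h').symm.trans hp))
    · simp
  · rw [if_neg h9]
    exact Finset.sum_eq_zero fun i _ => if_neg fun h => h9 (hn i h)

section
variable {N : Type} [AddCommGroup N] (m : ℕ → ℕ → ℕ → ℕ → N)

lemma F_perm {σ : Equiv.Perm (Fin 24)} (hσ : Pres σ) {a : Fin 24 → ZMod 9} (ha : InC a) :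
    F m (fun j => a (σ j)) = F m a := by
  have hr : redV (fun j => lift81 a (σ j)) = fun j => a (σ j) := by
    funext j
    show redV (lift81 a) (σ j) = a (σ j)
    rw [redV_lift81 ha]
  rw [F_eq m ((hσ.1 a).2 ha) ((hσ.2 _).2 (inC_lift81 a)) hr]
  unfold F
  rw [← (Equiv.arrowCongr σ.symm (Equiv.refl (ZMod 9))).sum_comp]
  refine Finset.sum_congr rfl fun b _ => ?_
  have hb : (Equiv.arrowCongr σ.symm (Equiv.refl (ZMod 9))) b = fun j => b (σ j) := rfl
  rw [hb, E_perm]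
  refine if_congr (hσ.1 b) (if_congr ?_ rfl rfl) rfl
  exact ⟨fun ⟨j, hj⟩ => ⟨_, hj⟩, fun ⟨j, hj⟩ => ⟨σ.symm j, by simpa using hj⟩⟩

/-- The sum of `F` over the words with a given set of unit coordinates. -/
def T (W : Fin 24 → Bool) : N :=
  ∑ a, if InC a then (if ∀ j, isU (a j) = W j then F m a else 0) else 0

lemma T_perm {σ : Equiv.Perm (Fin 24)} (hσ : Pres σ) (W : Fin 24 → Bool) :
    T m (fun j => W (σ j)) = T m W := by
  unfold T
  rw [← (Equiv.arrowCongr σ.symm (Equiv.refl (ZMod 9))).sum_comp]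
  refine Finset.sum_congr rfl fun a _ => ?_
  have hb : (Equiv.arrowCongr σ.symm (Equiv.refl (ZMod 9))) a = fun j => a (σ j) := rfl
  rw [hb]
  by_cases ha : InC a
  · rw [if_pos ha, if_pos ((hσ.1 a).2 ha), F_perm m hσ ha]
    refine if_congr ?_ rfl rfl
    exact ⟨fun h j => by simpa using h (σ.symm j), fun h j => h (σ j)⟩
  · rw [if_neg ha, if_neg (mt (hσ.1 a).1 ha)]

lemma T_pat (i : Fin 2024) : T m (pat i) = (-468 : ℤ) • m 9 3 9 3 := by
  obtain ⟨R, hR, hW⟩ := WR_eq ⟨i.val / 253, by omega⟩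
  have := T_perm m (pres_inv (pres_rho (i.val % 253 / 23) (i.val % 23)))
    (WR ⟨i.val / 253, by omega⟩)
  show T m (fun j => WR ⟨i.val / 253, by omega⟩ _) = _
  rw [this, ← rep_sum m hR]
  unfold T
  simp only [hW]

/-- The pairs whose first word has ternary weight 9. -/
lemma core_nine : ∑ a, (if InC a then (if n0 a = 9 then F m a else 0) else 0) =
    (-947232 : ℤ) • m 9 3 9 3 := by
  have : ∀ a, (if InC a then (if n0 a = 9 then F m a else 0) else 0) =
      ∑ i, if InC a then (if ∀ j, isU (a j) = pat i j then F m a else 0) else 0 := by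
    intro a
    by_cases ha : InC a
    · simp only [if_pos ha]; exact (pat_count ha _).symm
    · simp only [if_neg ha, Finset.sum_const_zero]
  simp only [this]
  rw [Finset.sum_comm]
  refine (Finset.sum_congr rfl fun i _ => T_pat m i).trans ?_
  rw [Finset.sum_const, Finset.card_univ, Fintype.card_fin, ← natCast_zsmul, smul_smul]
  norm_num
end

/-! ### Pairs of words of weight at least 12 -/

/-- Collects the combinations of the given rows with coefficients `1, 2` which have no entry
divisible by 3. -/
def collect : List ℕ → ℕ → List ℕ → List ℕ
  | [], c, acc => bif Nat.beq (cnt 3 c 24) 24 then c :: acc else acc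
  | r :: t, c, acc => collect t (Nat.add c r) (collect t (Nat.add c (Nat.mul 2 r)) acc)

/-- The full weight words of the ternary code, packed. -/
def fullWords : List ℕ := collect (genRows.map packL) 0 []

/-- The sum of the products of the entries over the coordinates where `b` is divisible by 3. -/
def dotX (a b : ℕ) : ℕ → ℕ
  | 0 => 0
  | j + 1 => Nat.add (bif Nat.beq (Nat.mod (ent b j) 3) 0 then Nat.mul (ent a j) (ent b j) else 0)
      (dotX a b j)

/-- The sum and the difference of `p` and `q` are not the ternary reductions of two disjoint
nonzero codewords modulo 9. -/
def pairOK (p q : ℕ) : Bool :=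
  bif Nat.beq (cnt 3 (Nat.add p q) 24) 0 then true else
  bif Nat.beq (cnt 3 (Nat.add p (Nat.mul 8 q)) 24) 0 then true else
  bif Nat.beq (Nat.mod (dotX (Nat.add p q) (Nat.add p (Nat.mul 8 q)) 24) 9) 0 then false else true

set_option maxRecDepth 1000000 in
lemma full_check : (fullWords.all fun p => fullWords.all fun q => pairOK p q) = true := by
  decide +kernel

lemma collect_mono : ∀ (l : List ℕ) (c : ℕ) (acc : List ℕ) (x : ℕ), x ∈ acc → x ∈ collect l c acc
  | [], c, acc, x, h => by
    rw [collect]; cases Nat.beq (cnt 3 c 24) 24 <;> simp [h]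
  | r :: t, c, acc, x, h => by
    rw [collect]; exact collect_mono _ _ _ _ (collect_mono _ _ _ _ h)

lemma collect_mem (N : ℕ) (n : ℕ) : ∀ (r : Fin n → ℕ) (c : ℕ) (acc : List ℕ) (d : Fin n → ℕ),
    (∀ i, d i = 1 ∨ d i = 2) → N = c + ∑ i, d i * r i → Nat.beq (cnt 3 N 24) 24 = true →
    N ∈ collect (List.ofFn r) c acc := by
  induction n with
  | zero =>
    intro r c acc d _ hN h
    rw [Finset.univ_eq_empty, Finset.sum_empty, add_zero] at hN
    rw [List.ofFn_zero, collect, ← hN, h, cond_true]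
    exact List.mem_cons_self
  | succ n ih =>
    intro r c acc d hd hN h
    rw [Fin.sum_univ_succ, ← add_assoc] at hN
    rw [List.ofFn_succ, collect]
    rcases hd 0 with h0 | h0
    · rw [h0, one_mul] at hN
      exact ih _ _ _ (fun i => d i.succ) (fun i => hd i.succ) hN h
    · rw [h0] at hN
      exact collect_mono _ _ _ _ (ih _ _ _ (fun i => d i.succ) (fun i => hd i.succ) hN h)

lemma dotX_eq (a b : ℕ) : ∀ n, dotX a b n =
    ∑ j ∈ Finset.range n, if ent b j % 3 = 0 then ent a j * ent b j else 0
  | 0 => rfl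
  | n + 1 => by
    rw [Finset.sum_range_succ, ← dotX_eq a b n, dotX, beq_mod, Nat.add_eq, Nat.add_comm]
    congr 1
    by_cases h : ent b n % 3 = 0 <;> simp [h]

lemma dotX_pk {f g : Fin 24 → ℕ} (hf : ∀ j, f j < 65536) (hg : ∀ j, g j < 65536) :
    ((dotX (pk f) (pk g) 24 : ℕ) : ZMod 9) =
      ∑ j, if isU (c9 g j) = true then 0 else c9 f j * c9 g j := by
  rw [dotX_eq, Finset.sum_range, Nat.cast_sum]
  refine Finset.sum_congr rfl fun j _ => ?_
  rw [ent_pk f hf, ent_pk g hg]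
  unfold c9
  rw [isU_cast]
  by_cases h : g j % 3 = 0 <;> simp [h]

/-- A codeword modulo 9 without nonunit entries is congruent modulo 3 to one of `fullWords`. -/
lemma full_lift {h : Fin 24 → ZMod 9} (hC : InC h) (hu : ∀ j, isU (h j) = true) :
    ∃ f : Fin 24 → ℕ, (∀ j, f j ≤ 1920) ∧ InC (c9 f) ∧ (∀ j, red3 (c9 f j) = red3 (h j)) ∧
      pk f ∈ fullWords := by
  set d : Fin 12 → ℕ := fun i => (h (fst12 i)).val % 3 with hd
  have hd2 : ∀ i, d i = 1 ∨ d i = 2 := fun i => by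
    have h1 := Nat.mod_lt (h (fst12 i)).val (show 3 > 0 by norm_num)
    have h2 := hu (fst12 i)
    simp only [isU, bne_iff_ne, ne_eq] at h2
    simp only [hd]; omega
  set f : Fin 24 → ℕ := fun j => ∑ i, d i * mat i j with hf
  have hle : ∀ j, f j ≤ 1920 := by
    intro j
    have : f j ≤ ∑ _i : Fin 12, 2 * 80 := Finset.sum_le_sum fun i _ =>
      Nat.mul_le_mul (by have := hd2 i; omega) (Nat.le_of_lt_succ (mat_lt i j))
    simpa using this
  have hlin : c9 f = lin mat (fun i => (d i : ZMod 9)) := by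
    funext j
    simp only [c9, hf, lin, Nat.cast_sum, Nat.cast_mul]
  have hred : ∀ j, red3 (c9 f j) = red3 (h j) := by
    intro j
    have e : ∀ x : ZMod 9, red3 x = red3 ((x.val % 3 : ℕ) : ZMod 9) := by decide +kernel
    rw [congrFun (eq_lin sys1 hC) j]
    simp only [lin, c9, hf, Nat.cast_sum, Nat.cast_mul, map_sum, map_mul, hd]
    exact Finset.sum_congr rfl fun i _ => by rw [e (h (fst12 i))]
  refine ⟨f, hle, ?_, hred, ?_⟩
  · rw [hlin]; exact inC_lin sys1 _
  · have hpk : 0 + ∑ i, d i * pk (mat i) = pk f := by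
      rw [zero_add, hf, pk_sum]
      simp only [pk_mul]
    rw [← hpk, fullWords, rows1]
    refine collect_mem _ _ _ _ _ d hd2 rfl ?_
    rw [Nat.beq_eq, hpk, cnt3_pk (fun j => lt_of_le_of_lt (hle j) (by norm_num)), n0]
    have : ∀ j, isU (c9 f j) = true := by
      intro j; rw [isU_red3, hred, ← isU_red3, hu]
    simp [this]

/-- Two codewords of ternary weight at least 12 cannot have disjoint supports. If they had, `a`
and `b` would have complementary supports, and `a ± b` would have full weight. -/
lemma not_dis {a b : Fin 24 → ZMod 9} (ha : InC a) (hb : InC b) (h : dis a b)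
    (ha12 : 12 ≤ n0 a) (hb12 : 12 ≤ n0 b) : False := by
  have u0 : isU 0 = false := by decide +kernel
  have hcomp : ∀ j, isU (a j) = !isU (b j) := by
    have hle : ∀ j ∈ Finset.univ, ((if isU (a j) = true then 1 else 0) +
        (if isU (b j) = true then 1 else 0) : ℕ) ≤ (1 : ℕ) := by
      intro j _
      rcases h j with h | h <;> rw [h, u0] <;> simp <;> split_ifs <;> simp
    have hsum : ∑ j, ((if isU (a j) = true then 1 else 0) +
        (if isU (b j) = true then 1 else 0) : ℕ) = ∑ _j : Fin 24, 1 := by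
      apply le_antisymm (Finset.sum_le_sum hle)
      rw [Finset.sum_add_distrib, ← Finset.card_filter, ← Finset.card_filter]
      simp only [n0] at ha12 hb12
      simp
      omega
    intro j
    have := (Finset.sum_eq_sum_iff_of_le hle).1 hsum j (Finset.mem_univ j)
    cases h1 : isU (a j) <;> cases h2 : isU (b j) <;> simp [h1, h2] at this ⊢
  have haU : ∀ j, isU (b j) = true → a j = 0 := by
    intro j hj
    rcases h j with h | h
    · exact h
    · rw [h, u0] at hj; simp at hj
  have hbU : ∀ j, isU (b j) = false → b j = 0 := by
    intro j hj
    rcases h j with h | h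
    · have := hcomp j
      rw [h, hj, u0] at this; simp at this
    · exact h
  have hp : ∀ j, isU (a j + b j) = true ∧ isU (a j + 8 * b j) = true := by
    intro j
    cases hj : isU (b j)
    · have := hcomp j
      rw [hbU j hj]
      simp [this, hj]
    · have e : ∀ x : ZMod 9, isU x = true → isU (8 * x) = true := by decide +kernel
      rw [haU j hj, zero_add, zero_add]
      exact ⟨hj, e _ hj⟩
  obtain ⟨f, hf, hfC, hfr, hfm⟩ := full_lift (inC_add ha hb) fun j => (hp j).1
  obtain ⟨g, hg, hgC, hgr, hgm⟩ := full_lift (inC_add ha (inC_smul 8 hb)) fun j => (hp j).2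
  have hchk := full_check
  rw [List.all_eq_true] at hchk
  have hchk := hchk _ hfm
  rw [List.all_eq_true] at hchk
  have hchk := hchk _ hgm
  set A : Fin 24 → ℕ := fun j => f j + g j with hA
  set B : Fin 24 → ℕ := fun j => f j + 8 * g j with hB
  have hAlt : ∀ j, A j < 65536 := fun j => by
    have := hf j; have := hg j; simp only [hA]; omega
  have hBlt : ∀ j, B j < 65536 := fun j => by
    have := hf j; have := hg j; simp only [hB]; omega
  have hpA : Nat.add (pk f) (pk g) = pk A := (pk_add f g).symm
  have hpB : Nat.add (pk f) (Nat.mul 8 (pk g)) = pk B := by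
    show pk f + 8 * pk g = _
    rw [hB, pk_add, pk_mul]
  have hAr : ∀ j, red3 (c9 A j) = red3 (2 * a j) := by
    intro j
    have e : ∀ x y : ZMod 9, red3 (x + y) + red3 (x + 8 * y) = red3 (2 * x) := by decide +kernel
    rw [← e (a j) (b j), ← hfr, ← hgr]
    simp [c9, hA]
  have hBr : ∀ j, red3 (c9 B j) = red3 (2 * b j) := by
    intro j
    have e : ∀ x y : ZMod 9, red3 (x + y) + 8 * red3 (x + 8 * y) = red3 (2 * y) := by
      decide +kernel
    rw [← e (a j) (b j), ← hfr, ← hgr]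
    have e8 : red3 8 = 8 := by decide +kernel
    simp [c9, hB, e8]
  have e2 : ∀ x : ZMod 9, isU (2 * x) = isU x := by decide +kernel
  have hAU : ∀ j, isU (c9 A j) = isU (a j) := fun j => by
    rw [isU_red3, hAr, ← isU_red3, e2]
  have hBU : ∀ j, isU (c9 B j) = isU (b j) := fun j => by
    rw [isU_red3, hBr, ← isU_red3, e2]
  have hnA : cnt 3 (pk A) 24 = n0 a := by
    rw [cnt3_pk hAlt]; simp only [n0, hAU]
  have hnB : cnt 3 (pk B) 24 = n0 b := by
    rw [cnt3_pk hBlt]; simp only [n0, hBU]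
  have hBC : InC (c9 B) := by
    have := inC_add hfC (inC_smul 8 hgC)
    have e : c9 B = fun j => c9 f j + 8 * c9 g j := by funext j; simp [c9, hB]
    rw [e]; exact this
  have hX : ((dotX (pk A) (pk B) 24 : ℕ) : ZMod 9) = 0 := by
    rw [dotX_pk hAlt hBlt]
    have hd1 := dot_zero h81_9 (inC_smul 2 ha) hBC
    refine Eq.trans ?_ hd1
    refine Finset.sum_congr rfl fun j _ => ?_
    rw [hBU]
    cases hj : isU (b j)
    · -- here `c9 B j` is divisible by 3 and the other factors agree modulo 3
      have e : ∀ x y z : ZMod 9, isU z = false → red3 x = red3 y → x * z = y * z := by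
        decide +kernel
      rw [if_neg (by simp)]
      exact e _ _ _ (by rw [hBU, hj]) (hAr j)
    · rw [if_pos rfl, haU j hj]; ring
  rw [pairOK, hpA, hpB, hnA, hnB] at hchk
  rw [cast9_eq_zero] at hX
  have e1 : Nat.beq (n0 a) 0 = false := by
    rw [← Bool.not_eq_true, Nat.beq_eq]; omega
  have e3 : Nat.beq (n0 b) 0 = false := by
    rw [← Bool.not_eq_true, Nat.beq_eq]; omega
  have e4 : Nat.beq (Nat.mod (dotX (pk A) (pk B) 24) 9) 0 = true := by
    rw [beq_mod]; exact decide_eq_true hX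
  rw [e1, e3, e4] at hchk
  simp at hchk

lemma unitV_iff (a : Fin 24 → ZMod 9) : unitV a ↔ n0 a ≠ 0 := by
  unfold unitV n0
  rw [Finset.card_ne_zero, Finset.filter_nonempty_iff]
  simp

/-- The total contribution of all pairs of codewords having unit entries. -/
lemma core {N : Type} [AddCommGroup N] (m : ℕ → ℕ → ℕ → ℕ → N) :
    ∑ a, (if InC a then (if unitV a then F m a else 0) else 0) = (-947232 : ℤ) • m 9 3 9 3 := by
  have h1 : ∀ a, (if InC a then (if unitV a then F m a else 0) else 0) =
      (if InC a then (if n0 a = 9 then F m a else 0) else 0) +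
      (if InC a then (if unitV a ∧ n0 a ≠ 9 then F m a else 0) else 0) := by
    intro a
    by_cases ha : InC a
    · simp only [if_pos ha, unitV_iff]
      by_cases h9 : n0 a = 9
      · simp [h9]
      · simp [h9]
    · simp [ha]
  rw [Finset.sum_congr rfl fun a _ => h1 a, Finset.sum_add_distrib, core_nine]
  -- the remaining pairs have a second word of weight 9, and the roles are exchanged
  set m' : ℕ → ℕ → ℕ → ℕ → N := fun p q r s => if r ≠ 9 then m r s p q else 0 with hm'
  have h2 : ∀ a b, (if InC a then (if unitV a ∧ n0 a ≠ 9 then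
      (if InC b then (if unitV b then E m (lift81 a) b else 0) else 0) else 0) else 0) =
      (if InC b then (if n0 b = 9 then
        (if InC a then (if unitV a then E m' (lift81 b) a else 0) else 0) else 0) else 0) := by
    intro a b
    by_cases ha : InC a
    swap
    · simp [ha]
    by_cases hb : InC b
    swap
    · simp [hb]
    simp only [if_pos ha, if_pos hb]
    by_cases hua : unitV a
    swap
    · simp [hua]
    have hE : E m' (lift81 b) a = if n0 a ≠ 9 then E m (lift81 a) b else 0 := by
      have := E_swap m (inC_lift81 a) (inC_lift81 b)
      rw [redV_lift81 ha, redV_lift81 hb] at this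
      rw [this]
      unfold E
      by_cases h9 : n0 a = 9 <;> simp [hm', h9]
    rw [hE]
    by_cases h9 : n0 b = 9
    · have hub : unitV b := by rw [unitV_iff]; omega
      simp [hua, hub, h9]
    · by_cases hub : unitV b
      swap
      · simp [hub, h9]
      by_cases h9a : n0 a = 9
      · simp [h9a, h9]
      rw [unitV_iff] at hua hub
      have hz : E m (lift81 a) b = 0 := by
        unfold E
        rw [redV_lift81 ha, if_neg]
        intro hd
        rcases weights ha with h | h | h
        · exact hua h
        · rcases weights hb with h' | h' | h'
          · exact hub h'
          · exact not_dis ha hb hd h h'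
          · exact h9 h'.1
        · exact h9a h.1
      simp [hz, h9]
  have h3 : ∑ a, (if InC a then (if unitV a ∧ n0 a ≠ 9 then F m a else 0) else 0) =
      ∑ b, (if InC b then (if n0 b = 9 then F m' b else 0) else 0) := by
    have e1 : ∀ a, (if InC a then (if unitV a ∧ n0 a ≠ 9 then F m a else 0) else 0) =
        ∑ b, (if InC a then (if unitV a ∧ n0 a ≠ 9 then
      (if InC b then (if unitV b then E m (lift81 a) b else 0) else 0) else 0) else 0) := by
      intro a
      by_cases ha : InC a <;> by_cases h : unitV a ∧ n0 a ≠ 9 <;> simp only [ha, h, if_true,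
        if_false, F, Finset.sum_const_zero] <;> simp
    have e2 : ∀ b, (if InC b then (if n0 b = 9 then F m' b else 0) else 0) =
        ∑ a, (if InC b then (if n0 b = 9 then
        (if InC a then (if unitV a then E m' (lift81 b) a else 0) else 0) else 0) else 0) := by
      intro b
      by_cases hb : InC b <;> by_cases h : n0 b = 9 <;> simp only [hb, h, if_true,
        if_false, F, Finset.sum_const_zero]
    rw [Finset.sum_congr rfl fun a _ => e1 a, Finset.sum_congr rfl fun a _ => e2 a,
      Finset.sum_comm]
    exact Finset.sum_congr rfl fun b _ => Finset.sum_congr rfl fun a _ => h2 a b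
  rw [h3, core_nine]
  simp [hm']

/-! ### Poisson summation -/

/-- The value substituted for a coordinate `x` modulo 81. -/
def val (k : Type) [CommRing k] (x : ZMod 81) : MvPolynomial (Fin 5) k :=
  if isU (red x) then X 0 else if red x ≠ 0 then X 1 else
  if isU (qd x) then X 4 - X 3 else if qd x ≠ 0 then X 4 + 2 * X 3 - 3 * X 2 else
  X 4 + 2 * X 3 + 6 * X 2

/-- The variable attached to a pair `(x, s)` one of whose members is zero. -/
def H (k : Type) [CommRing k] (x s : ZMod 9) : MvPolynomial (Fin 5) k :=
  if isU x then X 0 else if x ≠ 0 then X 1 else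
  if isU s then X 2 else if s ≠ 0 then X 3 else X 4

/-- The monomial with prescribed exponents of the first four variables, homogeneous of
degree 24. -/
def mono (k : Type) [CommRing k] (a b c d : ℕ) : MvPolynomial (Fin 5) k :=
  X 0 ^ a * X 1 ^ b * X 2 ^ c * X 3 ^ d * X 4 ^ (24 - a - b - c - d)

lemma prod_H (k : Type) [CommRing k] {a b : Fin 24 → ZMod 9} (h : dis a b) :
    ∏ j, H k (a j) (b j) = mono k (n0 a) (n1 a) (n0 b) (n1 b) := by
  have hz : 24 - n0 a - n1 a - n0 b - n1 b =
      (Finset.univ.filter fun j => a j = 0 ∧ b j = 0).card := by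
    have : n0 a + n1 a + n0 b + n1 b +
        (Finset.univ.filter fun j => a j = 0 ∧ b j = 0).card = 24 := by
      unfold n0 n1
      simp only [Finset.card_filter]
      rw [← Finset.sum_add_distrib, ← Finset.sum_add_distrib, ← Finset.sum_add_distrib,
        ← Finset.sum_add_distrib]
      have e : ∀ j, ((((if isU (a j) = true then 1 else 0) +
          (if a j ≠ 0 ∧ ¬ isU (a j) = true then 1 else 0)) +
          (if isU (b j) = true then 1 else 0)) +
          (if b j ≠ 0 ∧ ¬ isU (b j) = true then 1 else 0)) +
          (if a j = 0 ∧ b j = 0 then 1 else 0) = 1 := by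
        intro j
        have e0 : isU 0 = false := by decide +kernel
        rcases h j with h | h <;> rw [h]
        · by_cases h1 : isU (b j) <;> by_cases h2 : b j = 0 <;> simp_all
        · by_cases h1 : isU (a j) <;> by_cases h2 : a j = 0 <;> simp_all
      rw [Finset.sum_congr rfl fun j _ => e j]; simp
    omega
  rw [mono, hz]
  unfold n0 n1
  simp only [Finset.card_eq_sum_ones, Finset.sum_filter, ← Finset.prod_pow_eq_pow_sum]
  rw [← Finset.prod_mul_distrib, ← Finset.prod_mul_distrib, ← Finset.prod_mul_distrib,
    ← Finset.prod_mul_distrib]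
  refine Finset.prod_congr rfl fun j _ => ?_
  have e0 : isU 0 = false := by decide +kernel
  unfold H
  rcases h j with h | h <;> rw [h]
  · by_cases h1 : isU (b j) <;> by_cases h2 : b j = 0 <;> simp_all
  · by_cases h1 : isU (a j) <;> by_cases h2 : a j = 0 <;> simp_all

/-- The standard primitive additive character of `ℤ/9`, with values in the coefficient field of
the polynomial ring. -/
def chi (t : ZMod 9) : MvPolynomial (Fin 5) ℂ := C (ZMod.stdAddChar t)

lemma chi_add (s t : ZMod 9) : chi (s + t) = chi s * chi t := by
  simp [chi, AddChar.map_add_eq_mul]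

lemma chi_zero : chi 0 = 1 := by simp [chi]

lemma chi_sum {ι : Type} (s : Finset ι) (f : ι → ZMod 9) :
    chi (∑ i ∈ s, f i) = ∏ i ∈ s, chi (f i) := by
  induction s using Finset.induction_on with
  | empty => simp [chi_zero]
  | insert i s hi ih => rw [Finset.sum_insert hi, Finset.prod_insert hi, chi_add, ih]

lemma chi_orth (y : ZMod 9) : ∑ t, chi (t * y) = if y = 0 then 9 else 0 := by
  have := AddChar.sum_mulShift y (ZMod.isPrimitive_stdAddChar 9)
  unfold chi
  rw [← map_sum, this]
  split_ifs
  · exact map_ofNat C 9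
  · simp

/-- The sum of the character over the multiples of 3. -/
lemma chi_three (y : ZMod 9) : chi 0 + chi (3 * y) + chi (6 * y) = if isU y then 0 else 3 := by
  have h : ∀ y : ZMod 9, (isU y = false → 3 * y = 0 ∧ 6 * y = 0) ∧
      (isU y = true → 1 * y ≠ 0 ∧ 3 * y ≠ 0 ∧ 6 * y = 3 * y + 3 * y ∧
      3 * y + 3 * y + 3 * y = 0) := by
    decide +kernel
  cases hy : isU y
  · obtain ⟨h1, h2⟩ := (h y).1 hy
    rw [h1, h2, chi_zero]; norm_num
  · obtain ⟨-, h1, h2, h3⟩ := (h y).2 hy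
    have e1 : chi (3 * y) ^ 3 = 1 := by
      rw [pow_succ, pow_two, ← chi_add, ← chi_add, h3, chi_zero]
    have e2 : chi (3 * y) ≠ 1 := by
      intro hh
      apply h1
      have : (ZMod.stdAddChar (3 * y) : ℂ) = ZMod.stdAddChar (0 : ZMod 9) := by
        apply C_injective (Fin 5) ℂ
        rw [← chi_zero] at hh
        exact hh
      exact ZMod.injective_stdAddChar this
    rw [h2, chi_zero, chi_add, if_pos rfl]
    have : (chi (3 * y) - 1) * (1 + chi (3 * y) + chi (3 * y) * chi (3 * y)) = 0 := by
      linear_combination e1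
    rcases mul_eq_zero.1 this with h | h
    · exact absurd (sub_eq_zero.1 h) e2
    · exact h

/-- The one-coordinate Fourier transform: the substituted values are character sums. -/
lemma val_eq (x : ZMod 81) : val ℂ x =
    ∑ s : ZMod 9, if red x = 0 ∨ s = 0 then chi (s * qd x) * H ℂ (red x) s else 0 := by
  by_cases hx : red x = 0
  · have e0 : isU 0 = false := by decide +kernel
    have e3 : isU 3 = false := by decide +kernel
    have e6 : isU 6 = false := by decide +kernel
    have n3 : (3 : ZMod 9) ≠ 0 := by decide +kernel
    have n6 : (6 : ZMod 9) ≠ 0 := by decide +kernel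
    have e1 : isU 1 = true ∧ isU 2 = true ∧ isU 4 = true ∧ isU 5 = true ∧ isU 7 = true ∧
      isU 8 = true := by decide +kernel
    obtain ⟨u1, u2, u4, u5, u7, u8⟩ := e1
    have ho := chi_orth (qd x)
    have ht := chi_three (qd x)
    rw [sum_zmod9] at ho ⊢
    simp only [hx, true_or, if_true, H, e0, e3, e6, u1, u2, u4, u5, u7, u8, n3, n6, ne_eq,
      not_true, not_false_iff, if_false, Bool.false_eq_true]
    simp only [val, hx, e0, ne_eq, not_true, if_false, Bool.false_eq_true]
    rw [chi_zero] at ht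
    rw [zero_mul, chi_zero] at ho ⊢
    cases hq : isU (qd x)
    · by_cases hq0 : qd x = 0
      · simp only [hq0, mul_zero, chi_zero, not_true, if_false, Bool.false_eq_true]; ring
      · simp only [hq, hq0, not_false_iff, if_true, if_false, Bool.false_eq_true] at ho ht ⊢
        linear_combination (X 2 - X 3) * ht - X 2 * ho
    · have hq0 : qd x ≠ 0 := by intro h; rw [h, e0] at hq; cases hq
      simp only [hq, hq0, if_true, if_false] at ho ht ⊢
      linear_combination (X 2 - X 3) * ht - X 2 * ho
  · have e : ∀ s : ZMod 9, (red x = 0 ∨ s = 0) ↔ s = 0 := fun s => by simp [hx]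
    simp only [e]
    rw [Finset.sum_ite_eq', if_pos (Finset.mem_univ _), zero_mul, chi_zero, one_mul]
    simp only [H, val, ne_eq, hx, not_false_iff, if_true]

lemma prod_val (c : Fin 24 → ZMod 81) : ∏ j, val ℂ (c j) =
    ∑ b, if dis (redV c) b then chi (phi c b) *
      mono ℂ (n0 (redV c)) (n1 (redV c)) (n0 b) (n1 b) else 0 := by
  simp only [val_eq]
  rw [Finset.prod_univ_sum, Fintype.piFinset_univ]
  refine Finset.sum_congr rfl fun b _ => ?_
  by_cases h : dis (redV c) b
  · rw [if_pos h, ← prod_H ℂ h, phi, chi_sum, ← Finset.prod_mul_distrib]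
    refine Finset.prod_congr rfl fun j _ => ?_
    rw [if_pos]
    · rfl
    · exact h j
  · rw [if_neg h]
    unfold dis at h
    push Not at h
    obtain ⟨j, hj⟩ := h
    refine Finset.prod_eq_zero (Finset.mem_univ j) ?_
    rw [if_neg]
    rintro (h | h)
    · exact hj.1 h
    · exact hj.2 h

set_option linter.constructorNameAsVariable false in
/-- A sum over the code modulo 81, fibred over the code modulo 9. -/
lemma sum81 {N : Type} [AddCommMonoid N] (G : (Fin 24 → ZMod 81) → N) :
    ∑ c, (if InC c then G c else 0) =
    ∑ a, (if InC a then ∑ d, (if InC d then G (fun j => lift81 a j + n9 (d j)) else 0) else 0) := by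
  rw [← Finset.sum_fiberwise Finset.univ redV]
  refine Finset.sum_congr rfl fun a _ => ?_
  by_cases ha : InC a
  · rw [if_pos ha, ← Finset.sum_filter, ← Finset.sum_filter, Finset.filter_filter]
    have hr := redV_lift81 ha
    have hr' : ∀ j, red (lift81 a j) = a j := fun j => congrFun hr j
    have hq0 : ∀ t : ZMod 9, qd (n9 t) = t := by decide +kernel
    have hinv : ∀ c : Fin 24 → ZMod 81, redV c = a → ∀ j, n9 (qd (c j - lift81 a j)) =
        c j - lift81 a j := by
      intro c hc j
      refine (sub_eq_n9 _ ?_).symm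
      rw [map_sub, hr', ← hc]; simp [redV]
    refine Finset.sum_nbij' (fun c j => qd (c j - lift81 a j))
      (fun d j => lift81 a j + n9 (d j)) ?_ ?_ ?_ ?_ ?_
    · intro c hc
      simp only [Finset.mem_filter, Finset.mem_univ, true_and] at hc ⊢
      intro i
      apply n9_inj
      rw [map_sum]
      simp only [n9_natMul, hinv c hc.1, mul_sub, Finset.sum_sub_distrib]
      rw [hc.2 i, inC_lift81 a i, sub_zero]
    · intro d hd
      simp only [Finset.mem_filter, Finset.mem_univ, true_and] at hd ⊢
      constructor
      · funext j; simp [redV, hr', red_n9]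
      · intro i
        simp only [mul_add, Finset.sum_add_distrib, inC_lift81 a i, ← n9_natMul]
        rw [← map_sum, hd i, map_zero, add_zero]
    · intro c hc
      simp only [Finset.mem_filter, Finset.mem_univ, true_and] at hc
      funext j; rw [hinv c hc.1]; ring
    · intro d hd
      funext j; rw [add_sub_cancel_left, hq0]
    · intro c hc
      simp only [Finset.mem_filter, Finset.mem_univ, true_and] at hc
      congr 1
      funext j; rw [hinv c hc.1]; ring
  · rw [if_neg ha]
    refine Finset.sum_eq_zero fun c hc => ?_
    rw [if_neg]
    intro h
    simp only [Finset.mem_filter, Finset.mem_univ, true_and] at hc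
    exact ha (hc ▸ inC_redV h)

/-- Orthogonality: the character sum over the code detects its dual, which is the code. -/
lemma sum_chi (b : Fin 24 → ZMod 9) :
    ∑ d, (if InC d then chi (∑ j, b j * d j) else 0) = if InC b then 9 ^ 12 else 0 := by
  have h1 : ∑ d, (if InC d then chi (∑ j, b j * d j) else 0) =
      ∑ u : Fin 12 → ZMod 9, chi (∑ j, b j * comb u j) := by
    rw [← Finset.sum_filter]
    refine Finset.sum_nbij' (fun d i => d (fst12 i)) comb (by simp) ?_ ?_ ?_ ?_
    · intro u _; simp [inC_comb h81_9]
    · intro d hd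
      simp only [Finset.mem_filter, Finset.mem_univ, true_and] at hd
      exact (eq_comb h81_9 hd).symm
    · intro u _; funext i; exact comb_fst u i
    · intro d hd
      simp only [Finset.mem_filter, Finset.mem_univ, true_and] at hd
      rw [← eq_comb h81_9 hd]
  rw [h1]
  have h2 : ∀ u : Fin 12 → ZMod 9, chi (∑ j, b j * comb u j) =
      ∏ i, chi (u i * ∑ j, (mat i j : ZMod 9) * b j) := by
    intro u
    rw [← chi_sum]
    refine congrArg chi ?_
    simp only [comb, Finset.mul_sum]
    rw [Finset.sum_comm]
    exact Finset.sum_congr rfl fun i _ => Finset.sum_congr rfl fun j _ => by ring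
  simp only [h2]
  have h3 := Finset.prod_univ_sum (fun _ : Fin 12 => (Finset.univ : Finset (ZMod 9)))
    (fun i t => chi (t * ∑ j, (mat i j : ZMod 9) * b j))
  rw [Fintype.piFinset_univ] at h3
  rw [← h3]
  simp only [chi_orth]
  by_cases hb : InC b
  · rw [if_pos hb]
    have : ∀ i, (∑ j, (mat i j : ZMod 9) * b j) = 0 := hb
    simp [this]
  · rw [if_neg hb]
    have hb' := hb
    unfold InC at hb'
    push Not at hb'
    obtain ⟨i, hi⟩ := hb'
    exact Finset.prod_eq_zero (Finset.mem_univ i) (if_neg hi)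

lemma sum_units (t : ZMod 9) : ∑ l : ZMod 9, (if isU l then chi (l * t) else 0) =
    (3 * ww t : ℤ) := by
  have e : isU 0 = false ∧ isU 3 = false ∧ isU 6 = false ∧ isU 1 = true ∧ isU 2 = true ∧
    isU 4 = true ∧ isU 5 = true ∧ isU 7 = true ∧ isU 8 = true := by decide +kernel
  obtain ⟨e0, e3, e6, u1, u2, u4, u5, u7, u8⟩ := e
  have ho := chi_orth t
  have ht := chi_three t
  rw [sum_zmod9] at ho ⊢
  simp only [e0, e3, e6, u1, u2, u4, u5, u7, u8, if_true, if_false, Bool.false_eq_true]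
  rw [zero_mul] at ho
  unfold ww
  by_cases h0 : t = 0
  · subst h0
    simp only [mul_zero, chi_zero, if_true]; norm_num
  · cases hu : isU t
    · simp only [h0, hu, if_false, Bool.false_eq_true] at ho ht ⊢
      push_cast
      linear_combination ho - ht
    · simp only [h0, hu, if_false, if_true] at ho ht ⊢
      push_cast
      linear_combination ho - ht

/-- Averaging over the units replaces the character by the integer weight `ww`. -/
lemma average (c : Fin 24 → ZMod 81) :
    2 * ∑ b, (if InC b then (if dis (redV c) b then chi (phi c b) *
      mono ℂ (n0 (redV c)) (n1 (redV c)) (n0 b) (n1 b) else 0) else 0) =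
    ∑ b, if InC b then E (mono ℂ) c b else 0 := by
  set G : (Fin 24 → ZMod 9) → MvPolynomial (Fin 5) ℂ := fun b =>
    if InC b then (if dis (redV c) b then chi (phi c b) *
      mono ℂ (n0 (redV c)) (n1 (redV c)) (n0 b) (n1 b) else 0) else 0 with hG
  have hinv : ∀ l : ZMod 9, isU l = true → ∃ l' : ZMod 9, l * l' = 1 := by decide +kernel
  have h1 : ∀ l : ZMod 9, isU l = true →
      ∑ b : Fin 24 → ZMod 9, G (fun j => l * b j) = ∑ b, G b := by
    intro l hl
    obtain ⟨l', hl'⟩ := hinv l hl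
    refine Finset.sum_nbij' (fun b j => l * b j) (fun b j => l' * b j) (by simp) (by simp)
      ?_ ?_ (fun _ _ => rfl)
    · intro b _; funext j
      rw [← mul_assoc, mul_comm l' l, hl', one_mul]
    · intro b _; funext j
      rw [← mul_assoc, hl', one_mul]
  have h2 : ∑ l : ZMod 9, (if isU l then ∑ b : Fin 24 → ZMod 9, G (fun j => l * b j) else 0) =
      6 * ∑ b, G b := by
    rw [Finset.sum_congr rfl (fun l _ =>
        show (if isU l = true then ∑ b : Fin 24 → ZMod 9, G (fun j => l * b j) else 0)
      = (if isU l = true then 1 else 0) * ∑ b, G b by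
        by_cases hl : isU l = true
        · rw [if_pos hl, if_pos hl, h1 l hl, one_mul]
        · rw [if_neg hl, if_neg hl, zero_mul])]
    rw [← Finset.sum_mul]
    congr 1
    have : (Finset.univ.filter fun l : ZMod 9 => isU l = true).card = 6 := by decide +kernel
    rw [Finset.sum_boole, this]; norm_num
  have h3 : ∑ l : ZMod 9, (if isU l then ∑ b : Fin 24 → ZMod 9, G (fun j => l * b j) else 0) =
      3 * ∑ b, if InC b then E (mono ℂ) c b else 0 := by
    have e : ∀ l : ZMod 9, (if isU l then ∑ b : Fin 24 → ZMod 9, G (fun j => l * b j) else 0) =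
        ∑ b, if InC b then (if dis (redV c) b then (if isU l then chi (l * phi c b) else 0) *
          mono ℂ (n0 (redV c)) (n1 (redV c)) (n0 b) (n1 b) else 0) else 0 := by
      intro l
      by_cases hl : isU l = true
      · rw [if_pos hl]
        refine Finset.sum_congr rfl fun b _ => ?_
        obtain ⟨l', hl'⟩ := hinv l hl
        have i1 : InC (fun j => l * b j) ↔ InC b := by
          refine ⟨fun h => ?_, inC_smul l⟩
          have := inC_smul l' h
          simp only [← mul_assoc, mul_comm l' l, hl', one_mul] at this
          exact this
        have i2 : dis (redV c) (fun j => l * b j) ↔ dis (redV c) b := by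
          unfold dis; simp only [U_mul_eq_zero _ _ hl]
        have i3 : phi c (fun j => l * b j) = l * phi c b := by
          unfold phi
          rw [Finset.mul_sum]
          exact Finset.sum_congr rfl fun j _ => by ring
        simp only [hG, i1, i2, i3, n0_smul _ hl, n1_smul _ hl, hl, if_true]
      · simp [hl]
    simp only [e]
    rw [Finset.sum_comm, Finset.mul_sum]
    refine Finset.sum_congr rfl fun b _ => ?_
    by_cases hb : InC b
    · simp only [hb, if_true]
      unfold E
      by_cases hd : dis (redV c) b
      · simp only [hd, if_true]
        rw [← Finset.sum_mul, sum_units]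
        rw [zsmul_eq_mul]
        push_cast
        ring
      · simp [hd]
    · simp [hb]
  have h4 : (3 : MvPolynomial (Fin 5) ℂ) ≠ 0 := by
    have : (3 : MvPolynomial (Fin 5) ℂ) = C 3 := (map_ofNat C 3).symm
    rw [this, Ne, C_eq_zero]; norm_num
  apply mul_left_cancel₀ h4
  rw [← h3, h2]; ring

/-- The transformed weight enumerator over the complex numbers. -/
lemma poisson_complex : 2 * ∑ c, (if InC c then ∏ j, val ℂ (c j) else 0) =
    3 ^ 24 * ∑ a, (if InC a then ∑ b, (if InC b then E (mono ℂ) (lift81 a) b else 0) else 0) := by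
  rw [sum81, Finset.mul_sum, Finset.mul_sum]
  refine Finset.sum_congr rfl fun a _ => ?_
  by_cases ha : InC a
  · rw [if_pos ha, if_pos ha, ← average]
    have hr : ∀ d : Fin 24 → ZMod 9, redV (fun j => lift81 a j + n9 (d j)) = redV (lift81 a) := by
      intro d; funext j; simp [redV, red_n9]
    have hp : ∀ b d : Fin 24 → ZMod 9, phi (fun j => lift81 a j + n9 (d j)) b =
        phi (lift81 a) b + ∑ j, b j * d j := by
      intro b d
      simp only [phi, qd_add_n9, mul_add, Finset.sum_add_distrib]
    simp only [prod_val, hr, hp, chi_add]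
    have e : ∑ d : Fin 24 → ZMod 9, (if InC d then ∑ b, (if dis (redV (lift81 a)) b then
        chi (phi (lift81 a) b) * chi (∑ j, b j * d j) *
        mono ℂ (n0 (redV (lift81 a))) (n1 (redV (lift81 a))) (n0 b) (n1 b) else 0) else 0) =
        9 ^ 12 * ∑ b, (if InC b then (if dis (redV (lift81 a)) b then chi (phi (lift81 a) b) *
      mono ℂ (n0 (redV (lift81 a))) (n1 (redV (lift81 a))) (n0 b) (n1 b) else 0) else 0) := by
      have e1 : ∀ d : Fin 24 → ZMod 9, (if InC d then ∑ b, (if dis (redV (lift81 a)) b then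
        chi (phi (lift81 a) b) * chi (∑ j, b j * d j) *
        mono ℂ (n0 (redV (lift81 a))) (n1 (redV (lift81 a))) (n0 b) (n1 b) else 0) else 0) =
        ∑ b, (if dis (redV (lift81 a)) b then chi (phi (lift81 a) b) *
          mono ℂ (n0 (redV (lift81 a))) (n1 (redV (lift81 a))) (n0 b) (n1 b) else 0) *
          (if InC d then chi (∑ j, b j * d j) else 0) := by
        intro d
        by_cases hd : InC d
        · simp only [hd, if_true]
          refine Finset.sum_congr rfl fun b _ => ?_
          split_ifs
          · ring
          · ring
        · simp [hd]
      simp only [e1]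
      rw [Finset.sum_comm, Finset.mul_sum]
      refine Finset.sum_congr rfl fun b _ => ?_
      rw [← Finset.mul_sum, sum_chi]
      split_ifs <;> ring
    rw [e]
    ring
  · rw [if_neg ha, if_neg ha, mul_zero, mul_zero]

lemma map_val (x : ZMod 81) : map (algebraMap ℚ ℂ) (val ℚ x) = val ℂ x := by
  unfold val; split_ifs <;> simp

lemma map_E (c : Fin 24 → ZMod 81) (b : Fin 24 → ZMod 9) :
    map (algebraMap ℚ ℂ) (E (mono ℚ) c b) = E (mono ℂ) c b := by
  unfold E; split_ifs <;> simp [mono]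

lemma poisson : 2 * ∑ c, (if InC c then ∏ j, val ℚ (c j) else 0) =
    3 ^ 24 * ∑ a, (if InC a then ∑ b, (if InC b then E (mono ℚ) (lift81 a) b else 0) else 0) := by
  apply map_injective (algebraMap ℚ ℂ) (algebraMap ℚ ℂ).injective
  have := poisson_complex
  simp only [map_mul, map_sum, apply_ite (map (algebraMap ℚ ℂ)), map_prod, map_val, map_E,
    map_zero, map_pow, map_ofNat]
  exact this

lemma coeff_divPart (A : MvPolynomial (Fin 5) ℚ) (i j : Fin 5) (e : Fin 5 →₀ ℕ) :
    (divPart A i j).coeff e = if e i ≠ 0 ∧ e j ≠ 0 then A.coeff e else 0 := by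
  unfold divPart
  rw [coeff_sum]
  simp only [coeff_monomial]
  rw [Finset.sum_ite_eq']
  simp only [Finset.mem_filter, mem_support_iff]
  by_cases h : A.coeff e = 0 <;> simp [h]

lemma mono_eq (a b c d : ℕ) : mono ℚ a b c d = monomial (Finsupp.equivFunOnFinite.symm
    ![a, b, c, d, 24 - a - b - c - d]) 1 := by
  rw [monomial_eq, mono, Finsupp.prod_fintype _ _ (by simp)]
  simp [Fin.prod_univ_five]

/-- The terms divisible by `X 0 * X 2` come from the pairs of words with unit entries. -/
lemma divPart_eval : divPart (((3 : ℚ) ^ 24)⁻¹ • ∑ c, (if InC c then ∏ j, val ℚ (c j) else 0)) 0 2 =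
    -(473616 * X 0 ^ 9 * X 1 ^ 3 * X 2 ^ 9 * X 3 ^ 3) := by
  have hA : ((3 : ℚ) ^ 24)⁻¹ • ∑ c, (if InC c then ∏ j, val ℚ (c j) else 0) =
      (2⁻¹ : ℚ) • ∑ a,
        (if InC a then ∑ b, (if InC b then E (mono ℚ) (lift81 a) b else 0) else 0) := by
    have h := congrArg (fun p : MvPolynomial (Fin 5) ℚ => C (2⁻¹ * ((3 : ℚ) ^ 24)⁻¹) * p) poisson
    rw [smul_eq_C_mul, smul_eq_C_mul]
    have h2 : (2 : MvPolynomial (Fin 5) ℚ) = C 2 := (map_ofNat C 2).symm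
    have h3 : (3 : MvPolynomial (Fin 5) ℚ) ^ 24 = C (3 ^ 24) := by
      rw [map_pow, map_ofNat]
    rw [h2, h3, ← mul_assoc, ← mul_assoc, ← C_mul, ← C_mul] at h
    rw [show (2⁻¹ * ((3 : ℚ) ^ 24)⁻¹) * 2 = ((3 : ℚ) ^ 24)⁻¹ by norm_num,
      show (2⁻¹ * ((3 : ℚ) ^ 24)⁻¹) * 3 ^ 24 = 2⁻¹ by norm_num] at h
    exact h
  rw [hA]
  have hR : -(473616 * X 0 ^ 9 * X 1 ^ 3 * X 2 ^ 9 * X 3 ^ 3 : MvPolynomial (Fin 5) ℚ) =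
      (2⁻¹ : ℚ) • ((-947232 : ℤ) • mono ℚ 9 3 9 3) := by
    rw [smul_eq_C_mul, zsmul_eq_mul, mono]
    have : (((-947232 : ℤ) : MvPolynomial (Fin 5) ℚ)) = C (-947232) := by
      rw [← map_intCast (C : ℚ →+* MvPolynomial (Fin 5) ℚ)]; norm_num
    rw [this, ← mul_assoc, ← C_mul]
    have : (473616 : MvPolynomial (Fin 5) ℚ) = C 473616 := (map_ofNat C 473616).symm
    rw [this, show (2⁻¹ * (-947232) : ℚ) = -473616 by norm_num, C_neg]
    norm_num
    ring
  rw [hR, ← core (mono ℚ)]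
  ext e
  rw [coeff_divPart, coeff_smul, coeff_smul]
  by_cases he : e 0 ≠ 0 ∧ e 2 ≠ 0
  · rw [if_pos he]
    refine congrArg (fun t => (2⁻¹ : ℚ) • t) ?_
    rw [coeff_sum, coeff_sum]
    refine Finset.sum_congr rfl fun a _ => ?_
    by_cases ha : InC a
    swap
    · rw [if_neg ha, if_neg ha]
    rw [if_pos ha, if_pos ha]
    have hr := redV_lift81 ha
    have hE : ∀ b, ¬ (unitV a ∧ unitV b) → coeff e (E (mono ℚ) (lift81 a) b) = 0 := by
      intro b hb
      unfold E
      split_ifs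
      · rw [hr, zsmul_eq_mul, mono_eq, ← map_intCast (C : ℚ →+* MvPolynomial (Fin 5) ℚ),
          coeff_C_mul, coeff_monomial, if_neg, mul_zero]
        intro h
        apply hb
        rw [unitV_iff, unitV_iff]
        constructor
        · have := he.1; rw [← h] at this; simpa using this
        · have := he.2; rw [← h] at this; simpa using this
      · rfl
    by_cases hu : unitV a
    · rw [if_pos hu]
      unfold F
      rw [coeff_sum, coeff_sum]
      refine Finset.sum_congr rfl fun b _ => ?_
      by_cases hb : InC b
      · rw [if_pos hb, if_pos hb]
        by_cases hv : unitV b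
        · rw [if_pos hv]
        · rw [if_neg hv, hE b (by simp [hv])]; rfl
      · rw [if_neg hb, if_neg hb]
    · rw [if_neg hu, coeff_sum]
      refine Finset.sum_eq_zero fun b _ => ?_
      split_ifs
      · exact hE b (by simp [hu])
      · rfl
  · rw [if_neg he, core, zsmul_eq_mul, mono_eq, ← map_intCast (C : ℚ →+* MvPolynomial (Fin 5) ℚ),
      coeff_C_mul, coeff_monomial, if_neg, mul_zero, smul_zero]
    intro h
    apply he
    rw [← h]; simp

/-! ### From the lifted quadratic residue code to the self-dual code -/

/-- Coefficients, constant term first, of one of the lifted factors of `x^23 - 1` modulo 81. -/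
def L1 : List ℕ := [80, 12, 15, 4, 72, 58, 54, 65, 77, 10, 13, 1]

/-- Coefficients, constant term first, of the other lifted factor. -/
def L2 : List ℕ := [80, 68, 71, 4, 16, 27, 23, 9, 77, 66, 69, 1]

/-- Selects one of the two lifted factors. -/
def LL (r : Bool) : List ℕ := bif r then L2 else L1

/-- The value at `x` of the polynomial with coefficient list `L`. -/
def gp (L : List ℕ) {R : Type} [CommRing R] (x : R) : R :=
  ∑ i ∈ Finset.range 12, (L.getD i 0 : R) * x ^ i

set_option maxHeartbeats 1000000 in
lemma factor {R : Type} [CommRing R] (x : R) : (x - 1) * gp L1 x * gp L2 x = x ^ 23 - 1 +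
    81 * ((-79) * x ^ 0 + (-16) * x ^ 2 + (64) * x ^ 3 + (-73) * x ^ 4 + (-47) * x ^ 5 +
      (-44) * x ^ 6 + (13) * x ^ 7 + (-96) * x ^ 8 + (29) * x ^ 9 + (14) * x ^ 10 +
      (128) * x ^ 11 + (-49) * x ^ 12 + (-15) * x ^ 13 + (-24) * x ^ 14 + (23) * x ^ 15 +
      (-6) * x ^ 16 + (48) * x ^ 17 + (43) * x ^ 18 + (66) * x ^ 19 + (9) * x ^ 20 +
      (11) * x ^ 21 + (1) * x ^ 22) := by
  simp only [gp, Finset.sum_range_succ, Finset.sum_range_zero, L1, L2, List.getD_cons_zero,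
    List.getD_cons_succ]
  push_cast
  ring

lemma factor_LL {R : Type} [CommRing R] (h : (81 : R) = 0) (r : Bool) (x : R) :
    gp (LL r) x * ((x - 1) * gp (LL (!r)) x) = x ^ 23 - 1 := by
  have h1 := factor x
  rw [h, zero_mul, add_zero] at h1
  cases r
  · simp only [LL, Bool.not_false, cond_true, cond_false]
    rw [← h1]; ring
  · simp only [LL, Bool.not_true, cond_true, cond_false]
    rw [← h1]; ring

section poly
open scoped Polynomial

lemma coeff_gp {R : Type} [CommRing R] (L : List ℕ) (n : ℕ) :
    (gp L (Polynomial.X : R[X])).coeff n = if n < 12 then (L.getD n 0 : R) else 0 := by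
  rw [gp, Polynomial.finsetSum_coeff]
  simp only [Polynomial.coeff_natCast_mul, Polynomial.coeff_X_pow, mul_ite, mul_one, mul_zero]
  rw [Finset.sum_ite_eq]
  simp

lemma LL_top (r : Bool) : (LL r).getD 11 0 = 1 := by cases r <;> rfl

lemma gp_natDegree {R : Type} [CommRing R] [Nontrivial R] (r : Bool) :
    (gp (LL r) (Polynomial.X : R[X])).natDegree = 11 := by
  apply Polynomial.natDegree_eq_of_le_of_coeff_ne_zero
  · rw [Polynomial.natDegree_le_iff_coeff_eq_zero]
    intro n hn
    rw [coeff_gp, if_neg (by omega)]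
  · rw [coeff_gp, if_pos (by norm_num), LL_top]; simp

lemma gp_monic {R : Type} [CommRing R] [Nontrivial R] (r : Bool) :
    (gp (LL r) (Polynomial.X : R[X])).Monic := by
  rw [Polynomial.Monic, Polynomial.leadingCoeff, gp_natDegree, coeff_gp,
    if_pos (by norm_num), LL_top]
  simp

lemma gp_map {R S : Type} [CommRing R] [CommRing S] (f : R →+* S) (L : List ℕ) :
    (gp L (Polynomial.X : R[X])).map f = gp L (Polynomial.X : S[X]) := by
  simp [gp, Polynomial.map_sum]

/-- The irreducible factors of degree 11 modulo 3. -/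
lemma factor_three {g : (ZMod 3)[X]} (hg : IsQRFactor 3 g) : ∃ r, g = gp (LL r) Polynomial.X := by
  obtain ⟨hm, hd, hi, hdvd⟩ := hg
  have h81 : (81 : (ZMod 3)[X]) = 0 := by
    have : (81 : ZMod 3) = 0 := by decide +kernel
    rw [← map_ofNat Polynomial.C 81]
    simp [this]
  rw [← factor_LL h81 false] at hdvd
  have hfin : ∀ r, g ∣ gp (LL r) Polynomial.X → ∃ r, g = gp (LL r) Polynomial.X := fun r h =>
    ⟨r, (Polynomial.eq_of_monic_of_dvd_of_natDegree_le hm (gp_monic r) h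
      (by rw [gp_natDegree, hd])).symm⟩
  rcases hi.prime.dvd_or_dvd hdvd with h | h
  · exact hfin _ h
  · rcases hi.prime.dvd_or_dvd h with h | h
    · exfalso
      have h1 : (Polynomial.X - 1 : (ZMod 3)[X]) ≠ 0 := Polynomial.X_sub_C_ne_zero 1
      have h2 := Polynomial.natDegree_le_of_dvd h h1
      have h3 : (Polynomial.X - 1 : (ZMod 3)[X]).natDegree = 1 := Polynomial.natDegree_X_sub_C 1
      omega
    · exact hfin _ h

lemma nilp81 : ∀ x : ZMod 81, ZMod.castHom (by norm_num : 3 ∣ 81) (ZMod 3) x = 0 → x ^ 4 = 0 := by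
  decide +kernel

/-- Uniqueness of the Hensel lift. -/
lemma hensel {gm : (ZMod 81)[X]} (hm : gm.Monic) (hd : gm.natDegree = 11)
    (hdvd : gm ∣ Polynomial.X ^ 23 - 1) (r : Bool)
    (hmap : gm.map (ZMod.castHom (by norm_num : 3 ∣ 81) (ZMod 3)) = gp (LL r) Polynomial.X) :
    gm = gp (LL r) Polynomial.X := by
  have : Fact (1 < 81) := ⟨by norm_num⟩
  have h81 : (81 : (ZMod 81)[X]) = 0 := by
    rw [← map_ofNat Polynomial.C 81, h81_81, Polynomial.C_0]
  have h81' : (81 : (ZMod 3)[X]) = 0 := by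
    have : (81 : ZMod 3) = 0 := by decide +kernel
    rw [← map_ofNat Polynomial.C 81]
    simp [this]
  set φ := ZMod.castHom (by norm_num : 3 ∣ 81) (ZMod 3) with hφ
  -- the factors are coprime modulo 3 because `x^23 - 1` is separable there
  have hsep : (Polynomial.X ^ 23 - 1 : (ZMod 3)[X]).Separable := by
    rw [Polynomial.X_pow_sub_one_separable_iff]; decide +kernel
  rw [← factor_LL h81' r] at hsep
  obtain ⟨a, b, hab⟩ := hsep.isCoprime
  have hsurj : Function.Surjective φ := ZMod.castHom_surjective _
  obtain ⟨a', rfl⟩ := Polynomial.map_surjective φ hsurj a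
  obtain ⟨b', rfl⟩ := Polynomial.map_surjective φ hsurj b
  have hcop : IsCoprime gm ((Polynomial.X - 1) * gp (LL (!r)) Polynomial.X) := by
    set p := a' * gm + b' * ((Polynomial.X - 1) * gp (LL (!r)) Polynomial.X) - 1 with hp
    have hp0 : p.map φ = 0 := by
      rw [hp]
      simp only [Polynomial.map_sub, Polynomial.map_add, Polynomial.map_mul, gp_map, hmap,
        Polynomial.map_one, Polynomial.map_X]
      rw [hab, sub_self]
    have hnil : IsNilpotent p := by
      rw [Polynomial.isNilpotent_iff]
      intro i
      refine ⟨4, nilp81 _ ?_⟩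
      rw [← Polynomial.coeff_map, hp0, Polynomial.coeff_zero]
    have hu : IsUnit (a' * gm + b' * ((Polynomial.X - 1) * gp (LL (!r)) Polynomial.X)) := by
      have : a' * gm + b' * ((Polynomial.X - 1) * gp (LL (!r)) Polynomial.X) = p + 1 := by
        rw [hp]; ring
      rw [this]
      exact hnil.isUnit_add_one
    obtain ⟨v, hv⟩ := hu.exists_left_inv
    exact ⟨v * a', v * b', by linear_combination hv⟩
  rw [← factor_LL h81 r] at hdvd
  have := hcop.dvd_of_dvd_mul_right hdvd
  exact (Polynomial.eq_of_monic_of_dvd_of_natDegree_le hm (gp_monic r) this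
    (by rw [gp_natDegree, hd])).symm

/-- The cyclic code generated by a monic factor `gm` of degree 11 is spanned by the twelve
shifts of `gm`. -/
lemma cyclic_iff {gm : (ZMod 81)[X]} (hm : gm.Monic) (hd : gm.natDegree = 11)
    (hdvd : gm ∣ Polynomial.X ^ 23 - 1) (c : Fin 23 → ZMod 81) :
    (∃ f : (ZMod 81)[X], ∀ j : Fin 23, c j = ((f * gm) %ₘ (Polynomial.X ^ 23 - 1)).coeff (j : ℕ)) ↔
    ∃ r : Fin 12 → ZMod 81, ∀ j : Fin 23, c j = ∑ k : Fin 12, r k *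
      (if (k : ℕ) ≤ j then gm.coeff (j - k) else 0) := by
  have : Fact (1 < 81) := ⟨by norm_num⟩
  have hP : (Polynomial.X ^ 23 - 1 : (ZMod 81)[X]).Monic :=
    Polynomial.monic_X_pow_sub_C 1 (by norm_num)
  have hPd : (Polynomial.X ^ 23 - 1 : (ZMod 81)[X]).natDegree = 23 :=
    Polynomial.natDegree_X_pow_sub_C (r := (1 : ZMod 81))
  have hcoef : ∀ (q : Fin 12 → ZMod 81) (n : ℕ),
      ((∑ k : Fin 12, Polynomial.C (q k) * Polynomial.X ^ (k : ℕ)) * gm).coeff n =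
      ∑ k : Fin 12, q k * (if (k : ℕ) ≤ n then gm.coeff (n - k) else 0) := by
    intro q n
    rw [Finset.sum_mul, Polynomial.finsetSum_coeff]
    refine Finset.sum_congr rfl fun k _ => ?_
    rw [mul_assoc, Polynomial.coeff_C_mul, Polynomial.coeff_X_pow_mul']
  constructor
  · rintro ⟨f, hf⟩
    obtain ⟨h, hh⟩ := hdvd
    have hhm : h.Monic := hm.of_mul_monic_left (hh ▸ hP)
    have hhd : h.natDegree = 12 := by
      have := hm.natDegree_mul hhm
      rw [← hh, hPd, hd] at this
      omega
    set q := f %ₘ h with hq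
    have hqd : q.natDegree < 12 := by
      rw [← hhd]
      exact Polynomial.natDegree_modByMonic_lt f hhm (by intro h1; rw [h1] at hhd; simp at hhd)
    have hmod : (f * gm) %ₘ (Polynomial.X ^ 23 - 1) = q * gm := by
      refine (Polynomial.div_modByMonic_unique (f /ₘ h) (q * gm) hP ⟨?_, ?_⟩).2
      · rw [hh]
        conv_rhs => rw [← Polynomial.modByMonic_add_div f h]
        ring
      · rw [Polynomial.degree_eq_natDegree hP.ne_zero, hPd]
        refine lt_of_le_of_lt (Polynomial.degree_le_natDegree) ?_
        have := Polynomial.natDegree_mul_le (p := q) (q := gm)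
        exact_mod_cast (by omega : (q * gm).natDegree < 23)
    refine ⟨fun k => q.coeff k, fun j => ?_⟩
    rw [hf, hmod, ← hcoef]
    congr 2
    rw [Fin.sum_univ_eq_sum_range (fun k => Polynomial.C (q.coeff k) * Polynomial.X ^ k) 12]
    exact q.as_sum_range_C_mul_X_pow' hqd
  · rintro ⟨r, hr⟩
    refine ⟨∑ k : Fin 12, Polynomial.C (r k) * Polynomial.X ^ (k : ℕ), fun j => ?_⟩
    rw [(Polynomial.modByMonic_eq_self_iff hP).2, hcoef, hr]
    rw [Polynomial.degree_eq_natDegree hP.ne_zero, hPd]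
    refine lt_of_le_of_lt (Polynomial.degree_le_natDegree) ?_
    have h1 := Polynomial.natDegree_mul_le
      (p := ∑ k : Fin 12, Polynomial.C (r k) * Polynomial.X ^ (k : ℕ)) (q := gm)
    have h2 : (∑ k : Fin 12, Polynomial.C (r k) * Polynomial.X ^ (k : ℕ)).natDegree ≤ 11 := by
      apply Polynomial.natDegree_sum_le_of_forall_le
      intro k _
      exact (Polynomial.natDegree_C_mul_X_pow_le _ _).trans (by omega)
    exact_mod_cast (by omega :
      ((∑ k : Fin 12, Polynomial.C (r k) * Polynomial.X ^ (k : ℕ)) * gm).natDegree < 23)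

end poly

/-- The `k`-th shift of the polynomial with coefficient list `L`, extended by the parity
check. -/
def shf (L : List ℕ) (k : Fin 12) (j : Fin 24) : ℕ :=
  if j.val = 23 then 80 * L.sum else if k.val ≤ j.val then L.getD (j.val - k.val) 0 else 0

/-- The identity, or the reversal of the 23 cyclic coordinates. -/
def pos (r : Bool) (j : Fin 24) : Fin 24 :=
  bif r then (if j.val = 23 then j else ⟨22 - j.val, by omega⟩) else j

/-- The factor `13`, with `13² · 23 ≡ -1` modulo 81, rescales the parity coordinate so that the
code becomes self-dual. -/
def nu (j : Fin 24) : ℕ := if j.val = 23 then 13 else 1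

/-- The monomial map carrying the extended code of the factor `LL r` to the self-dual code. -/
def tr (r : Bool) (c : Fin 24 → ZMod 81) : Fin 24 → ZMod 81 := fun j => nu j * c (pos r j)

/-- Coefficients of the power series inverse of the polynomial with coefficients `L1`. -/
def invL : List ℕ := [80, 69, 3, 14, 12, 11, 77, 67, 68, 70, 3, 13]

/-- The change of basis from the shifts to the systematic generator matrix. -/
def TT (r : Bool) (i k : Fin 12) : ℕ :=
  bif r then (if i.val ≤ 11 - k.val then 80 * invL.getD (11 - k.val - i.val) 0 else 0)
  else (if i.val ≤ k.val then invL.getD (k.val - i.val) 0 else 0)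

lemma pos_pos : ∀ r j, pos r (pos r j) = j := by decide +kernel

lemma shf_orth : ∀ (r : Bool) (i k : Fin 12),
    (∑ j, mat i j * (nu j * shf (LL r) k (pos r j))) % 81 = 0 % 81 := by decide +kernel

lemma shf_gen : ∀ (r : Bool) (i : Fin 12) (j : Fin 24),
    (∑ k, TT r i k * (nu j * shf (LL r) k (pos r j))) % 81 = mat i j % 81 := by decide +kernel

lemma shf_sum : ∀ (r : Bool) (k : Fin 12),
    ∑ j : Fin 23, shf (LL r) k (Fin.castSucc j) = (LL r).sum := by decide +kernel

lemma nu_cancel (j : Fin 24) (x y : ZMod 81) (h : (nu j : ZMod 81) * x = nu j * y) : x = y := by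
  have e : ∀ j : Fin 24, (nu j : ZMod 81) = 1 ∨ (25 * nu j : ZMod 81) = 1 := by decide +kernel
  rcases e j with h1 | h1
  · rwa [h1, one_mul, one_mul] at h
  · rw [← one_mul x, ← one_mul y, ← h1, mul_assoc, mul_assoc, h]

lemma tr_iff (r : Bool) (c : Fin 24 → ZMod 81) : InC (tr r c) ↔
    ∃ u : Fin 12 → ZMod 81, ∀ j, c j = ∑ k, u k * (shf (LL r) k j : ZMod 81) := by
  constructor
  · intro h
    have h1 := eq_comb h81_81 h
    set v : Fin 12 → ZMod 81 := fun i => tr r c (fst12 i) with hv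
    refine ⟨fun k => ∑ i, v i * TT r i k, fun j => ?_⟩
    have h2 := congrFun h1 (pos r j)
    rw [tr, comb, pos_pos] at h2
    apply nu_cancel (pos r j)
    rw [h2, Finset.mul_sum]
    simp only [Finset.sum_mul, Finset.mul_sum]
    rw [Finset.sum_comm]
    refine Finset.sum_congr rfl fun i _ => ?_
    have h3 := cast_congr (R := ZMod 81) (n := 81) (by exact_mod_cast h81_81)
      (shf_gen r i (pos r j))
    rw [pos_pos] at h3
    rw [← h3]
    push_cast
    rw [Finset.mul_sum]
    exact Finset.sum_congr rfl fun k _ => by ring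
  · rintro ⟨u, hu⟩
    have h1 : tr r c = fun j => ∑ k, u k * ((nu j * shf (LL r) k (pos r j) : ℕ) : ZMod 81) := by
      funext j
      rw [tr, hu, Finset.mul_sum]
      refine Finset.sum_congr rfl fun k _ => ?_
      push_cast; ring
    rw [h1]
    refine inC_sum _ fun k _ => inC_smul (u k) ?_
    intro i
    have h3 := cast_congr (R := ZMod 81) (n := 81) (by exact_mod_cast h81_81) (shf_orth r i k)
    rw [Nat.cast_sum, Nat.cast_zero] at h3
    rw [← h3]
    exact Finset.sum_congr rfl fun j _ => by rw [Nat.cast_mul]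

/-- The lifted code is monomially equivalent to the self-dual code. -/
lemma code_iff {g : Polynomial (ZMod 3)} (hg : IsQRFactor 3 g)
    {g4 : Polynomial (ZMod 81)} {C4 : Submodule (ZMod 81) (Fin 24 → ZMod 81)}
    (hC4 : IsLiftedQR (by norm_num : (3 : ℕ) ∣ 81) g g4 C4) :
    ∃ r, ∀ c, c ∈ C4 ↔ InC (tr r c) := by
  obtain ⟨hm, hd, hdvd, hmap, hmem⟩ := hC4
  obtain ⟨r, rfl⟩ := factor_three hg
  have hgm := hensel hm hd hdvd r hmap
  refine ⟨r, fun c => ?_⟩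
  rw [hmem, cyclic_iff hm hd hdvd (fun j => c (Fin.castSucc j)), tr_iff]
  have hc : ∀ (k : Fin 12) (j : Fin 23), (if (k : ℕ) ≤ j then g4.coeff (j - k) else 0) =
      (shf (LL r) k (Fin.castSucc j) : ZMod 81) := by
    intro k j
    have hj : ¬ (Fin.castSucc j).val = 23 := by simp; omega
    have hlen : ∀ n, 12 ≤ n → (LL r).getD n 0 = 0 := by
      intro n hn
      apply List.getD_eq_default
      cases r <;> exact hn
    rw [shf, if_neg hj, hgm, coeff_gp, Fin.val_castSucc]
    split_ifs with h1 h2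
    · rfl
    · rw [hlen _ (by omega)]; simp
    · simp
  have hl : ∀ u : Fin 12 → ZMod 81,
      ∑ k, u k * (shf (LL r) k (Fin.last 23) : ZMod 81) =
      - ∑ j : Fin 23, ∑ k, u k * (shf (LL r) k (Fin.castSucc j) : ZMod 81) := by
    intro u
    rw [Finset.sum_comm, ← Finset.sum_neg_distrib]
    refine Finset.sum_congr rfl fun k _ => ?_
    rw [← Finset.mul_sum, ← Nat.cast_sum, shf_sum, shf, if_pos (by rfl)]
    have : ((80 : ℕ) : ZMod 81) = -1 := by decide +kernel
    rw [Nat.cast_mul, this]; ring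
  simp only [hc]
  constructor
  · rintro ⟨⟨u, hu⟩, h⟩
    refine ⟨u, fun j => Fin.lastCases ?_ hu j⟩
    rw [h, hl]
    simp only [hu]
  · rintro ⟨u, hu⟩
    refine ⟨⟨u, fun j => hu _⟩, ?_⟩
    rw [hu, hl]
    simp only [hu]

lemma val_nu (j : Fin 24) (x : ZMod 81) : val ℚ (nu j * x) = val ℚ x := by
  unfold nu
  split_ifs
  · have e : ∀ x : ZMod 81, isU (red (13 * x)) = isU (red x) ∧ (red (13 * x) = 0 ↔ red x = 0) ∧
      (red x = 0 → isU (qd (13 * x)) = isU (qd x) ∧ (qd (13 * x) = 0 ↔ qd x = 0)) := by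
      decide +kernel
    obtain ⟨e1, e2, e3⟩ := e x
    unfold val
    push_cast
    rw [e1]
    by_cases h : red x = 0
    · obtain ⟨e4, e5⟩ := e3 h
      simp only [e2, e4, e5, ne_eq]
    · simp only [e2, ne_eq, h, not_false_iff, if_true]
  · simp

lemma padic_iff {n : ℕ} (hn : n ≠ 0) (i : ℕ) :
    padicValNat 3 n = i ↔ 3 ^ i ∣ n ∧ ¬ 3 ^ (i + 1) ∣ n := by
  have : Fact (Nat.Prime 3) := ⟨Nat.prime_three⟩
  rw [padicValNat_dvd_iff_le hn, padicValNat_dvd_iff_le hn]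
  omega

/-- The substitution applied to the variable of a single coordinate. -/
lemma val_prod (x : ZMod 81) : val ℚ x =
    (∏ i : Fin 4, (![X 0, X 1, X 4 - X 3, X 4 + 2 * X 3 - 3 * X 2, X 4 + 2 * X 3 + 6 * X 2] :
      Fin 5 → MvPolynomial (Fin 5) ℚ) (Fin.castSucc i) ^
        (if x ≠ 0 ∧ padicValNat 3 x.val = (i : ℕ) then 1 else 0)) *
    (X 4 + 2 * X 3 + 6 * X 2) ^ (if x = 0 then 1 else 0) := by
  have hx : ∀ i, (x ≠ 0 ∧ padicValNat 3 x.val = i) ↔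
      (x ≠ 0 ∧ 3 ^ i ∣ x.val ∧ ¬ 3 ^ (i + 1) ∣ x.val) := by
    intro i
    refine and_congr_right fun h => padic_iff ?_ i
    rwa [Ne, ZMod.val_eq_zero]
  simp only [hx]
  have e : ∀ x : ZMod 81,
      (isU (red x) = true ∧ x ≠ 0 ∧
        (∀ i : Fin 4, (3 ^ (i : ℕ) ∣ x.val ∧ ¬ 3 ^ ((i : ℕ) + 1) ∣ x.val) ↔ i = 0)) ∨
      (isU (red x) = false ∧ red x ≠ 0 ∧ x ≠ 0 ∧
        (∀ i : Fin 4, (3 ^ (i : ℕ) ∣ x.val ∧ ¬ 3 ^ ((i : ℕ) + 1) ∣ x.val) ↔ i = 1)) ∨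
      (isU (red x) = false ∧ red x = 0 ∧ isU (qd x) = true ∧ x ≠ 0 ∧
        (∀ i : Fin 4, (3 ^ (i : ℕ) ∣ x.val ∧ ¬ 3 ^ ((i : ℕ) + 1) ∣ x.val) ↔ i = 2)) ∨
      (isU (red x) = false ∧ red x = 0 ∧ isU (qd x) = false ∧ qd x ≠ 0 ∧ x ≠ 0 ∧
        (∀ i : Fin 4, (3 ^ (i : ℕ) ∣ x.val ∧ ¬ 3 ^ ((i : ℕ) + 1) ∣ x.val) ↔ i = 3)) ∨
      (isU (red x) = false ∧ red x = 0 ∧ isU (qd x) = false ∧ qd x = 0 ∧ x = 0) := by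
    decide +kernel
  have e0 : isU 0 = false := by decide +kernel
  rcases e x with ⟨h1, h2, h3⟩ | ⟨h1, h2, h3, h4⟩ | ⟨h1, h2, h3, h4, h5⟩ |
    ⟨h1, h2, h3, h4, h5, h6⟩ | ⟨h1, h2, h3, h4, h5⟩
  · simp only [val, h1, h3]; simp [h2]
  · simp only [val, h1, h4]; simp [h2, h3]
  · simp only [val, h2, h3, h5]; simp [e0, h4]
  · simp only [val, h2, h3, h6]; simp [e0, h4, h5]
  · simp only [val, h2, h4]; simp [e0, h5]

lemma aeval_swe (C4 : Submodule (ZMod 81) (Fin 24 → ZMod 81)) :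
    aeval (![X 0, X 1, X 4 - X 3, X 4 + 2 * X 3 - 3 * X 2, X 4 + 2 * X 3 + 6 * X 2] :
      Fin 5 → MvPolynomial (Fin 5) ℚ) (swe 3 4 C4) =
    ∑ c, if c ∈ C4 then ∏ j, val ℚ (c j) else 0 := by
  rw [swe, map_sum]
  refine Finset.sum_congr rfl fun c _ => ?_
  split_ifs
  · rw [map_mul, map_prod]
    simp only [map_pow, aeval_X]
    rw [Finset.prod_congr rfl fun j _ => val_prod (c j), Finset.prod_mul_distrib,
      Finset.prod_comm]
    refine congrArg₂ (· * ·) (Finset.prod_congr rfl fun i _ => ?_) ?_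
    · rw [Finset.prod_pow_eq_pow_sum, Finset.card_filter]
    · rw [Finset.prod_pow_eq_pow_sum, Finset.card_filter]
      rfl
  · simp

/-- The substituted weight enumerator depends only on the self-dual code. -/
lemma swe_eq {g : Polynomial (ZMod 3)} (hg : IsQRFactor 3 g)
    {g4 : Polynomial (ZMod 81)} {C4 : Submodule (ZMod 81) (Fin 24 → ZMod 81)}
    (hC4 : IsLiftedQR (by norm_num : (3 : ℕ) ∣ 81) g g4 C4) :
    aeval (![X 0, X 1, X 4 - X 3, X 4 + 2 * X 3 - 3 * X 2, X 4 + 2 * X 3 + 6 * X 2] :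
      Fin 5 → MvPolynomial (Fin 5) ℚ) (swe 3 4 C4) =
    ∑ c, if InC c then ∏ j, val ℚ (c j) else 0 := by
  obtain ⟨r, hr⟩ := code_iff hg hC4
  rw [aeval_swe]
  simp only [hr]
  have hbij : Function.Bijective (tr r) := by
    rw [Fintype.bijective_iff_injective_and_card]
    refine ⟨fun c c' h => ?_, rfl⟩
    funext j
    have := congrFun h (pos r j)
    rw [tr, tr, pos_pos] at this
    exact nu_cancel _ _ _ this
  refine Eq.trans ?_ (Function.Bijective.sum_comp hbij
    (fun c => if InC c then ∏ j, val ℚ (c j) else 0))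
  refine Finset.sum_congr rfl fun c _ => ?_
  have : ∏ j, val ℚ (tr r c j) = ∏ j, val ℚ (c j) := by
    simp only [tr, val_nu]
    exact Equiv.prod_comp (Function.Involutive.toPerm (pos r) (pos_pos r)) (fun j => val ℚ (c j))
  simp only [this]

end QR24

/-- The partial weight enumerator `D_{2,2}` for the ternary lifted QR codes of length 24. -/
theorem stmt_16 (g : Polynomial (ZMod 3)) (hg : IsQRFactor 3 g)
    (g4 : Polynomial (ZMod 81)) (C4 : Submodule (ZMod 81) (Fin 24 → ZMod 81))
    (hC4 : IsLiftedQR (by norm_num : (3:ℕ) ∣ 81) g g4 C4) :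
    divPart (((3:ℚ) ^ 24)⁻¹ •
        aeval (![X 0, X 1, X 4 - X 3, X 4 + 2 * X 3 - 3 * X 2, X 4 + 2 * X 3 + 6 * X 2] : Fin 5 → MvPolynomial (Fin 5) ℚ) (swe 3 4 C4))
      0 2 =
      -(473616 * X 0 ^ 9 * X 1 ^ 3 * X 2 ^ 9 * X 3 ^ 3) := by
  rw [QR24.swe_eq hg hC4]
  exact QR24.divPart_eval
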